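/- arXiv:2203.09146 — 2 statements merged into one kernel-verified Lean document; each statement's English description precedes it below -/
import Mathlib

section
/- Let d ≥ 1 and 1 ≤ r ≤ d, let ω ∈ ℝ^r satisfy the Diophantine condition of type (ν,τ), and let g: ℝ^r × ℝ^{d−r} → ℝ^r and h: ℝ^r × ℝ^{d−r} → ℝ^{d−r} be C^∞ and ℤ^r × ℤ^{d−r}-periodic. Assume there exists y₀ ∈ ℝ^{d−r} such that ∫_{[0,1]^r} h(σ, y₀) dσ = 0 and the (d−r)×(d−r) matrix ∫_{[0,1]^r} D_y h(σ, y₀) dσ is invertible. For ε > 0 define F_ε(x,y) = (x + ω + ε·g(x,y), y + ε·h(x,y)). Then there exist a sequence of C^∞ maps l_j: ℝ^r → ℝ^r × ℝ^{d−r} (j ≥ 0), with l_0(σ) = (σ, y₀) and l_j ℤ^r-periodic for j ≥ 1, and a sequence of constant vectors u_j ∈ ℝ^r (j ≥ 1), such that for every N ∈ ℕ there is a constant C_N with: for all ε ∈ (0,1] and all σ ∈ ℝ^r, |F_ε(l^{≤N}(σ)) − l^{≤N}(σ + ω + Σ_{j=1}^{N} ε^j u_j)| ≤ C_N·ε^{N+1},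 where l^{≤N}(σ) = Σ_{j=0}^{N} ε^j l_j(σ). (Lindstedt series for the resonant invariant surface of a generic torus map; in contrast with foliation preserving maps, the internal frequency ω + Σ ε^j u_j depends on the perturbation.) -/
open scoped BigOperators
open MeasureTheory

/-!
Write the map as `F_ε(p) = p + (ω, 0) + ε K(p)` with `K = (g, h)`.  The coefficients are found
order by order.  The induction hypothesis `IsLindstedt` says that the error of the truncation at
order `N` is `ε^{N+1} R(ε, σ)` with `R` jointly smooth, so that no Taylor coefficient has to be
written down: the equation of order `N + 1` is

  `l_{N+1}(σ + ω) - l_{N+1}(σ) = R(0, σ) - (u_{N+1}, 0)`.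

Over a Diophantine rotation it has a smooth periodic solution as soon as the right-hand side has
zero mean (`cohomological_vector`, by Fourier series: the coefficients of a smooth function decay
faster than any power of `|k|`, while the divisors `exp (2πi k·ω) - 1` are bounded below by a
negative power).  The mean of the first component is absorbed by `u_{N+1}`.  The
mean of the second one vanishes by the induction hypothesis; to propagate this, observe that adding
a constant `(0, c)` to `l_{N+1}` does not affect the equation of order `N + 1` but adds
`∫ D_y h(σ, y₀) c dσ` to the mean entering the next order, and the averaged matrix is
invertible (`IsLindstedt.step`).

Factoring powers of `ε` out of smooth functions relies on Hadamard's lemma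
(`exists_smooth_quotient`, `exists_smooth_div`).  The uniform bound follows because
`R` is continuous and periodic in `σ`.
-/

/-! ### Parametric integrals and Hadamard's lemma -/

theorem hasFDerivAt_setIntegral_param {E A F : Type} [NormedAddCommGroup E] [NormedSpace ℝ E]
    [FiniteDimensional ℝ E] [NormedAddCommGroup A] [NormedSpace ℝ A] [FiniteDimensional ℝ A]
    [MeasureSpace A] [BorelSpace A] [IsLocallyFiniteMeasure (volume : Measure A)]
    [NormedAddCommGroup F] [NormedSpace ℝ F]
    {f : E × A → F} (hf : ContDiff ℝ 1 f) {K : Set A} (hK : IsCompact K) (x₀ : E) :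
    HasFDerivAt (fun x => ∫ a in K, f (x, a))
      (∫ a in K, (fderiv ℝ f (x₀, a)).comp (ContinuousLinearMap.inl ℝ E A)) x₀ := by
  have hf' : Continuous (fderiv ℝ f) := hf.continuous_fderiv (by norm_num)
  have hfc : Continuous f := hf.continuous
  have hG : Continuous fun p : E × A =>
      (fderiv ℝ f (p.1, p.2)).comp (ContinuousLinearMap.inl ℝ E A) := by fun_prop
  obtain ⟨U, hU, hUn⟩ := exists_compact_mem_nhds x₀
  obtain ⟨M, hM⟩ := (hU.prod hK).bddAbove_image hG.norm.continuousOn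
  have : IsFiniteMeasure (volume.restrict K) := ⟨by simpa using hK.measure_lt_top⟩
  refine hasFDerivAt_integral_of_dominated_of_fderiv_le (bound := fun _ => M)
    (F := fun x a => f (x, a))
    (F' := fun x a => (fderiv ℝ f (x, a)).comp (ContinuousLinearMap.inl ℝ E A)) hUn
    ?_ ?_ ?_ ?_ ?_ ?_
  · exact Filter.Eventually.of_forall fun x =>
      Continuous.aestronglyMeasurable (by fun_prop)
  · exact ContinuousOn.integrableOn_compact hK (by fun_prop)
  · exact Continuous.aestronglyMeasurable (by fun_prop)
  · refine (ae_restrict_iff' hK.measurableSet).2 (Filter.Eventually.of_forall fun a ha x hx => ?_)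
    exact hM ⟨(x, a), ⟨hx, ha⟩, rfl⟩
  · exact integrable_const M
  · refine Filter.Eventually.of_forall fun a x hx => ?_
    have h1 : HasFDerivAt f (fderiv ℝ f (x, a)) (x, a) :=
      ((hf.differentiable (by norm_num)) (x, a)).hasFDerivAt
    exact h1.comp x (hasFDerivAt_prodMk_left x a)

/-- The target space varies in the induction because the derivative of the integral is the
integral of an operator-valued function. -/
theorem contDiff_setIntegral_param_nat {E A : Type} [NormedAddCommGroup E] [NormedSpace ℝ E]
    [FiniteDimensional ℝ E] [NormedAddCommGroup A] [NormedSpace ℝ A] [FiniteDimensional ℝ A]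
    [MeasureSpace A] [BorelSpace A] [IsLocallyFiniteMeasure (volume : Measure A)]
    {K : Set A} (hK : IsCompact K) (n : ℕ) :
    ∀ {F : Type} [NormedAddCommGroup F] [NormedSpace ℝ F] {f : E × A → F},
      ContDiff ℝ (⊤ : ℕ∞) f → ContDiff ℝ n (fun x => ∫ a in K, f (x, a)) := by
  induction n with
  | zero =>
    intro F _ _ f hf
    have hfc := hf.continuous
    rw [Nat.cast_zero, contDiff_zero]
    exact continuous_parametric_integral_of_continuous
      (f := fun x a => f (x, a)) (by simpa [Function.uncurry_def] using hfc) hK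
  | succ n ih =>
    intro F _ _ f hf
    rw [Nat.cast_succ, contDiff_succ_iff_hasFDerivAt]
    refine ⟨_, ?_, fun x => hasFDerivAt_setIntegral_param (hf.of_le (by exact_mod_cast le_top)) hK x⟩
    refine ih (f := fun p : E × A =>
      (fderiv ℝ f (p.1, p.2)).comp (ContinuousLinearMap.inl ℝ E A)) ?_
    have : ContDiff ℝ (⊤ : ℕ∞) (fderiv ℝ f) := hf.fderiv_right (by simp)
    exact this.clm_comp contDiff_const

theorem contDiff_setIntegral_param {E A F : Type} [NormedAddCommGroup E] [NormedSpace ℝ E]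
    [FiniteDimensional ℝ E] [NormedAddCommGroup A] [NormedSpace ℝ A] [FiniteDimensional ℝ A]
    [MeasureSpace A] [BorelSpace A] [IsLocallyFiniteMeasure (volume : Measure A)]
    [NormedAddCommGroup F] [NormedSpace ℝ F]
    {f : E × A → F} (hf : ContDiff ℝ (⊤ : ℕ∞) f) {K : Set A} (hK : IsCompact K) :
    ContDiff ℝ (⊤ : ℕ∞) (fun x => ∫ a in K, f (x, a)) :=
  contDiff_infty.2 fun n => contDiff_setIntegral_param_nat hK n hf

/-- Hadamard's lemma: `(f(p + tv) - f(p)) / t` extends smoothly to `t = 0`. -/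
theorem exists_smooth_quotient {E F : Type} [NormedAddCommGroup E] [NormedSpace ℝ E]
    [FiniteDimensional ℝ E] [NormedAddCommGroup F] [NormedSpace ℝ F] [CompleteSpace F]
    {f : E → F} (hf : ContDiff ℝ (⊤ : ℕ∞) f) :
    ∃ Q : E × ℝ × E → F, ContDiff ℝ (⊤ : ℕ∞) Q ∧
      (∀ p t v, f (p + t • v) = f p + t • Q (p, t, v)) ∧
      ∀ p v, Q (p, 0, v) = fderiv ℝ f p v := by
  have hf' : ContDiff ℝ (⊤ : ℕ∞) (fderiv ℝ f) := hf.fderiv_right (by simp)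
  refine ⟨fun q => ∫ s in Set.Icc (0 : ℝ) 1, fderiv ℝ f (q.1 + (s * q.2.1) • q.2.2) q.2.2,
    ?_, ?_, ?_⟩
  · refine contDiff_setIntegral_param
      (f := fun z : (E × ℝ × E) × ℝ => fderiv ℝ f (z.1.1 + (z.2 * z.1.2.1) • z.1.2.2) z.1.2.2)
      ?_ isCompact_Icc
    exact (hf'.comp (by fun_prop)).clm_apply (by fun_prop)
  · intro p t v
    have hd : ∀ s ∈ Set.uIcc (0 : ℝ) 1, HasDerivAt (fun s : ℝ => f (p + (s * t) • v))
        (t • fderiv ℝ f (p + (s * t) • v) v) s := by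
      intro s _
      have h1 : HasDerivAt (fun s : ℝ => p + (s * t) • v) (t • v) s := by
        have := (((hasDerivAt_id s).mul_const t).smul_const v).const_add p
        simpa using this
      have h2 := ((hf.differentiable (by simp)) (p + (s * t) • v)).hasFDerivAt.comp_hasDerivAt s h1
      simpa [Function.comp_def] using h2
    have hint := intervalIntegral.integral_eq_sub_of_hasDerivAt hd
      (Continuous.intervalIntegrable (by have := hf'.continuous; fun_prop) _ _)
    rw [intervalIntegral.integral_smul, intervalIntegral.integral_of_le zero_le_one,
      ← integral_Icc_eq_integral_Ioc] at hint
    simp only [zero_mul, one_mul, zero_smul, add_zero] at hint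
    rw [hint]; abel
  · intro p v
    simp

/-- A smooth function vanishing on `t = 0` is `t` times a smooth function. -/
theorem exists_smooth_div {E F : Type} [NormedAddCommGroup E] [NormedSpace ℝ E]
    [FiniteDimensional ℝ E] [NormedAddCommGroup F] [NormedSpace ℝ F] [CompleteSpace F]
    {f : ℝ × E → F} (hf : ContDiff ℝ (⊤ : ℕ∞) f) (h0 : ∀ x, f (0, x) = 0) :
    ∃ q : ℝ × E → F, ContDiff ℝ (⊤ : ℕ∞) q ∧ ∀ t x, f (t, x) = t • q (t, x) := by
  obtain ⟨Q, hQ, h1, -⟩ := exists_smooth_quotient hf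
  refine ⟨fun p => Q ((0, p.2), p.1, (1, 0)), hQ.comp (by fun_prop), fun t x => ?_⟩
  have := h1 (0, x) t (1, 0)
  simpa [h0] using this

/-! ### Periodic functions on `ℝ^r` -/

/-- `ℤ^r`-periodicity of a function on `ℝ^r`. -/
def ZPeriodic {r : ℕ} {F : Type} (f : (Fin r → ℝ) → F) : Prop :=
  ∀ (σ : Fin r → ℝ) (k : Fin r → ℤ), f (σ + fun i => (k i : ℝ)) = f σ

theorem ZPeriodic.fderiv {r : ℕ} {F : Type} [NormedAddCommGroup F] [NormedSpace ℝ F]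
    {f : (Fin r → ℝ) → F} (hf : ZPeriodic f) : ZPeriodic (fderiv ℝ f) := by
  intro σ k
  rw [← fderiv_comp_add_right]
  congr 1
  funext x
  exact hf x k

theorem ZPeriodic.eq_of_coe_eq {r : ℕ} {F : Type} {f : (Fin r → ℝ) → F} (hf : ZPeriodic f)
    {x y : Fin r → ℝ} (hxy : ∀ i, (x i : UnitAddCircle) = (y i : UnitAddCircle)) :
    f x = f y := by
  have h1 : ∀ i, ∃ n : ℤ, x i = y i + n := by
    intro i
    obtain ⟨n, hn⟩ := (QuotientAddGroup.eq_iff_sub_mem.1 (hxy i))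
    refine ⟨n, ?_⟩
    simp at hn
    linarith
  choose n hn using h1
  rw [← hf y n]
  congr 1
  funext i
  exact hn i

/-- A continuous periodic function descends to a continuous function on the torus. -/
theorem ZPeriodic.exists_torus {r : ℕ} {F : Type} [TopologicalSpace F] {f : (Fin r → ℝ) → F}
    (hf : ZPeriodic f) (hc : Continuous f) :
    ∃ g : C(UnitAddTorus (Fin r), F), ∀ x : Fin r → ℝ, g (fun i => (x i : UnitAddCircle)) = f x := by
  have hq : IsOpenQuotientMap
      (Pi.map (fun _ : Fin r => ((↑) : ℝ → UnitAddCircle))) :=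
    IsOpenQuotientMap.piMap fun _ => QuotientAddGroup.isOpenQuotientMap_mk
  have hsec : ∀ x : Fin r → ℝ,
      f (Function.surjInv hq.surjective (fun i => (x i : UnitAddCircle))) = f x := fun x =>
    hf.eq_of_coe_eq fun i =>
      congrFun (Function.surjInv_eq hq.surjective (fun i => (x i : UnitAddCircle))) i
  refine ⟨⟨fun z => f (Function.surjInv hq.surjective z), ?_⟩, hsec⟩
  rw [hq.isQuotientMap.continuous_iff]
  exact hc.congr fun x => (hsec x).symm

theorem box_ae_eq {r : ℕ} (a : Fin r → ℝ) :
    ({x : Fin r → ℝ | ∀ i, x i ∈ Set.Ioc (a i) (a i + 1)} : Set (Fin r → ℝ)) =ᵐ[volume]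
      Set.Icc a (a + 1) := by
  have h := Measure.univ_pi_Ioc_ae_eq_Icc (μ := fun _ : Fin r => (volume : Measure ℝ))
    (f := a) (g := a + 1)
  have e : ({x : Fin r → ℝ | ∀ i, x i ∈ Set.Ioc (a i) (a i + 1)} : Set (Fin r → ℝ)) =
      Set.univ.pi fun i => Set.Ioc (a i) ((a + 1) i) := by
    ext x; simp
  rw [e]
  exact h

/-- Integrals of periodic functions over the unit cube are translation invariant. -/
theorem ZPeriodic.integral_translate {r : ℕ} {F : Type} [NormedAddCommGroup F] [NormedSpace ℝ F]
    {f : (Fin r → ℝ) → F} (hf : ZPeriodic f) (hc : Continuous f) (v : Fin r → ℝ) :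
    ∫ x in Set.Icc (0 : Fin r → ℝ) 1, f (x + v) = ∫ x in Set.Icc (0 : Fin r → ℝ) 1, f x := by
  obtain ⟨g, hg⟩ := hf.exists_torus hc
  have h1 := (UnitAddTorus.integral_preimage (d := Fin r) g 0).symm.trans
    (UnitAddTorus.integral_preimage (d := Fin r) g v)
  simp only [hg] at h1
  rw [setIntegral_congr_set (box_ae_eq _), setIntegral_congr_set (box_ae_eq _), zero_add] at h1
  rw [h1]
  have h2 := (measurePreserving_add_right (volume : Measure (Fin r → ℝ)) v).setIntegral_preimage_emb
    (measurableEmbedding_addRight v) f (Set.Icc v (v + 1))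
  rw [← h2]
  simp [add_comm]

/-- The integral of a directional derivative of a periodic function vanishes. -/
theorem ZPeriodic.integral_fderiv {r : ℕ} {F : Type} [NormedAddCommGroup F] [NormedSpace ℝ F]
    [CompleteSpace F]
    {f : (Fin r → ℝ) → F} (hf : ZPeriodic f) (hc : ContDiff ℝ 1 f) (v : Fin r → ℝ) :
    ∫ x in Set.Icc (0 : Fin r → ℝ) 1, _root_.fderiv ℝ f x v = 0 := by
  have hG : ContDiff ℝ 1 (fun p : (Fin r → ℝ) × (Fin r → ℝ) => f (p.2 + p.1)) :=
    hc.comp (by fun_prop)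
  have h1 := hasFDerivAt_setIntegral_param hG (isCompact_Icc (a := (0 : Fin r → ℝ)) (b := 1)) 0
  simp only [hf.integral_translate hc.continuous] at h1
  have h2 := h1.unique (hasFDerivAt_const _ _)
  have hcf : Continuous (_root_.fderiv ℝ f) := hc.continuous_fderiv (by norm_num)
  have h3 : ∀ a : Fin r → ℝ, (_root_.fderiv ℝ (fun p : (Fin r → ℝ) × (Fin r → ℝ) => f (p.2 + p.1))
      (0, a)).comp (ContinuousLinearMap.inl ℝ _ _) = _root_.fderiv ℝ f a := by
    intro a
    have h4 : HasFDerivAt f (_root_.fderiv ℝ f a) (a + 0) := by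
      simpa using (hc.differentiable (by norm_num) a).hasFDerivAt
    have h5 : HasFDerivAt (fun p : (Fin r → ℝ) × (Fin r → ℝ) => p.2 + p.1)
        (ContinuousLinearMap.snd ℝ _ _ + ContinuousLinearMap.fst ℝ _ _)
        ((0 : Fin r → ℝ), a) := by
      exact hasFDerivAt_snd.add hasFDerivAt_fst
    have h6 : HasFDerivAt (fun p : (Fin r → ℝ) × (Fin r → ℝ) => f (p.2 + p.1)) _
        ((0 : Fin r → ℝ), a) :=
      HasFDerivAt.comp (f := fun p : (Fin r → ℝ) × (Fin r → ℝ) => p.2 + p.1)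
        ((0 : Fin r → ℝ), a) h4 h5
    rw [h6.fderiv]
    ext w; simp
  simp only [h3] at h2
  rw [← ContinuousLinearMap.integral_apply, h2]
  · rfl
  · exact hcf.continuousOn.integrableOn_compact isCompact_Icc

/-! ### Fourier coefficients -/

/-- The character `x ↦ exp (2πi k·x)` of the torus, as a function on `ℝ^r`. -/
noncomputable def torusChar {r : ℕ} (k : Fin r → ℤ) (x : Fin r → ℝ) : ℂ :=
  Complex.exp (2 * Real.pi * Complex.I * ((∑ i, (k i : ℝ) * x i : ℝ) : ℂ))

theorem torusChar_eq_mFourier {r : ℕ} (k : Fin r → ℤ) (x : Fin r → ℝ) :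
    UnitAddTorus.mFourier k (fun i => (x i : UnitAddCircle)) = torusChar k x := by
  simp only [UnitAddTorus.mFourier, ContinuousMap.coe_mk, torusChar, fourier_coe_apply,
    ← Complex.exp_sum]
  congr 1
  push_cast
  rw [Finset.mul_sum]
  refine Finset.sum_congr rfl fun i _ => ?_
  ring

theorem torusChar_norm {r : ℕ} (k : Fin r → ℤ) (x : Fin r → ℝ) : ‖torusChar k x‖ = 1 := by
  rw [torusChar, show (2 * Real.pi * Complex.I * ((∑ i, (k i : ℝ) * x i : ℝ) : ℂ)) =
    ((2 * Real.pi * (∑ i, (k i : ℝ) * x i) : ℝ) : ℂ) * Complex.I by push_cast; ring]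
  exact Complex.norm_exp_ofReal_mul_I _

theorem torusChar_add {r : ℕ} (k : Fin r → ℤ) (x y : Fin r → ℝ) :
    torusChar k (x + y) = torusChar k x * torusChar k y := by
  rw [torusChar, torusChar, torusChar, ← Complex.exp_add]
  congr 1
  simp only [Pi.add_apply, mul_add, Finset.sum_add_distrib]
  push_cast
  ring

theorem torusChar_periodic {r : ℕ} (k : Fin r → ℤ) : ZPeriodic (torusChar k) := by
  intro σ m
  rw [← torusChar_eq_mFourier, ← torusChar_eq_mFourier]
  congr 1
  funext i
  simp

/-- The linear form `x ↦ k·x`. -/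
noncomputable def torusForm {r : ℕ} (k : Fin r → ℤ) : (Fin r → ℝ) →L[ℝ] ℝ :=
  ∑ i, (k i : ℝ) • ContinuousLinearMap.proj (R := ℝ) (φ := fun _ : Fin r => ℝ) i

theorem torusForm_apply {r : ℕ} (k : Fin r → ℤ) (x : Fin r → ℝ) :
    torusForm k x = ∑ i, (k i : ℝ) * x i := by
  simp [torusForm]

theorem torusForm_norm {r : ℕ} (k : Fin r → ℤ) : ‖torusForm k‖ ≤ ∑ i, |(k i : ℝ)| := by
  refine ContinuousLinearMap.opNorm_le_bound _ (by positivity) fun x => ?_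
  rw [torusForm_apply, Finset.sum_mul]
  refine (norm_sum_le _ _).trans (Finset.sum_le_sum fun i _ => ?_)
  rw [norm_mul, Real.norm_eq_abs]
  gcongr
  exact norm_le_pi_norm x i

theorem torusChar_eq_comp {r : ℕ} (k : Fin r → ℤ) :
    torusChar k = (fun t : ℝ => Complex.exp (2 * Real.pi * Complex.I * (t : ℂ))) ∘ torusForm k := by
  funext x
  simp [torusChar, torusForm_apply]

theorem contDiff_expchar :
    ContDiff ℝ (⊤ : ℕ∞) (fun t : ℝ => Complex.exp (2 * Real.pi * Complex.I * (t : ℂ))) := by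
  have : ContDiff ℝ (⊤ : ℕ∞) (fun t : ℝ => (t : ℂ)) := Complex.ofRealCLM.contDiff
  exact (contDiff_const.mul this).cexp

theorem torusChar_contDiff {r : ℕ} (k : Fin r → ℤ) : ContDiff ℝ (⊤ : ℕ∞) (torusChar k) := by
  rw [torusChar_eq_comp]
  exact contDiff_expchar.comp (torusForm k).contDiff

theorem iteratedDeriv_expchar (n : ℕ) :
    iteratedDeriv n (fun t : ℝ => Complex.exp (2 * Real.pi * Complex.I * (t : ℂ))) =
      fun t : ℝ => (2 * Real.pi * Complex.I) ^ n *
        Complex.exp (2 * Real.pi * Complex.I * (t : ℂ)) := by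
  induction n with
  | zero => simp
  | succ n ih =>
    rw [iteratedDeriv_succ, ih]
    funext t
    have h1 : HasDerivAt (fun t : ℝ => 2 * Real.pi * Complex.I * (t : ℂ))
        (2 * Real.pi * Complex.I * 1) t := (Complex.ofRealCLM.hasDerivAt).const_mul _
    rw [(h1.cexp.const_mul _).deriv]
    ring

theorem torusChar_iteratedFDeriv {r : ℕ} (k : Fin r → ℤ) (n : ℕ) (x : Fin r → ℝ) :
    ‖iteratedFDeriv ℝ n (torusChar k) x‖ ≤ (2 * Real.pi) ^ n * (∑ i, |(k i : ℝ)|) ^ n := by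
  rw [torusChar_eq_comp, ContinuousLinearMap.iteratedFDeriv_comp_right _ contDiff_expchar _
    (by exact_mod_cast le_top)]
  refine (ContinuousMultilinearMap.norm_compContinuousLinearMap_le _ _).trans ?_
  rw [norm_iteratedFDeriv_eq_norm_iteratedDeriv, iteratedDeriv_expchar]
  simp only [norm_mul, norm_pow, Finset.prod_const, Finset.card_univ, Fintype.card_fin]
  have h1 : ‖Complex.exp (2 * Real.pi * Complex.I * ((torusForm k x : ℝ) : ℂ))‖ = 1 := by
    have := torusChar_norm k x
    rwa [torusChar_eq_comp] at this
  rw [h1]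
  simp only [Complex.norm_I, Complex.norm_real, Complex.norm_ofNat, mul_one, Real.norm_eq_abs,
    abs_of_pos Real.pi_pos]
  gcongr
  exact torusForm_norm k

theorem torusChar_fderiv {r : ℕ} (k : Fin r → ℤ) (x v : Fin r → ℝ) :
    fderiv ℝ (torusChar k) x v =
      2 * Real.pi * Complex.I * ((∑ i, (k i : ℝ) * v i : ℝ) : ℂ) * torusChar k x := by
  have h1 : HasDerivAt (fun t : ℝ => Complex.exp (2 * Real.pi * Complex.I * (t : ℂ)))
      (2 * Real.pi * Complex.I * torusChar k x) (torusForm k x) := by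
    have h2 : HasDerivAt (fun t : ℝ => 2 * Real.pi * Complex.I * (t : ℂ))
        (2 * Real.pi * Complex.I * 1) (torusForm k x) :=
      (Complex.ofRealCLM.hasDerivAt).const_mul _
    convert! h2.cexp using 1
    rw [torusChar_eq_comp]
    simp only [Function.comp]
    ring
  have h3 : HasFDerivAt ((fun t : ℝ => Complex.exp (2 * Real.pi * Complex.I * (t : ℂ))) ∘
      torusForm k) _ x := h1.hasFDerivAt.comp x (torusForm k).hasFDerivAt
  rw [← torusChar_eq_comp] at h3
  rw [h3.fderiv]
  rw [← torusForm_apply]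
  simp
  ring

/-- The Fourier coefficient of a periodic function, as an integral over the unit cube. -/
noncomputable def boxCoeff {r : ℕ} (f : (Fin r → ℝ) → ℂ) (k : Fin r → ℤ) : ℂ :=
  ∫ x in Set.Icc (0 : Fin r → ℝ) 1, torusChar (-k) x * f x

/-- Integration by parts: the integral of the derivative of `torusChar (-k) * f` vanishes. -/
theorem boxCoeff_fderiv {r : ℕ} {f : (Fin r → ℝ) → ℂ} (hf : ContDiff ℝ (⊤ : ℕ∞) f) (hp : ZPeriodic f)
    (k : Fin r → ℤ) (i : Fin r) :
    boxCoeff (fun x => fderiv ℝ f x (Pi.single i 1)) k =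
      2 * Real.pi * Complex.I * (k i : ℂ) * boxCoeff f k := by
  have hpr : ZPeriodic (fun x => torusChar (-k) x * f x) := fun σ m => by
    simp only [torusChar_periodic (-k) σ m, hp σ m]
  have hcd : ContDiff ℝ 1 (fun x => torusChar (-k) x * f x) :=
    ((torusChar_contDiff (-k)).mul hf).of_le (by exact_mod_cast le_top)
  have h1 := hpr.integral_fderiv hcd (Pi.single i 1)
  have h2 : ∀ x, fderiv ℝ (fun x => torusChar (-k) x * f x) x (Pi.single i 1) =
      torusChar (-k) x * fderiv ℝ f x (Pi.single i 1) -
        2 * Real.pi * Complex.I * (k i : ℂ) * (torusChar (-k) x * f x) := by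
    intro x
    rw [fderiv_fun_mul ((torusChar_contDiff (-k)).differentiable (by simp) x)
      (hf.differentiable (by simp) x)]
    have hs : (∑ j, (((-k) j : ℤ) : ℝ) * (Pi.single i 1 : Fin r → ℝ) j) = -(k i : ℝ) := by
      simp [Pi.single_apply]
    simp only [add_apply, smul_apply, torusChar_fderiv,
      hs, smul_eq_mul]
    push_cast
    ring
  have hc1 := (torusChar_contDiff (-k)).continuous
  have hc2 := hf.continuous
  have hc3 : Continuous (fderiv ℝ f) := hf.continuous_fderiv (by simp)
  simp only [h2] at h1
  rw [integral_sub, integral_const_mul, sub_eq_zero] at h1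
  · exact h1
  · exact Continuous.integrableOn_Icc (by fun_prop)
  · exact Continuous.integrableOn_Icc (by fun_prop)

/-- Fourier coefficients of a smooth periodic function decay faster than any power of `|k|₁`. -/
theorem boxCoeff_decay {r : ℕ} (p : ℕ) : ∀ {f : (Fin r → ℝ) → ℂ}, ContDiff ℝ (⊤ : ℕ∞) f → ZPeriodic f →
    ∃ C : ℝ, ∀ k : Fin r → ℤ, (∑ i, |(k i : ℝ)|) ^ p * ‖boxCoeff f k‖ ≤ C := by
  induction p with
  | zero =>
    intro f hf hp
    refine ⟨∫ x in Set.Icc (0 : Fin r → ℝ) 1, ‖f x‖, fun k => ?_⟩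
    rw [pow_zero, one_mul]
    refine (norm_integral_le_integral_norm _).trans (le_of_eq ?_)
    simp [torusChar_norm]
  | succ p ih =>
    intro f hf hp
    have h1 : ∀ i : Fin r, ∃ C : ℝ, ∀ k : Fin r → ℤ, (∑ i, |(k i : ℝ)|) ^ p *
        ‖boxCoeff (fun x => fderiv ℝ f x (Pi.single i 1)) k‖ ≤ C := by
      intro i
      refine ih ?_ ?_
      · have : ContDiff ℝ (⊤ : ℕ∞) (fderiv ℝ f) := hf.fderiv_right (by simp)
        exact this.clm_apply contDiff_const
      · intro σ m
        simp only [hp.fderiv σ m]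
    choose C hC using h1
    refine ⟨∑ i, C i, fun k => ?_⟩
    have h2 : (∑ i, |(k i : ℝ)|) ^ (p + 1) * ‖boxCoeff f k‖ =
        ∑ i, (∑ i, |(k i : ℝ)|) ^ p * (|(k i : ℝ)| * ‖boxCoeff f k‖) := by
      rw [← Finset.mul_sum, ← Finset.sum_mul]; ring
    rw [h2]
    refine Finset.sum_le_sum fun i _ => le_trans ?_ (hC i k)
    gcongr
    rw [boxCoeff_fderiv hf hp]
    simp only [norm_mul, Complex.norm_I, Complex.norm_real, Complex.norm_ofNat, mul_one,
      Real.norm_eq_abs, abs_of_pos Real.pi_pos, Complex.norm_intCast]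
    gcongr
    have := Real.pi_gt_three
    have h0 : 0 ≤ |(k i : ℝ)| := abs_nonneg _
    nlinarith

theorem summable_prod_inv_sq (r : ℕ) :
    Summable fun k : Fin r → ℤ => ∏ i, (1 + (k i : ℝ) ^ 2)⁻¹ := by
  have h1 : Summable fun n : ℤ => (1 + (n : ℝ) ^ 2)⁻¹ := by
    refine Summable.of_nonneg_of_le (fun n => by positivity) (fun n => ?_)
      ((Real.summable_one_div_int_pow.2 one_lt_two).add
        (summable_of_hasFiniteSupport (f := fun n : ℤ => if n = 0 then (1 : ℝ) else 0)
          ((Set.finite_singleton (0 : ℤ)).subset (by intro n; simp))))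
    rcases eq_or_ne n 0 with rfl | hn
    · simp
    · have : (0 : ℝ) < (n : ℝ) ^ 2 := by positivity
      simp only [hn, if_false, add_zero, one_div]
      gcongr
      linarith
  refine summable_of_sum_le (c := ∏ _i : Fin r, ∑' n : ℤ, (1 + (n : ℝ) ^ 2)⁻¹)
    (fun k => by positivity) fun s => ?_
  calc ∑ k ∈ s, ∏ i, (1 + (k i : ℝ) ^ 2)⁻¹
      ≤ ∑ k ∈ Fintype.piFinset (fun i => s.image fun k : Fin r → ℤ => k i),
          ∏ i, (1 + (k i : ℝ) ^ 2)⁻¹ := by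
        refine Finset.sum_le_sum_of_subset_of_nonneg ?_ fun k _ _ => by positivity
        intro k hk
        rw [Fintype.mem_piFinset]
        exact fun i => Finset.mem_image_of_mem _ hk
    _ = ∏ i, ∑ n ∈ s.image (fun k : Fin r → ℤ => k i), (1 + (n : ℝ) ^ 2)⁻¹ := by
        rw [Finset.prod_univ_sum]
    _ ≤ _ := by
        refine Finset.prod_le_prod (fun i _ => Finset.sum_nonneg fun n _ => by positivity)
          fun i _ => h1.sum_le_tsum _ fun n _ => by positivity

theorem boxCoeff_summable {r : ℕ} (p : ℕ) {f : (Fin r → ℝ) → ℂ} (hf : ContDiff ℝ (⊤ : ℕ∞) f)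
    (hp : ZPeriodic f) :
    Summable fun k : Fin r → ℤ => (∑ i, |(k i : ℝ)|) ^ p * ‖boxCoeff f k‖ := by
  -- `∏ (1 + kᵢ²) ≤ 2^r (1 + |k|^{2r})`, so the decay bounds of orders `p` and `p + 2r` suffice
  obtain ⟨C, hC⟩ := boxCoeff_decay p hf hp
  obtain ⟨D, hD⟩ := boxCoeff_decay (p + 2 * r) hf hp
  refine Summable.of_nonneg_of_le (fun k => by positivity) (fun k => ?_)
    ((summable_prod_inv_sq r).mul_left (2 ^ r * (C + D)))
  set q := ∑ i, |(k i : ℝ)| with hq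
  have hq0 : 0 ≤ q := by positivity
  have h1 : ∏ i, (1 + (k i : ℝ) ^ 2) ≤ 2 ^ r * (1 + q ^ (2 * r)) := by
    calc ∏ i, (1 + (k i : ℝ) ^ 2) ≤ ∏ _i : Fin r, (1 + q ^ 2) := by
          refine Finset.prod_le_prod (fun i _ => by positivity) fun i _ => ?_
          rw [← sq_abs (k i : ℝ)]
          gcongr
          exact Finset.single_le_sum (f := fun i => |(k i : ℝ)|) (fun i _ => abs_nonneg _)
            (Finset.mem_univ i)
      _ = (1 + q ^ 2) ^ r := by simp
      _ ≤ 2 ^ r * (1 + q ^ (2 * r)) := by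
          rcases le_total (q ^ 2) 1 with h | h
          · calc (1 + q ^ 2) ^ r ≤ 2 ^ r := by gcongr; linarith
              _ ≤ _ := le_mul_of_one_le_right (by positivity) (by
                have : 0 ≤ q ^ (2 * r) := by positivity
                linarith)
          · calc (1 + q ^ 2) ^ r ≤ (2 * q ^ 2) ^ r := by gcongr; linarith
              _ = 2 ^ r * q ^ (2 * r) := by rw [mul_pow, pow_mul]
              _ ≤ _ := by gcongr; linarith
  have hpos : 0 < ∏ i, (1 + (k i : ℝ) ^ 2) := Finset.prod_pos fun i _ => by positivity
  rw [Finset.prod_inv_distrib, ← div_eq_mul_inv, le_div_iff₀ hpos]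
  calc q ^ p * ‖boxCoeff f k‖ * ∏ i, (1 + (k i : ℝ) ^ 2)
      ≤ q ^ p * ‖boxCoeff f k‖ * (2 ^ r * (1 + q ^ (2 * r))) := by gcongr
    _ = 2 ^ r * (q ^ p * ‖boxCoeff f k‖ + q ^ (p + 2 * r) * ‖boxCoeff f k‖) := by
        rw [pow_add]; ring
    _ ≤ 2 ^ r * (C + D) := by gcongr; exacts [hC k, hD k]

/-- Fourier inversion for smooth periodic functions. -/
theorem hasSum_boxCoeff {r : ℕ} {f : (Fin r → ℝ) → ℂ} (hf : ContDiff ℝ (⊤ : ℕ∞) f)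
    (hp : ZPeriodic f) (x : Fin r → ℝ) :
    HasSum (fun k => boxCoeff f k * torusChar k x) (f x) := by
  obtain ⟨g, hg⟩ := hp.exists_torus hf.continuous
  have h1 : ∀ k, UnitAddTorus.mFourierCoeff g k = boxCoeff f k := by
    intro k
    rw [UnitAddTorus.mFourierCoeff_eq_integral g k 0, setIntegral_congr_set (box_ae_eq _), zero_add]
    simp only [torusChar_eq_mFourier, hg, smul_eq_mul, boxCoeff]
  have h2 : Summable (UnitAddTorus.mFourierCoeff g) := by
    have h3 := boxCoeff_summable 0 hf hp
    refine Summable.of_norm ?_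
    simpa [h1] using h3
  have h4 := UnitAddTorus.hasSum_mFourier_series_apply_of_summable h2 (fun i => (x i : UnitAddCircle))
  simpa only [h1, torusChar_eq_mFourier, hg, smul_eq_mul] using h4

/-! ### The cohomological equation -/

/-- A lower bound for the distance from `k·x` to the integers bounds the small divisor below, by
Jordan's inequality for the sine. -/
theorem torusChar_sub_one_norm {r : ℕ} (k : Fin r → ℤ) (x : Fin r → ℝ) {δ : ℝ}
    (h : ∀ n : ℤ, δ ≤ |(∑ i, (k i : ℝ) * x i) - (n : ℝ)|) :
    4 * δ ≤ ‖torusChar k x - 1‖ := by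
  set θ := ∑ i, (k i : ℝ) * x i with hθ
  have h1 : torusChar k x = Complex.exp (Complex.I * ((2 * Real.pi * (θ - round θ) : ℝ) : ℂ)) := by
    rw [torusChar, ← hθ]
    refine Complex.exp_eq_exp_iff_exists_int.2 ⟨round θ, ?_⟩
    push_cast
    ring
  rw [h1, Complex.norm_exp_I_mul_ofReal_sub_one]
  have h2 : |θ - round θ| ≤ 1 / 2 := abs_sub_round θ
  have hpi := Real.pi_pos
  have h3 : |Real.pi * (θ - round θ)| ≤ Real.pi / 2 := by
    rw [abs_mul, abs_of_pos hpi]; nlinarith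
  have h4 := Real.mul_abs_le_abs_sin h3
  rw [abs_mul, abs_of_pos hpi] at h4
  have h5 : 2 / Real.pi * (Real.pi * |θ - round θ|) = 2 * |θ - round θ| := by
    field_simp
  have h6 : 2 * Real.pi * (θ - round θ) / 2 = Real.pi * (θ - round θ) := by ring
  rw [norm_mul, Real.norm_ofNat, Real.norm_eq_abs, h6]
  have h7 := h (round θ)
  linarith

/-- The solution has the Fourier coefficients of `f` divided by `exp (2πi k·ω) - 1`. -/
theorem cohomological_complex {r : ℕ} {ν τ : ℝ} (hν : 0 < ν) {ω : Fin r → ℝ}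
    (hdio : ∀ k : Fin r → ℤ, k ≠ 0 → ∀ n : ℤ,
      ν * (∑ i, |(k i : ℝ)|) ^ (-τ) ≤ |(∑ i, (k i : ℝ) * ω i) - (n : ℝ)|)
    {f : (Fin r → ℝ) → ℂ} (hf : ContDiff ℝ (⊤ : ℕ∞) f) (hp : ZPeriodic f)
    (h0 : ∫ x in Set.Icc (0 : Fin r → ℝ) 1, f x = 0) :
    ∃ φ : (Fin r → ℝ) → ℂ, ContDiff ℝ (⊤ : ℕ∞) φ ∧ ZPeriodic φ ∧ ∀ σ, φ (σ + ω) - φ σ = f σ := by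
  set M : ℕ := ⌈τ⌉₊ with hM
  -- at `k = 0` the divisor vanishes, and the junk value of the division is the wanted `0`
  set a : (Fin r → ℤ) → ℂ := fun k => boxCoeff f k / (torusChar k ω - 1) with ha
  have hq1 : ∀ k : Fin r → ℤ, k ≠ 0 → 1 ≤ ∑ i, |(k i : ℝ)| := by
    intro k hk
    obtain ⟨i, hi⟩ := Function.ne_iff.1 hk
    have h1 : (1 : ℝ) ≤ |(k i : ℝ)| := by exact_mod_cast Int.one_le_abs hi
    exact h1.trans (Finset.single_le_sum (f := fun i => |(k i : ℝ)|) (fun i _ => abs_nonneg _)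
            (Finset.mem_univ i))
  have hdiv : ∀ k : Fin r → ℤ, k ≠ 0 →
      4 * ν * ((∑ i, |(k i : ℝ)|) ^ M)⁻¹ ≤ ‖torusChar k ω - 1‖ := by
    intro k hk
    have h1 := hq1 k hk
    refine le_trans ?_ (torusChar_sub_one_norm k ω (hdio k hk))
    rw [mul_assoc, Real.rpow_neg (by linarith)]
    gcongr
    rw [← Real.rpow_natCast]
    exact Real.rpow_le_rpow_of_exponent_le h1 (Nat.le_ceil τ)
  have hdiv0 : ∀ k : Fin r → ℤ, k ≠ 0 → torusChar k ω - 1 ≠ 0 := by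
    intro k hk
    have h1 := hq1 k hk
    have h2 : 0 < 4 * ν * ((∑ i, |(k i : ℝ)|) ^ M)⁻¹ := by positivity
    exact norm_pos_iff.1 (h2.trans_le (hdiv k hk))
  have hc0 : boxCoeff f 0 = 0 := by
    simpa [boxCoeff, torusChar] using h0
  have hnorm : ∀ k, ‖a k‖ ≤ (4 * ν)⁻¹ * ((∑ i, |(k i : ℝ)|) ^ M * ‖boxCoeff f k‖) := by
    intro k
    rcases eq_or_ne k 0 with rfl | hk
    · simp [ha, hc0]
    · have h1 := hq1 k hk
      have h2 := hdiv k hk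
      have h3 : 0 < 4 * ν * ((∑ i, |(k i : ℝ)|) ^ M)⁻¹ := by positivity
      rw [ha]
      simp only [norm_div]
      calc ‖boxCoeff f k‖ / ‖torusChar k ω - 1‖
          ≤ ‖boxCoeff f k‖ / (4 * ν * ((∑ i, |(k i : ℝ)|) ^ M)⁻¹) := by gcongr
        _ = _ := by field_simp
  have hsum : ∀ x, Summable fun k => a k * torusChar k x := by
    intro x
    refine Summable.of_norm_bounded ((boxCoeff_summable M hf hp).mul_left (4 * ν)⁻¹) fun k => ?_
    rw [norm_mul, torusChar_norm, mul_one]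
    exact hnorm k
  refine ⟨fun x => ∑' k, a k * torusChar k x, ?_, ?_, ?_⟩
  · refine contDiff_tsum (v := fun n k => (4 * ν)⁻¹ * (2 * Real.pi) ^ n *
      ((∑ i, |(k i : ℝ)|) ^ (M + n) * ‖boxCoeff f k‖)) ?_ ?_ ?_
    · exact fun k => contDiff_const.mul (torusChar_contDiff k)
    · exact fun n _ => (boxCoeff_summable (M + n) hf hp).mul_left _
    · intro n k x _
      have h1 : iteratedFDeriv ℝ n (fun x => a k * torusChar k x) x =
          a k • iteratedFDeriv ℝ n (torusChar k) x :=
        iteratedFDeriv_const_smul_apply (a := a k)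
          (((torusChar_contDiff k).of_le (by exact_mod_cast le_top)).contDiffAt)
      rw [h1, norm_smul]
      refine (mul_le_mul (hnorm k) (torusChar_iteratedFDeriv k n x) (norm_nonneg _)
        (by positivity)).trans (le_of_eq ?_)
      rw [pow_add]; ring
  · intro σ m
    simp only [torusChar_periodic _ σ m]
  · intro σ
    rw [← (hsum (σ + ω)).tsum_sub (hsum σ), ← (hasSum_boxCoeff hf hp σ).tsum_eq]
    refine tsum_congr fun k => ?_
    rcases eq_or_ne k 0 with rfl | hk
    · simp [ha, hc0]
    · have := hdiv0 k hk
      rw [torusChar_add, ha]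
      field_simp

/-- Smooth periodic vector-valued functions of zero mean are coboundaries over a Diophantine
rotation. -/
theorem cohomological_vector {r m : ℕ} {ν τ : ℝ} (hν : 0 < ν) {ω : Fin r → ℝ}
    (hdio : ∀ k : Fin r → ℤ, k ≠ 0 → ∀ n : ℤ,
      ν * (∑ i, |(k i : ℝ)|) ^ (-τ) ≤ |(∑ i, (k i : ℝ) * ω i) - (n : ℝ)|)
    {f : (Fin r → ℝ) → (Fin m → ℝ)} (hf : ContDiff ℝ (⊤ : ℕ∞) f) (hp : ZPeriodic f)
    (h0 : ∫ x in Set.Icc (0 : Fin r → ℝ) 1, f x = 0) :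
    ∃ φ : (Fin r → ℝ) → (Fin m → ℝ), ContDiff ℝ (⊤ : ℕ∞) φ ∧ ZPeriodic φ ∧
      ∀ σ, φ (σ + ω) - φ σ = f σ := by
  have hint : IntegrableOn f (Set.Icc (0 : Fin r → ℝ) 1) := hf.continuous.integrableOn_Icc
  have h1 : ∀ i : Fin m, ∃ φ : (Fin r → ℝ) → ℂ, ContDiff ℝ (⊤ : ℕ∞) φ ∧ ZPeriodic φ ∧
      ∀ σ, φ (σ + ω) - φ σ = ((f σ i : ℝ) : ℂ) := by
    intro i
    refine cohomological_complex hν hdio (f := fun σ => ((f σ i : ℝ) : ℂ)) ?_ ?_ ?_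
    · exact Complex.ofRealCLM.contDiff.comp ((contDiff_pi.1 hf) i)
    · intro σ k
      simp only [hp σ k]
    · have h2 := (ContinuousLinearMap.proj (R := ℝ) (φ := fun _ : Fin m => ℝ) i).integral_comp_comm
        hint
      rw [h0] at h2
      simp only [ContinuousLinearMap.proj_apply, Pi.zero_apply] at h2
      rw [integral_complex_ofReal, h2, Complex.ofReal_zero]
  choose φ hφ hφp hφe using h1
  refine ⟨fun σ i => (φ i σ).re, ?_, ?_, ?_⟩
  · exact contDiff_pi.2 fun i => Complex.reCLM.contDiff.comp (hφ i)
  · intro σ k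
    funext i
    simp only [hφp i σ k]
  · intro σ
    funext i
    have := congrArg Complex.re (hφe i σ)
    simpa using this

/-! ### Truncated Lindstedt series -/

/-- The truncation `∑_{j ≤ N} ε^j l_j(σ)`, as a function of `(ε, σ)`. -/
noncomputable def truncSurface {r m : ℕ}
    (l : ℕ → (Fin r → ℝ) → ((Fin r → ℝ) × (Fin m → ℝ))) (N : ℕ) (p : ℝ × (Fin r → ℝ)) :
    (Fin r → ℝ) × (Fin m → ℝ) :=
  ∑ j ∈ Finset.range (N + 1), p.1 ^ j • l j p.2

/-- The truncated frequency correction `∑_{1 ≤ j ≤ N} ε^j u_j`. -/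
noncomputable def truncFreq {r : ℕ} (u : ℕ → (Fin r → ℝ)) (N : ℕ) (ε : ℝ) : Fin r → ℝ :=
  ∑ j ∈ Finset.Icc 1 N, ε ^ j • u j

/-- The data `(l_j, u_j)`, of which only the part with `j ≤ N` matters, solve the invariance
equation for `p ↦ p + (ω, 0) + ε K(p)` up to `ε^{N+1} R(ε, σ)` with `R` jointly smooth.  The
vanishing of the average of the second component of `R(0, ·)` is the solvability condition
of the equation of order `N + 1`. -/
structure IsLindstedt {r m : ℕ} (ω : Fin r → ℝ)
    (K : (Fin r → ℝ) × (Fin m → ℝ) → (Fin r → ℝ) × (Fin m → ℝ)) (y₀ : Fin m → ℝ) (N : ℕ)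
    (l : ℕ → (Fin r → ℝ) → ((Fin r → ℝ) × (Fin m → ℝ))) (u : ℕ → (Fin r → ℝ))
    (R : ℝ × (Fin r → ℝ) → (Fin r → ℝ) × (Fin m → ℝ)) : Prop where
  smooth : ∀ j, ContDiff ℝ (⊤ : ℕ∞) (l j)
  zero : ∀ σ, l 0 σ = (σ, y₀)
  periodic : ∀ j, 1 ≤ j → ZPeriodic (l j)
  smooth_rem : ContDiff ℝ (⊤ : ℕ∞) R
  eqn : ∀ ε σ, truncSurface l N (ε, σ) + (ω, 0) + ε • K (truncSurface l N (ε, σ)) -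
    truncSurface l N (ε, σ + ω + truncFreq u N ε) = ε ^ (N + 1) • R (ε, σ)
  average : ∫ σ in Set.Icc (0 : Fin r → ℝ) 1, (R (0, σ)).2 = 0

section

variable {r m : ℕ} {ω : Fin r → ℝ}
  {K : (Fin r → ℝ) × (Fin m → ℝ) → (Fin r → ℝ) × (Fin m → ℝ)} {y₀ : Fin m → ℝ} {N : ℕ}
  {l : ℕ → (Fin r → ℝ) → ((Fin r → ℝ) × (Fin m → ℝ))} {u : ℕ → (Fin r → ℝ)}
  {R : ℝ × (Fin r → ℝ) → (Fin r → ℝ) × (Fin m → ℝ)}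

theorem contDiff_truncSurface (hl : ∀ j, ContDiff ℝ (⊤ : ℕ∞) (l j)) (N : ℕ) :
    ContDiff ℝ (⊤ : ℕ∞) (truncSurface l N) := by
  unfold truncSurface
  refine ContDiff.sum fun j _ => ?_
  exact (contDiff_fst.pow j).smul ((hl j).comp contDiff_snd)

theorem contDiff_truncFreq (u : ℕ → (Fin r → ℝ)) (N : ℕ) :
    ContDiff ℝ (⊤ : ℕ∞) (truncFreq u N) := by
  unfold truncFreq
  refine ContDiff.sum fun j _ => ?_
  exact (contDiff_id.pow j).smul contDiff_const

theorem truncSurface_zero (h0 : ∀ σ, l 0 σ = (σ, y₀)) (N : ℕ) (σ : Fin r → ℝ) :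
    truncSurface l N (0, σ) = (σ, y₀) := by
  rw [truncSurface, Finset.sum_range_succ']
  simp [h0]

theorem truncFreq_zero (u : ℕ → (Fin r → ℝ)) (N : ℕ) : truncFreq u N 0 = 0 := by
  refine Finset.sum_eq_zero fun j hj => ?_
  have : j ≠ 0 := by have := (Finset.mem_Icc.1 hj).1; omega
  simp [this]

theorem truncSurface_periodic (h0 : ∀ σ, l 0 σ = (σ, y₀))
    (hp : ∀ j, 1 ≤ j → ZPeriodic (l j)) (N : ℕ) (ε : ℝ) (σ : Fin r → ℝ) (k : Fin r → ℤ) :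
    truncSurface l N (ε, σ + fun i => (k i : ℝ)) =
      truncSurface l N (ε, σ) + ((fun i => (k i : ℝ)), 0) := by
  rw [truncSurface, truncSurface, Finset.sum_range_succ', Finset.sum_range_succ']
  simp only [h0, fun j => hp (j + 1) (by omega) σ k]
  rw [add_assoc]
  simp

theorem truncSurface_update (l : ℕ → (Fin r → ℝ) → ((Fin r → ℝ) × (Fin m → ℝ))) (N : ℕ)
    (a : (Fin r → ℝ) → ((Fin r → ℝ) × (Fin m → ℝ))) (p : ℝ × (Fin r → ℝ)) :
    truncSurface (Function.update l (N + 1) a) (N + 1) p =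
      truncSurface l N p + p.1 ^ (N + 1) • a p.2 := by
  rw [truncSurface, Finset.sum_range_succ, truncSurface, Function.update_self]
  congr 1
  refine Finset.sum_congr rfl fun j hj => ?_
  rw [Function.update_of_ne]
  have := Finset.mem_range.1 hj
  omega

theorem truncFreq_update (u : ℕ → (Fin r → ℝ)) (N : ℕ) (b : Fin r → ℝ) (ε : ℝ) :
    truncFreq (Function.update u (N + 1) b) (N + 1) ε = truncFreq u N ε + ε ^ (N + 1) • b := by
  rw [truncFreq, Finset.sum_Icc_succ_top (by omega), truncFreq, Function.update_self]
  congr 1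
  refine Finset.sum_congr rfl fun j hj => ?_
  rw [Function.update_of_ne]
  have := Finset.mem_Icc.1 hj
  omega

/-- The remainder is periodic: off `ε = 0` because the error is, and at `ε = 0` by continuity. -/
theorem IsLindstedt.rem_periodic (H : IsLindstedt ω K y₀ N l u R)
    (hK : ∀ p (k : Fin r → ℤ), K (p + ((fun i => (k i : ℝ)), 0)) = K p) (ε : ℝ) :
    ZPeriodic fun σ => R (ε, σ) := by
  intro σ k
  have hRc := H.smooth_rem.continuous
  have h1 : Continuous fun ε : ℝ => R (ε, σ + fun i => (k i : ℝ)) := by fun_prop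
  have h2 : Continuous fun ε : ℝ => R (ε, σ) := by fun_prop
  have h3 : Set.EqOn (fun ε : ℝ => R (ε, σ + fun i => (k i : ℝ))) (fun ε : ℝ => R (ε, σ))
      {(0 : ℝ)}ᶜ := by
    intro ε hε
    have hε' : ε ^ (N + 1) ≠ 0 := pow_ne_zero _ hε
    refine smul_right_injective _ hε' ?_
    simp only
    rw [← H.eqn, ← H.eqn, truncSurface_periodic H.zero H.periodic, hK,
      show σ + (fun i => (k i : ℝ)) + ω + truncFreq u N ε =
        σ + ω + truncFreq u N ε + (fun i => (k i : ℝ)) by abel,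
      truncSurface_periodic H.zero H.periodic]
    abel
  exact congrFun (h1.ext_on (dense_compl_singleton 0) h2 h3) ε

/-- The first approximation `l_0(σ) = (σ, y₀)`, with remainder `K(σ, y₀)`. -/
theorem isLindstedt_zero (hK : ContDiff ℝ (⊤ : ℕ∞) K)
    (havg : ∫ σ in Set.Icc (0 : Fin r → ℝ) 1, (K (σ, y₀)).2 = 0) :
    IsLindstedt ω K y₀ 0 (fun j σ => if j = 0 then (σ, y₀) else 0) (fun _ => 0)
      (fun p => K (p.2, y₀)) where
  smooth j := by
    by_cases hj : j = 0
    · simp only [hj, if_true]; fun_prop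
    · simp only [hj, if_false]; fun_prop
  zero σ := by simp
  periodic j hj σ k := by
    have : j ≠ 0 := by omega
    simp [this]
  smooth_rem := hK.comp (by fun_prop)
  eqn ε σ := by
    simp only [truncSurface, truncFreq]
    ext i <;> simp
  average := havg

/-- One order of the Lindstedt series.  The order `N + 1` equation is cohomological over the
rotation by `ω`; the mean of its first component fixes the new frequency correction, and the
free constant in the second component of the solution is spent on the
solvability condition of the next order. -/
theorem IsLindstedt.step {ν τ : ℝ} (hν : 0 < ν)
    (hdio : ∀ k : Fin r → ℤ, k ≠ 0 → ∀ n : ℤ,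
      ν * (∑ i, |(k i : ℝ)|) ^ (-τ) ≤ |(∑ i, (k i : ℝ) * ω i) - (n : ℝ)|)
    (hK : ContDiff ℝ (⊤ : ℕ∞) K)
    (hKp : ∀ p (k : Fin r → ℤ), K (p + ((fun i => (k i : ℝ)), 0)) = K p)
    (hnd : ∀ w : Fin m → ℝ, ∃ c : Fin m → ℝ,
      ∫ σ in Set.Icc (0 : Fin r → ℝ) 1, (fderiv ℝ K (σ, y₀) (0, c)).2 = w)
    (H : IsLindstedt ω K y₀ N l u R) :
    ∃ a b R', IsLindstedt ω K y₀ (N + 1) (Function.update l (N + 1) a)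
      (Function.update u (N + 1) b) R' := by
  have hRs := H.smooth_rem
  have hRp : ZPeriodic fun σ => R (0, σ) := H.rem_periodic hKp 0
  have hR0 : ContDiff ℝ (⊤ : ℕ∞) fun σ => R (0, σ) := hRs.comp (by fun_prop)
  set P := truncSurface l N with hP
  have hPs : ContDiff ℝ (⊤ : ℕ∞) P := contDiff_truncSurface H.smooth N
  have hP0 : ∀ σ, P (0, σ) = (σ, y₀) := truncSurface_zero H.zero N
  have hUs : ContDiff ℝ (⊤ : ℕ∞) (truncFreq u N) := contDiff_truncFreq u N
  have hU0 := truncFreq_zero u N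
  have hvol : (volume : Measure (Fin r → ℝ)).real (Set.Icc 0 1) = 1 := by
    simp [Measure.real, Real.volume_Icc_pi]
  -- the mean of the first component is the new frequency correction
  obtain ⟨b, hb⟩ : ∃ b : Fin r → ℝ, ∫ σ in Set.Icc (0 : Fin r → ℝ) 1, (R (0, σ)).1 = b := ⟨_, rfl⟩
  obtain ⟨φ₁, hφ₁, hφ₁p, hφ₁e⟩ := cohomological_vector hν hdio
    (f := fun σ => (R (0, σ)).1 - b) (hR0.fst.sub contDiff_const)
    (fun σ k => by have := hRp σ k; simp only at this; simp only [this]) (by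
      rw [integral_sub, hb]
      · simp [hvol]
      · exact hR0.fst.continuous.integrableOn_Icc
      · exact continuous_const.integrableOn_Icc)
  obtain ⟨φ₂, hφ₂, hφ₂p, hφ₂e⟩ := cohomological_vector hν hdio
    (f := fun σ => (R (0, σ)).2) hR0.snd
    (fun σ k => by have := hRp σ k; simp only at this; simp only [this]) H.average
  obtain ⟨φ, hφd⟩ : ∃ φ : (Fin r → ℝ) → (Fin r → ℝ) × (Fin m → ℝ),
      φ = fun σ => (φ₁ σ, φ₂ σ) := ⟨_, rfl⟩
  have hφ : ContDiff ℝ (⊤ : ℕ∞) φ := by rw [hφd]; exact hφ₁.prodMk hφ₂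
  have hφp : ZPeriodic φ := fun σ k => by
    rw [hφd]; exact Prod.ext (hφ₁p σ k) (hφ₂p σ k)
  have hφe : ∀ σ, φ (σ + ω) - φ σ = R (0, σ) - (b, 0) := by
    intro σ
    rw [hφd]
    refine Prod.ext (hφ₁e σ) ?_
    simpa using hφ₂e σ
  -- `P(ε, σ) = (σ, y₀) + ε P₁(ε, σ)`
  obtain ⟨P₁, hP₁s, hP₁⟩ := exists_smooth_div
    (f := fun p : ℝ × (Fin r → ℝ) => P p - (p.2, y₀)) (hPs.sub (by fun_prop))
    (fun σ => by simp [hP0])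
  obtain ⟨Q₁, hQ₁s, hQ₁, -⟩ := exists_smooth_quotient hP₁s
  obtain ⟨QK, hQKs, hQK, hQK0⟩ := exists_smooth_quotient hK
  -- the part of the new error, divided by `ε^{N+1}`, that does not see the free constant
  obtain ⟨S, hSs, hS⟩ := exists_smooth_div
    (f := fun p : ℝ × (Fin r → ℝ) => R p + φ p.2 - (b, 0) -
      φ (p.2 + ω + (truncFreq u N p.1 + p.1 ^ (N + 1) • b)) -
      p.1 • Q₁ ((p.1, p.2 + ω + truncFreq u N p.1), p.1 ^ (N + 1), (0, b)))
    (by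
      have h1 : ContDiff ℝ (⊤ : ℕ∞) fun p : ℝ × (Fin r → ℝ) => truncFreq u N p.1 :=
        hUs.comp contDiff_fst
      refine ((((hRs.add (hφ.comp contDiff_snd)).sub contDiff_const).sub
        (hφ.comp (by fun_prop))).sub (contDiff_fst.smul (hQ₁s.comp (by fun_prop)))))
    (fun σ => by
      have := hφe σ
      simp only [hU0, zero_pow (Nat.succ_ne_zero N), zero_smul, add_zero, sub_zero]
      rw [show φ (σ + ω) = φ σ + (R (0, σ) - (b, 0)) by rw [← this]; abel]
      abel)
  have hK' : ContDiff ℝ (⊤ : ℕ∞) (fderiv ℝ K) := hK.fderiv_right (by simp)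
  have hKc := hK'.continuous
  have hSc := hSs.continuous
  have hφc := hφ.continuous
  obtain ⟨c, hc⟩ := hnd (-∫ σ in Set.Icc (0 : Fin r → ℝ) 1,
    (S (0, σ) + fderiv ℝ K (σ, y₀) (φ σ)).2)
  refine ⟨fun σ => φ σ + (0, c), b, fun p => S p + QK (P p, p.1 ^ (N + 1), φ p.2 + (0, c)),
    ?_, ?_, ?_, ?_, ?_, ?_⟩
  · intro j
    rcases eq_or_ne j (N + 1) with rfl | hj
    · rw [Function.update_self]
      exact hφ.add contDiff_const
    · rw [Function.update_of_ne hj]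
      exact H.smooth j
  · intro σ
    rw [Function.update_of_ne (by omega)]
    exact H.zero σ
  · intro j hj1
    rcases eq_or_ne j (N + 1) with rfl | hj
    · rw [Function.update_self]
      intro σ k
      simp only [hφp σ k]
    · rw [Function.update_of_ne hj]
      exact H.periodic j hj1
  · refine hSs.add (hQKs.comp ?_)
    exact hPs.prodMk ((contDiff_fst.pow _).prodMk ((hφ.comp contDiff_snd).add contDiff_const))
  · intro ε σ
    have e1 := H.eqn ε σ
    have e2 := hS ε σ
    simp only [← hP] at e1
    simp only at e2
    simp only [truncSurface_update, truncFreq_update, ← hP]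
    rw [hQK]
    set T := σ + ω + truncFreq u N ε with hT
    rw [show σ + ω + (truncFreq u N ε + ε ^ (N + 1) • b) = T + ε ^ (N + 1) • b by
      rw [hT]; abel] at e2 ⊢
    have e3 : P (ε, T + ε ^ (N + 1) • b) = P (ε, T) + ε ^ (N + 1) • ((b, 0) +
        ε • Q₁ ((ε, T), ε ^ (N + 1), (0, b))) := by
      have h1 := hP₁ ε (T + ε ^ (N + 1) • b)
      have h2 := hP₁ ε T
      have h3 := hQ₁ (ε, T) (ε ^ (N + 1)) (0, b)
      simp only at h1 h2
      rw [show (ε, T) + ε ^ (N + 1) • ((0 : ℝ), b) = (ε, T + ε ^ (N + 1) • b) by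
        ext <;> simp] at h3
      rw [sub_eq_iff_eq_add] at h1 h2
      rw [h1, h2, h3, show ((T + ε ^ (N + 1) • b, y₀) : (Fin r → ℝ) × (Fin m → ℝ)) =
        (T, y₀) + ε ^ (N + 1) • (b, 0) by ext <;> simp]
      module
    rw [e3]
    generalize QK (P (ε, σ), ε ^ (N + 1), φ σ + (0, c)) = q at *
    generalize Q₁ ((ε, T), ε ^ (N + 1), 0, b) = q₁ at *
    have e4 : R (ε, σ) = ε • S (ε, σ) - φ σ + (b, 0) + φ (T + ε ^ (N + 1) • b) + ε • q₁ := by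
      rw [← e2]; abel
    rw [e4, sub_eq_iff_eq_add, ← eq_sub_iff_add_eq] at e1
    rw [show P (ε, σ) + ε ^ (N + 1) • (φ σ + (0, c)) + (ω, 0) + ε • (K (P (ε, σ)) +
      ε ^ (N + 1) • q) = (P (ε, σ) + (ω, 0)) + ε ^ (N + 1) • (φ σ + (0, c)) +
      ε • (K (P (ε, σ)) + ε ^ (N + 1) • q) by abel, e1]
    module
  · simp only [hP0, zero_pow (Nat.succ_ne_zero N), hQK0]
    have e1 : ∀ σ, (S (0, σ) + fderiv ℝ K (σ, y₀) (φ σ + (0, c))).2 =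
        (S (0, σ) + fderiv ℝ K (σ, y₀) (φ σ)).2 + (fderiv ℝ K (σ, y₀) (0, c)).2 := by
      intro σ
      rw [map_add, ← add_assoc, Prod.snd_add]
    simp only [e1]
    rw [integral_add, hc, add_neg_cancel]
    · exact Continuous.integrableOn_Icc (by fun_prop)
    · exact Continuous.integrableOn_Icc (by fun_prop)

end

/-- Dependent choice for approximations each of which extends the previous one: the limit
sequence `s` agrees up to each index `N` with some sequence satisfying `Good N`. -/
theorem exists_diagonal {α : Type} (Good : ℕ → (ℕ → α) → Prop) (h0 : ∃ s, Good 0 s)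
    (hs : ∀ N s, Good N s → ∃ s', Good (N + 1) s' ∧ ∀ j ≤ N, s' j = s j) :
    ∃ s : ℕ → α, ∀ N, ∃ t, Good N t ∧ ∀ j ≤ N, t j = s j := by
  obtain ⟨s₀, h₀⟩ := h0
  choose! nxt hn1 hn2 using hs
  let seq : ℕ → (ℕ → α) := fun N => Nat.rec s₀ (fun N s => nxt N s) N
  have hgood : ∀ N, Good N (seq N) := by
    intro N
    induction N with
    | zero => exact h₀
    | succ N ih => exact hn1 N _ ih
  refine ⟨fun j => seq j j, fun N => ⟨seq N, hgood N, fun j hj => ?_⟩⟩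
  induction N, hj using Nat.le_induction with
  | base => rfl
  | succ N hN ih => rw [← ih]; exact hn2 N _ (hgood N) j hN

/-- A continuous function of `(ε, σ)` that is periodic in `σ` is bounded for `ε ∈ [0, 1]`. -/
theorem bounded_of_periodic {r : ℕ} {F : Type} [NormedAddCommGroup F]
    {R : ℝ × (Fin r → ℝ) → F} (hR : Continuous R) (hp : ∀ ε, ZPeriodic fun σ => R (ε, σ)) :
    ∃ C : ℝ, ∀ ε, 0 ≤ ε → ε ≤ 1 → ∀ σ, ‖R (ε, σ)‖ ≤ C := by
  obtain ⟨C, hC⟩ := ((isCompact_Icc (a := (0 : ℝ)) (b := 1)).prod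
    (isCompact_Icc (a := (0 : Fin r → ℝ)) (b := 1))).exists_bound_of_continuousOn hR.continuousOn
  refine ⟨C, fun ε h0 h1 σ => ?_⟩
  have h2 := hp ε (fun i => Int.fract (σ i)) (fun i => ⌊σ i⌋)
  have h3 : (fun i => Int.fract (σ i)) + (fun i => ((⌊σ i⌋ : ℤ) : ℝ)) = σ := by
    funext i; exact Int.fract_add_floor (σ i)
  simp only [h3] at h2
  rw [h2]
  exact hC _ ⟨⟨h0, h1⟩, fun i => Int.fract_nonneg _, fun i => (Int.fract_lt_one _).le⟩

/-- The averaged normal derivative is onto when its matrix is invertible. -/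
theorem averaged_derivative_surjective {r m : ℕ}
    {g : ((Fin r → ℝ) × (Fin m → ℝ)) → (Fin r → ℝ)}
    {h : ((Fin r → ℝ) × (Fin m → ℝ)) → (Fin m → ℝ)}
    (hg : ContDiff ℝ (⊤ : ℕ∞) g) (hh : ContDiff ℝ (⊤ : ℕ∞) h) (y₀ : Fin m → ℝ)
    (hnd : (Matrix.of fun i j : Fin m =>
        ∫ σ in Set.Icc (0 : Fin r → ℝ) 1,
          fderiv ℝ (fun y => h (σ, y) i) y₀ (Pi.single j 1)).det ≠ 0) (w : Fin m → ℝ) :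
    ∃ c : Fin m → ℝ,
      ∫ σ in Set.Icc (0 : Fin r → ℝ) 1, (fderiv ℝ (fun p => (g p, h p)) (σ, y₀) (0, c)).2 = w := by
  set M := (Matrix.of fun i j : Fin m =>
        ∫ σ in Set.Icc (0 : Fin r → ℝ) 1,
          fderiv ℝ (fun y => h (σ, y) i) y₀ (Pi.single j 1)) with hM
  refine ⟨M⁻¹.mulVec w, ?_⟩
  generalize hc : M⁻¹.mulVec w = c
  have hw : M.mulVec c = w := by
    rw [← hc, Matrix.mulVec_mulVec, Matrix.mul_nonsing_inv _ (isUnit_iff_ne_zero.2 hnd),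
      Matrix.one_mulVec]
  have hgd := hg.differentiable (by simp)
  have hhd := hh.differentiable (by simp)
  have hhc : Continuous (fderiv ℝ h) := hh.continuous_fderiv (by simp)
  have e1 : ∀ σ : Fin r → ℝ, (fderiv ℝ (fun p => (g p, h p)) (σ, y₀) (0, c)).2 =
      fderiv ℝ h (σ, y₀) (0, c) := by
    intro σ
    rw [DifferentiableAt.fderiv_prodMk (hgd _) (hhd _)]
    rfl
  have e2 : ∀ (σ : Fin r → ℝ) (i : Fin m) (v : Fin m → ℝ), fderiv ℝ (fun y => h (σ, y) i) y₀ v =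
      fderiv ℝ h (σ, y₀) (0, v) i := by
    intro σ i v
    have h1 : HasFDerivAt (fun y => h (σ, y)) _ y₀ :=
      (hhd (σ, y₀)).hasFDerivAt.comp y₀ (hasFDerivAt_prodMk_right σ y₀)
    rw [((hasFDerivAt_pi'.1 h1) i).fderiv]
    rfl
  simp only [e1]
  rw [← hw]
  funext i
  have hint : IntegrableOn (fun σ => fderiv ℝ h (σ, y₀) (0, c)) (Set.Icc (0 : Fin r → ℝ) 1) :=
    Continuous.integrableOn_Icc (by fun_prop)
  have e3 := (ContinuousLinearMap.proj (R := ℝ) (φ := fun _ : Fin m => ℝ) i).integral_comp_comm hint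
  simp only [ContinuousLinearMap.proj_apply] at e3
  rw [← e3, Matrix.mulVec, dotProduct]
  simp only [hM, Matrix.of_apply, e2]
  have e4 : ∀ σ : Fin r → ℝ, fderiv ℝ h (σ, y₀) (0, c) i =
      ∑ j, fderiv ℝ h (σ, y₀) (0, Pi.single j 1) i * c j := by
    intro σ
    rw [← e2]
    conv_lhs => rw [pi_eq_sum_univ' c]
    rw [map_sum]
    refine Finset.sum_congr rfl fun j _ => ?_
    rw [map_smul, ← e2, smul_eq_mul, mul_comm]
  simp only [e4]
  rw [integral_finsetSum]
  · refine Finset.sum_congr rfl fun j _ => ?_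
    rw [integral_mul_const]
  · intro j _
    exact Continuous.integrableOn_Icc (by fun_prop)

/-- Lindstedt series for the resonant invariant surface of a generic
torus map `F_ε(x,y) = (x + ω + εg(x,y), y + εh(x,y))` in adapted coordinates
`𝕋^r × 𝕋^{d−r}`, with Diophantine intrinsic frequency `ω`, zero average of
`h(·,y₀)` and invertible averaged normal derivative.  There are smooth coefficients
`l_j` (`l_0(σ) = (σ,y₀)`, `l_j` periodic for `j ≥ 1`) and constant frequency
corrections `u_j` such that each truncation conjugates `F_ε` to the rotation by
`ω + ∑_{j=1}^N ε^j u_j` up to `O(ε^{N+1})`; in contrast with foliation preserving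
maps, the internal frequency depends on the perturbation. -/
theorem lindstedt_series_generic_torus_map
    (d r : ℕ) (hr : 1 ≤ r) (hrd : r ≤ d) (ν τ : ℝ) (hν : 0 < ν) (hτ : 0 < τ)
    (ω : Fin r → ℝ)
    (hdio : ∀ k : Fin r → ℤ, k ≠ 0 → ∀ n : ℤ,
      ν * (∑ i, |(k i : ℝ)|) ^ (-τ) ≤ |(∑ i, (k i : ℝ) * ω i) - (n : ℝ)|)
    (g : ((Fin r → ℝ) × (Fin (d - r) → ℝ)) → (Fin r → ℝ))
    (h : ((Fin r → ℝ) × (Fin (d - r) → ℝ)) → (Fin (d - r) → ℝ))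
    (hg : ContDiff ℝ (⊤ : ℕ∞) g) (hh : ContDiff ℝ (⊤ : ℕ∞) h)
    (hgper : ∀ (x : Fin r → ℝ) (y : Fin (d - r) → ℝ)
        (k : Fin r → ℤ) (m : Fin (d - r) → ℤ),
      g (x + fun i => (k i : ℝ), y + fun i => (m i : ℝ)) = g (x, y))
    (hhper : ∀ (x : Fin r → ℝ) (y : Fin (d - r) → ℝ)
        (k : Fin r → ℤ) (m : Fin (d - r) → ℤ),
      h (x + fun i => (k i : ℝ), y + fun i => (m i : ℝ)) = h (x, y))
    (y₀ : Fin (d - r) → ℝ)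
    (havg : (∫ σ in Set.Icc (0 : Fin r → ℝ) 1, h (σ, y₀)) = 0)
    (hnd : (Matrix.of fun i j : Fin (d - r) =>
        ∫ σ in Set.Icc (0 : Fin r → ℝ) 1,
          fderiv ℝ (fun y => h (σ, y) i) y₀ (Pi.single j 1)).det ≠ 0)
    (F : ℝ → ((Fin r → ℝ) × (Fin (d - r) → ℝ)) → ((Fin r → ℝ) × (Fin (d - r) → ℝ)))
    (hF : ∀ (ε : ℝ) (x : Fin r → ℝ) (y : Fin (d - r) → ℝ),
      F ε (x, y) = (x + ω + ε • g (x, y), y + ε • h (x, y))) :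
    ∃ (l : ℕ → (Fin r → ℝ) → ((Fin r → ℝ) × (Fin (d - r) → ℝ)))
      (u : ℕ → (Fin r → ℝ)),
      (∀ j, ContDiff ℝ (⊤ : ℕ∞) (l j)) ∧
      (∀ σ, l 0 σ = (σ, y₀)) ∧
      (∀ j, 1 ≤ j → ∀ (σ : Fin r → ℝ) (k : Fin r → ℤ),
        l j (σ + fun i => (k i : ℝ)) = l j σ) ∧
      (∀ N : ℕ, ∃ C : ℝ, ∀ ε : ℝ, 0 < ε → ε ≤ 1 → ∀ σ : Fin r → ℝ,
        ‖F ε (∑ j ∈ Finset.range (N + 1), ε ^ j • l j σ) -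
            ∑ j ∈ Finset.range (N + 1),
              ε ^ j • l j (σ + ω + ∑ j' ∈ Finset.Icc 1 N, ε ^ j' • u j')‖ ≤
          C * ε ^ (N + 1)) := by
  set K : (Fin r → ℝ) × (Fin (d - r) → ℝ) → (Fin r → ℝ) × (Fin (d - r) → ℝ) :=
    fun p => (g p, h p) with hKdef
  have hK : ContDiff ℝ (⊤ : ℕ∞) K := hg.prodMk hh
  have hKp : ∀ p (k : Fin r → ℤ), K (p + ((fun i => (k i : ℝ)), 0)) = K p := by
    rintro ⟨x, y⟩ k
    have h1 := hgper x y k 0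
    have h2 := hhper x y k 0
    have h3 : (y + fun i => (((0 : Fin (d - r) → ℤ) i : ℤ) : ℝ)) = y := by funext i; simp
    rw [h3] at h1 h2
    simp only [hKdef, Prod.mk_add_mk, add_zero, h1, h2]
  have hsurj := averaged_derivative_surjective hg hh y₀ hnd
  obtain ⟨s, hs⟩ := exists_diagonal
    (α := ((Fin r → ℝ) → ((Fin r → ℝ) × (Fin (d - r) → ℝ))) × (Fin r → ℝ))
    (fun N s => ∃ R, IsLindstedt ω K y₀ N (fun j => (s j).1) (fun j => (s j).2) R)
    ⟨fun j => (fun σ => if j = 0 then (σ, y₀) else 0, 0), _, isLindstedt_zero hK havg⟩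
    (by
      rintro N s ⟨R, H⟩
      obtain ⟨a, b, R', H'⟩ := H.step hν hdio hK hKp hsurj
      refine ⟨Function.update s (N + 1) (a, b), ⟨R', ?_⟩, fun j hj =>
        Function.update_of_ne (by omega) _ _⟩
      convert H' using 1
      · funext j
        rcases eq_or_ne j (N + 1) with rfl | hj
        · simp
        · simp [Function.update_of_ne hj]
      · funext j
        rcases eq_or_ne j (N + 1) with rfl | hj
        · simp
        · simp [Function.update_of_ne hj])
  refine ⟨fun j => (s j).1, fun j => (s j).2, ?_, ?_, ?_, ?_⟩
  · intro j
    obtain ⟨t, ⟨R, H⟩, ht⟩ := hs j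
    simp only [← ht j le_rfl]
    exact H.smooth j
  · intro σ
    obtain ⟨t, ⟨R, H⟩, ht⟩ := hs 0
    simp only [← ht 0 le_rfl]
    exact H.zero σ
  · intro j hj
    obtain ⟨t, ⟨R, H⟩, ht⟩ := hs j
    simp only [← ht j le_rfl]
    exact H.periodic j hj
  · intro N
    obtain ⟨t, ⟨R, H⟩, ht⟩ := hs N
    obtain ⟨C, hC⟩ := bounded_of_periodic H.smooth_rem.continuous (H.rem_periodic hKp)
    refine ⟨C, fun ε hε0 hε1 σ => ?_⟩
    have e1 : ∀ σ, ∑ j ∈ Finset.range (N + 1), ε ^ j • (s j).1 σ =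
        truncSurface (fun j => (t j).1) N (ε, σ) := by
      intro σ
      refine Finset.sum_congr rfl fun j hj => ?_
      simp only [ht j (by have := Finset.mem_range.1 hj; omega)]
    have e2 : ∑ j ∈ Finset.Icc 1 N, ε ^ j • (s j).2 = truncFreq (fun j => (t j).2) N ε := by
      refine Finset.sum_congr rfl fun j hj => ?_
      simp only [ht j (Finset.mem_Icc.1 hj).2]
    have e3 : ∀ p, F ε p = p + (ω, 0) + ε • K p := by
      rintro ⟨x, y⟩
      rw [hF]
      simp [hKdef]
    simp only [e1, e2, e3]
    rw [H.eqn, norm_smul, norm_pow, Real.norm_eq_abs, abs_of_pos hε0, mul_comm]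
    gcongr
    exact hC ε hε0.le hε1 σ
end

section
/- (Persistence of the invariant circle generated by a resonance.) Let d ≥ 2, let n, m ≥ 1 and L ≥ 2 be integers, let p > L + 2 be an integer, let ω ∈ ℝ^{d−1}, and let 0 < ε̄ ≤ 1 and 0 < α₀ < 1. Let β: ℝ × [0,ε̄) → ℝ^{d−1} and η: ℝ × [0,ε̄) → ℝ be C^p, 1-periodic in the first variable, with η(0,ε) = 0 for all ε ∈ [0,ε̄) and ∂_{x}η(0,0) ≠ 0; and let r₁: ℝ^{d−1} × ℝ × [0,ε̄) → ℝ^{d−1} and r₂: ℝ^{d−1} × ℝ × [0,ε̄) → ℝ be C^p and ℤ^{d−1} × ℤ-periodic in (x₁,x₂). For ε ∈ (0,ε̄) and Δ = (Δ₁,Δ₂) ∈ ℝ^{d−1} × ℝ define F(x₁,x₂) = (x₁ + ω + ε^n·β(x₂,ε) + ε^{n+m}·r₁(x₁,x₂,ε) + Δ₁, x₂ + ε^n·η(x₂,ε) + ε^{n+m}·r₂(x₁,x₂,ε) + Δ₂). Then there exists ε₀ > 0 such that for every ε ∈ (0,ε₀) and every Δ with |Δ| ≤ ε^{n+1} there exists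 a ℤ^{d−1}-periodic function w: ℝ^{d−1} → ℝ of class C^{L−1} with sup|w| ≤ ε^{α₀}, whose graph is invariant under F modulo ℤ^{d−1} × ℤ: for every x₁ ∈ ℝ^{d−1}, writing F(x₁, w(x₁)) = (X₁, X₂), one has X₂ − w(X₁) ∈ ℤ. (This is the invariant codimension-one torus of the resonant normal form, giving the phase-locking phenomenon.) -/
/-!
The circle `{x₂ = 0}` is normally hyperbolic for the averaged map, with multiplier `1 + lam εⁿ`,
`lam = ∂ₓη(0,0) ≠ 0`. This hyperbolicity is weak, but so is every other effect: with `δ = εⁿ`, the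
tangential derivative of `x₁ ↦ X₁` differs from the identity by `o(δ)`, up to a shear `O(δ)` in
`x₂`, and the remainders and the detuning contribute `o(δ)` to the normal component. The graph
transform therefore works at the scale `δ`.

For `lam > 0` the invariance equation `w (G (x, w x)) = H (x, w x)` is rewritten as
`w x = Φ (x, w x, w (G (x, w x)))`, where `Φ (x, y, y') = y + (y' - H (x, y)) / (1 + lam δ)` depends
only weakly on `x, y` and contracts in `y'`. Such equations (`IsSystem`) are solved by iteration
among functions with `‖u‖ ≤ R` and `‖Du‖ ≤ M`. The base map `x ↦ G (x, w x)` expands by at most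
`1 + δ (κ + C M)`, and the `r`-th power of this factor is beaten by the contraction `1 / (1 + lam δ)`
once `κ` and `M` are small. The derivatives of the iterates converge to the fixed point of the
linearised equation (`IsSystem.exists_solution_one`). That equation is again an `IsSystem` with one
derivative less, so `Cʳ` regularity follows by induction on `r` (`IsSystem.exists_solution`).

For `lam < 0` the inverse map is used instead (`exists_invariant_graph`): it is a global
diffeomorphism close to the identity, and it acts surjectively on its invariant graph, which
is therefore invariant under the map itself.

The radius of the tube is `R = ε ^ α₀`: as `α₀ < 1`, it dominates the shift `O(ε)` of the circle
caused by the remainders and the detuning, and it tends to zero, so that the drift is close to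
its linearisation in the tube (`exists_linearization`).
-/

/-! ### Periodic functions and the contraction principle -/

section Helpers

open Filter Topology Set

/-- `K` is compact and every point can be moved into `K` by a translation from `Λ`: functions
invariant under the translations in `Λ` behave like functions on a compact torus. -/
structure CompactQuotient {E : Type} [NormedAddCommGroup E] (Λ K : Set E) : Prop where
  compact : IsCompact K
  cover : ∀ x, ∃ v ∈ Λ, x + v ∈ K

section Periodic

variable {E W V : Type} [NormedAddCommGroup E] [NormedAddCommGroup W]
  [NormedAddCommGroup V] {Λ K : Set E}

lemma CompactQuotient.tendstoUniformly_comp [ProperSpace W] (hΛ : CompactQuotient Λ K)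
    {Θ : E × W → V} (hc : Continuous Θ)
    (hper : ∀ v ∈ Λ, ∀ x w, Θ (x + v, w) = Θ (x, w)) {f : ℕ → E → W} {f₀ : E → W} {B : ℝ}
    (hf : ∀ j x, ‖f j x‖ ≤ B) (hf₀ : ∀ x, ‖f₀ x‖ ≤ B) (ht : TendstoUniformly f f₀ atTop) :
    TendstoUniformly (fun j x => Θ (x, f j x)) (fun x => Θ (x, f₀ x)) atTop := by
  have hcomp : IsCompact (K ×ˢ Metric.closedBall (0 : W) B) :=
    hΛ.compact.prod (isCompact_closedBall 0 B)
  have huc := hcomp.uniformContinuousOn_of_continuous hc.continuousOn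
  rw [Metric.uniformContinuousOn_iff] at huc
  rw [Metric.tendstoUniformly_iff] at ht ⊢
  intro ε hε
  obtain ⟨δ, hδ, h⟩ := huc ε hε
  filter_upwards [ht δ hδ] with j hj x
  obtain ⟨v, hv, hxv⟩ := hΛ.cover x
  rw [← hper v hv x, ← hper v hv x]
  refine h _ ⟨hxv, by simpa using hf₀ x⟩ _ ⟨hxv, by simpa using hf j x⟩ ?_
  simpa [Prod.dist_eq, hδ] using hj x

lemma CompactQuotient.exists_bound [ProperSpace W] (hΛ : CompactQuotient Λ K)
    {Θ : E × W → V} (hc : Continuous Θ)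
    (hper : ∀ v ∈ Λ, ∀ x w, Θ (x + v, w) = Θ (x, w)) (B : ℝ) :
    ∃ C, 0 ≤ C ∧ ∀ x w, ‖w‖ ≤ B → ‖Θ (x, w)‖ ≤ C := by
  have hcomp : IsCompact (K ×ˢ Metric.closedBall (0 : W) B) :=
    hΛ.compact.prod (isCompact_closedBall 0 B)
  obtain ⟨C, hC⟩ := hcomp.exists_bound_of_continuousOn hc.continuousOn
  refine ⟨max C 0, le_max_right _ _, fun x w hw => ?_⟩
  obtain ⟨v, hv, hxv⟩ := hΛ.cover x
  rw [← hper v hv x]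
  exact (hC _ ⟨hxv, by simpa using hw⟩).trans (le_max_left _ _)

lemma CompactQuotient.uniformContinuous [ProperSpace E] (hΛ : CompactQuotient Λ K)
    {T : E → V} (hc : Continuous T) (hper : ∀ v ∈ Λ, ∀ x, T (x + v) = T x) :
    UniformContinuous T := by
  have hcomp : IsCompact (Metric.cthickening 1 K) := hΛ.compact.cthickening
  have huc := hcomp.uniformContinuousOn_of_continuous hc.continuousOn
  rw [Metric.uniformContinuousOn_iff] at huc
  rw [Metric.uniformContinuous_iff]
  intro ε hε
  obtain ⟨δ, hδ, h⟩ := huc ε hε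
  refine ⟨min δ 1, lt_min hδ one_pos, fun x y hxy => ?_⟩
  obtain ⟨v, hv, hxv⟩ := hΛ.cover x
  rw [← hper v hv x, ← hper v hv y]
  have hd : dist (x + v) (y + v) = dist x y := dist_add_right _ _ _
  refine h _ (Metric.self_subset_cthickening _ hxv) _
    (Metric.mem_cthickening_of_dist_le _ (x + v) _ _ hxv ?_) ?_
  · rw [dist_comm, hd]; exact (hxy.trans_le (min_le_right _ _)).le
  · rw [hd]; exact hxy.trans_le (min_le_left _ _)

end Periodic

section Iteration

variable {X V : Type} [NormedAddCommGroup V]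

/-- A bounded function which improves any of its bounds by the factor `θ < 1` vanishes. -/
lemma eq_zero_of_self_improving {f : X → V} {C θ : ℝ} (hθ0 : 0 ≤ θ) (hθ : θ < 1)
    (hC : ∀ x, ‖f x‖ ≤ C) (h : ∀ d, (∀ x, ‖f x‖ ≤ d) → ∀ x, ‖f x‖ ≤ θ * d) (x : X) :
    f x = 0 := by
  have key : ∀ j : ℕ, ∀ x, ‖f x‖ ≤ θ ^ j * C := by
    intro j
    induction j with
    | zero => simpa using hC
    | succ j ih => intro x; have := h _ ih x; rw [pow_succ]; linarith
  have hlim : Tendsto (fun j : ℕ => θ ^ j * C) atTop (𝓝 (0 * C)) :=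
    (tendsto_pow_atTop_nhds_zero_of_lt_one hθ0 hθ).mul_const C
  have := ge_of_tendsto' hlim (fun j => key j x)
  rw [zero_mul] at this
  exact norm_le_zero_iff.mp this

/-- Contraction principle for a uniformly closed set `P` of bounded functions, in a form that keeps
track of the iterates of the zero function. -/
lemma exists_fixedPoint_tendstoUniformly [CompleteSpace V] (𝒯 : (X → V) → X → V)
    (P : (X → V) → Prop) {R θ : ℝ} (hθ0 : 0 ≤ θ) (hθ : θ < 1) (h0 : P 0)
    (hP : ∀ f, P f → P (𝒯 f)) (hb : ∀ f, P f → ∀ x, ‖f x‖ ≤ R)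
    (hcontr : ∀ f f' d, P f → P f' → (∀ x, ‖f x - f' x‖ ≤ d) →
      ∀ x, ‖𝒯 f x - 𝒯 f' x‖ ≤ θ * d)
    (hlim : ∀ (F : ℕ → X → V) u, (∀ j, P (F j)) → TendstoUniformly F u atTop → P u) :
    ∃ u, P u ∧ 𝒯 u = u ∧ TendstoUniformly (fun j => 𝒯^[j] 0) u atTop ∧ ∀ j, P (𝒯^[j] 0) := by
  have hPj : ∀ j, P (𝒯^[j] 0) := by
    intro j
    induction j with
    | zero => exact h0
    | succ j ih => rw [Function.iterate_succ_apply']; exact hP _ ih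
  have hstep : ∀ j x, dist (𝒯^[j] 0 x) (𝒯^[j + 1] 0 x) ≤ R * θ ^ j := by
    intro j
    induction j with
    | zero =>
      intro x
      have := hb _ (hPj 1) x
      simpa [dist_eq_norm] using this
    | succ j ih =>
      intro x
      have := hcontr _ _ _ (hPj j) (hPj (j + 1)) (fun x => by
        have := ih x; rwa [dist_eq_norm] at this) x
      rw [dist_eq_norm, Function.iterate_succ_apply' 𝒯 j, Function.iterate_succ_apply' 𝒯 (j + 1)]
      rw [pow_succ]; linarith
  choose u hu using fun x => cauchySeq_tendsto_of_complete
    (cauchySeq_of_le_geometric θ R hθ (fun j => hstep j x))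
  have hunif : TendstoUniformly (fun j => 𝒯^[j] 0) u atTop := by
    rw [Metric.tendstoUniformly_iff]
    intro ε hε
    have hl : Tendsto (fun j : ℕ => R * θ ^ j / (1 - θ)) atTop (𝓝 (R * 0 / (1 - θ))) :=
      ((tendsto_pow_atTop_nhds_zero_of_lt_one hθ0 hθ).const_mul R).div_const _
    rw [mul_zero, zero_div] at hl
    filter_upwards [hl.eventually_lt_const hε] with j hj x
    rw [dist_comm]
    exact (dist_le_of_le_geometric_of_tendsto θ R hθ (fun j => hstep j x) (hu x) j).trans_lt hj
  have hPu := hlim _ _ hPj hunif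
  refine ⟨u, hPu, ?_, hunif, hPj⟩
  funext x
  refine tendsto_nhds_unique ?_ ((tendsto_add_atTop_iff_nat 1).mpr (hu x))
  rw [Metric.tendsto_nhds]
  intro ε hε
  filter_upwards [(Metric.tendstoUniformly_iff.mp hunif) ε hε] with j hj
  have := hcontr _ _ ε (hPj j) hPu (fun x => by
    have := (hj x).le; rwa [dist_comm, dist_eq_norm] at this) x
  rw [Function.iterate_succ_apply', dist_eq_norm]
  nlinarith

/-- A perturbed geometric recursion with perturbation tending to zero tends to zero. -/
lemma tendsto_zero_of_recursion {e ω : ℕ → ℝ} {θ : ℝ} (hθ0 : 0 ≤ θ) (hθ : θ < 1)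
    (he : ∀ j, 0 ≤ e j) (hrec : ∀ j, e (j + 1) ≤ θ * e j + ω j) (hω : Tendsto ω atTop (𝓝 0)) :
    Tendsto e atTop (𝓝 0) := by
  rw [Metric.tendsto_atTop]
  intro ε hε
  have h1 : 0 < 1 - θ := by linarith
  obtain ⟨N, hN⟩ := (Metric.tendsto_atTop.mp hω) ((1 - θ) * (ε / 2)) (by positivity)
  have key : ∀ i, e (N + i) ≤ θ ^ i * e N + ε / 2 := by
    intro i
    induction i with
    | zero => simp; linarith
    | succ i ih =>
      have h2 := hrec (N + i)
      have h3 := hN (N + i) (by omega)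
      rw [Real.dist_eq, sub_zero] at h3
      have h4 := (abs_lt.mp h3).2
      rw [← add_assoc, pow_succ]
      nlinarith
  have hl : Tendsto (fun i : ℕ => θ ^ i * e N) atTop (𝓝 (0 * e N)) :=
    (tendsto_pow_atTop_nhds_zero_of_lt_one hθ0 hθ).mul_const _
  rw [zero_mul] at hl
  obtain ⟨I, hI⟩ := eventually_atTop.mp (hl.eventually_lt_const (half_pos hε))
  refine ⟨N + I, fun j hj => ?_⟩
  obtain ⟨i, rfl⟩ : ∃ i, j = N + i := ⟨j - N, by omega⟩
  have := key i
  have := hI i (by omega)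
  rw [Real.dist_eq, sub_zero, abs_of_nonneg (he _)]
  linarith

end Iteration

/-! ### The functional equation for invariant graphs -/

section MeanValue

variable {X V : Type} [NormedAddCommGroup X] [NormedSpace ℝ X]
  [NormedAddCommGroup V] [NormedSpace ℝ V]

/-- Mean value inequality in a fixed direction. -/
lemma norm_sub_le_of_directional_bound {f : X → V} (hf : Differentiable ℝ f) {S : Set X}
    (hS : Convex ℝ S) {C : ℝ} {x y : X} (hx : x ∈ S) (hy : y ∈ S)
    (h : ∀ z ∈ S, ‖fderiv ℝ f z (y - x)‖ ≤ C) : ‖f y - f x‖ ≤ C := by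
  have hd : ∀ t : ℝ, HasDerivAt (fun t : ℝ => f (x + t • (y - x)))
      (fderiv ℝ f (x + t • (y - x)) (y - x)) t := by
    intro t
    have h1 : HasDerivAt (fun t : ℝ => x + t • (y - x)) (y - x) t := by
      simpa using ((hasDerivAt_id t).smul_const (y - x)).const_add x
    exact (hf _).hasFDerivAt.comp_hasDerivAt t h1
  have := norm_image_sub_le_of_norm_deriv_le_segment_01'
    (fun t _ => (hd t).hasDerivWithinAt) (C := C) (fun t ht => h _ (by
      have := hS.add_smul_sub_mem hx hy (t := t) ⟨ht.1, ht.2.le⟩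
      exact this))
  simpa using this

end MeanValue

section System

variable {E V : Type} [NormedAddCommGroup E] [NormedSpace ℝ E]
  [NormedAddCommGroup V] [NormedSpace ℝ V]

/-- Derivative of `x ↦ Φ (x, u x, u (p (x, u x)))` in terms of `D = DΦ`, `P = Dp`, `z = Du (x)` and
`z' = Du (p (x, u x))`. -/
noncomputable def slopeMap (D : E × V × V →L[ℝ] V) (P : E × V →L[ℝ] E) (z z' : E →L[ℝ] V) :
    E →L[ℝ] V :=
  D ∘L ((ContinuousLinearMap.id ℝ E).prod
    (z.prod (z' ∘L (P ∘L ((ContinuousLinearMap.id ℝ E).prod z)))))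

@[simp] lemma slopeMap_apply (D : E × V × V →L[ℝ] V) (P : E × V →L[ℝ] E) (z z' : E →L[ℝ] V)
    (h : E) : slopeMap D P z z' h = D (h, z h, z' (P (h, z h))) := rfl

lemma norm_slopeMap_le {D : E × V × V →L[ℝ] V} {P : E × V →L[ℝ] E} {z z' : E →L[ℝ] V}
    {e a b ℓ s M : ℝ} (ha : 0 ≤ a) (hb : 0 ≤ b) (he : 0 ≤ e) (hℓ : 0 ≤ ℓ) (hs : 0 ≤ s)
    (hD : ∀ dx dy dy', ‖D (dx, dy, dy')‖ ≤ e * ‖dx‖ + a * ‖dy‖ + b * ‖dy'‖)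
    (hP : ∀ dx dy, ‖P (dx, dy)‖ ≤ ℓ * ‖dx‖ + s * ‖dy‖) (hz : ‖z‖ ≤ M) (hz' : ‖z'‖ ≤ M) :
    ‖slopeMap D P z z'‖ ≤ e + a * M + b * M * (ℓ + s * M) := by
  have hM : 0 ≤ M := (norm_nonneg _).trans hz
  refine ContinuousLinearMap.opNorm_le_bound _ (by positivity) fun h => ?_
  rw [slopeMap_apply]
  have h1 : ‖z h‖ ≤ M * ‖h‖ := z.le_of_opNorm_le hz h
  have h2 : ‖P (h, z h)‖ ≤ (ℓ + s * M) * ‖h‖ := by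
    calc _ ≤ ℓ * ‖h‖ + s * ‖z h‖ := hP _ _
      _ ≤ ℓ * ‖h‖ + s * (M * ‖h‖) := by gcongr
      _ = _ := by ring
  have h3 : ‖z' (P (h, z h))‖ ≤ M * ((ℓ + s * M) * ‖h‖) :=
    (z'.le_of_opNorm_le hz' _).trans (by gcongr)
  calc _ ≤ e * ‖h‖ + a * ‖z h‖ + b * ‖z' (P (h, z h))‖ := hD _ _ _
    _ ≤ e * ‖h‖ + a * (M * ‖h‖) + b * (M * ((ℓ + s * M) * ‖h‖)) := by gcongr
    _ = _ := by ring

lemma norm_slopeMap_sub_le {D : E × V × V →L[ℝ] V} {P : E × V →L[ℝ] E}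
    {z z' z₂ z₂' : E →L[ℝ] V}
    {e a b ℓ s M d d' : ℝ} (ha : 0 ≤ a) (hb : 0 ≤ b) (hℓ : 0 ≤ ℓ) (hs : 0 ≤ s)
    (hD : ∀ dx dy dy', ‖D (dx, dy, dy')‖ ≤ e * ‖dx‖ + a * ‖dy‖ + b * ‖dy'‖)
    (hP : ∀ dx dy, ‖P (dx, dy)‖ ≤ ℓ * ‖dx‖ + s * ‖dy‖) (hz : ‖z‖ ≤ M) (hz₂' : ‖z₂'‖ ≤ M)
    (hd : ‖z - z₂‖ ≤ d) (hd' : ‖z' - z₂'‖ ≤ d') :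
    ‖slopeMap D P z z' - slopeMap D P z₂ z₂'‖ ≤
      (a + b * M * s) * d + b * (ℓ + s * M) * d' := by
  have hM : 0 ≤ M := (norm_nonneg _).trans hz
  have hd0 : 0 ≤ d := (norm_nonneg _).trans hd
  have hd0' : 0 ≤ d' := (norm_nonneg _).trans hd'
  refine ContinuousLinearMap.opNorm_le_bound _ (by positivity) fun h => ?_
  have hz1 : ‖z h‖ ≤ M * ‖h‖ := z.le_of_opNorm_le hz h
  have h1 : ‖(z - z₂) h‖ ≤ d * ‖h‖ := (z - z₂).le_of_opNorm_le hd h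
  have h2 : ‖P (h, z h)‖ ≤ (ℓ + s * M) * ‖h‖ := by
    calc _ ≤ ℓ * ‖h‖ + s * ‖z h‖ := hP _ _
      _ ≤ ℓ * ‖h‖ + s * (M * ‖h‖) := by gcongr
      _ = _ := by ring
  have h3 : ‖(z' - z₂') (P (h, z h))‖ ≤ d' * ((ℓ + s * M) * ‖h‖) :=
    ((z' - z₂').le_of_opNorm_le hd' _).trans (by gcongr)
  have h4 : ‖P (0, (z - z₂) h)‖ ≤ s * (d * ‖h‖) := by
    calc _ ≤ ℓ * ‖(0 : E)‖ + s * ‖(z - z₂) h‖ := hP _ _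
      _ ≤ _ := by rw [norm_zero, mul_zero, zero_add]; gcongr
  have h5 : ‖z₂' (P (0, (z - z₂) h))‖ ≤ M * (s * (d * ‖h‖)) :=
    (z₂'.le_of_opNorm_le hz₂' _).trans (by gcongr)
  have h6 : (slopeMap D P z z' - slopeMap D P z₂ z₂') h
      = D (0, (z - z₂) h, (z' - z₂') (P (h, z h)) + z₂' (P (0, (z - z₂) h))) := by
    have e1 : P (0, (z - z₂) h) = P (h, z h) - P (h, z₂ h) := by
      rw [← map_sub]; simp
    rw [e1, map_sub z₂', sub_apply, slopeMap_apply, slopeMap_apply, ← map_sub D, sub_apply, sub_apply,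
      Prod.mk_sub_mk, Prod.mk_sub_mk, sub_self]
    congr 3
    abel
  rw [h6]
  calc _ ≤ e * ‖(0 : E)‖ + a * ‖(z - z₂) h‖
        + b * ‖(z' - z₂') (P (h, z h)) + z₂' (P (0, (z - z₂) h))‖ := hD _ _ _
    _ ≤ e * ‖(0 : E)‖ + a * (d * ‖h‖) + b * (d' * ((ℓ + s * M) * ‖h‖) + M * (s * (d * ‖h‖))) := by
      gcongr
      exact (norm_add_le _ _).trans (add_le_add h3 h5)
    _ = _ := by rw [norm_zero]; ring

/-- Hypotheses on the functional equation `u x = Φ (x, u x, u (p (x, u x)))` for a `Λ`-periodic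
function `u : E → V` with `‖u‖ ≤ R` and `‖Du‖ ≤ M`. The numbers `e, a, b` bound the partial
derivatives of `Φ`, and `ℓ, s` those of `p`. By `lip` the set of such functions is
mapped to itself, and `gap` says that the fibre contraction `b` beats the `r`-th power of the
expansion `ℓ + s M` of the base map `x ↦ p (x, u x)`. -/
structure IsSystem (Λ : Set E) (r : ℕ) (Φ : E × V × V → V) (p : E × V → E)
    (R M e a b ℓ s : ℝ) : Prop where
  contDiff_Φ : ContDiff ℝ r Φ
  contDiff_p : ContDiff ℝ r p
  per_Φ : ∀ v ∈ Λ, ∀ x y y', Φ (x + v, y, y') = Φ (x, y, y')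
  per_p : ∀ v ∈ Λ, ∀ x y, p (x + v, y) = p (x, y) + v
  norm_Φ : ∀ x y y', ‖y‖ ≤ R → ‖y'‖ ≤ R → ‖Φ (x, y, y')‖ ≤ R
  deriv_Φ : ∀ x y y', ‖y‖ ≤ R → ‖y'‖ ≤ R → ∀ dx dy dy',
    ‖fderiv ℝ Φ (x, y, y') (dx, dy, dy')‖ ≤ e * ‖dx‖ + a * ‖dy‖ + b * ‖dy'‖
  deriv_p : ∀ x y, ‖y‖ ≤ R → ∀ dx dy, ‖fderiv ℝ p (x, y) (dx, dy)‖ ≤ ℓ * ‖dx‖ + s * ‖dy‖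
  R_nonneg : 0 ≤ R
  M_nonneg : 0 ≤ M
  e_nonneg : 0 ≤ e
  a_nonneg : 0 ≤ a
  b_nonneg : 0 ≤ b
  s_nonneg : 0 ≤ s
  one_le : 1 ≤ ℓ
  lip : e + a * M + b * M * (ℓ + s * M) ≤ M
  gap : a + b * M * s + b * (ℓ + s * M) ^ r < 1

namespace IsSystem

variable {Λ K : Set E} {r : ℕ} {Φ : E × V × V → V} {p : E × V → E} {R M e a b ℓ s : ℝ}

lemma one_le_base (h : IsSystem Λ r Φ p R M e a b ℓ s) : 1 ≤ ℓ + s * M := by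
  have := h.one_le
  have := mul_nonneg h.s_nonneg h.M_nonneg
  linarith

lemma mono {k : ℕ} (h : IsSystem Λ r Φ p R M e a b ℓ s) (hk : k ≤ r) :
    IsSystem Λ k Φ p R M e a b ℓ s :=
  { h with
    contDiff_Φ := h.contDiff_Φ.of_le (by exact_mod_cast hk)
    contDiff_p := h.contDiff_p.of_le (by exact_mod_cast hk)
    gap := by
      have h1 := pow_le_pow_right₀ h.one_le_base hk
      have h2 := mul_le_mul_of_nonneg_left h1 h.b_nonneg
      linarith [h.gap] }

lemma gap_one (h : IsSystem Λ r Φ p R M e a b ℓ s) (hr : 1 ≤ r) :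
    a + b * M * s + b * (ℓ + s * M) < 1 := by
  simpa using (h.mono hr).gap

lemma lipschitz_Φ (h : IsSystem Λ r Φ p R M e a b ℓ s) (hr : 1 ≤ r) {x x₂ : E} {y y' y₂ y₂' : V}
    (hy : ‖y‖ ≤ R) (hy' : ‖y'‖ ≤ R) (hy₂ : ‖y₂‖ ≤ R) (hy₂' : ‖y₂'‖ ≤ R) :
    ‖Φ (x, y, y') - Φ (x₂, y₂, y₂')‖ ≤ e * ‖x - x₂‖ + a * ‖y - y₂‖ + b * ‖y' - y₂'‖ := by
  refine norm_sub_le_of_directional_bound (S := univ ×ˢ Metric.closedBall 0 R ×ˢ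
    Metric.closedBall 0 R) (h.contDiff_Φ.differentiable (by
      exact_mod_cast (by omega : r ≠ 0))) (convex_univ.prod
      ((convex_closedBall _ _).prod (convex_closedBall _ _))) (by simp [*]) (by simp [*]) ?_
  rintro ⟨ξ, ζ, ζ'⟩ ⟨-, h1, h2⟩
  exact h.deriv_Φ _ _ _ (by simpa using h1) (by simpa using h2) _ _ _

lemma lipschitz_p (h : IsSystem Λ r Φ p R M e a b ℓ s) (hr : 1 ≤ r) {x x₂ : E} {y y₂ : V}
    (hy : ‖y‖ ≤ R) (hy₂ : ‖y₂‖ ≤ R) :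
    ‖p (x, y) - p (x₂, y₂)‖ ≤ ℓ * ‖x - x₂‖ + s * ‖y - y₂‖ := by
  refine norm_sub_le_of_directional_bound (S := univ ×ˢ Metric.closedBall 0 R)
    (h.contDiff_p.differentiable (by
      exact_mod_cast (by omega : r ≠ 0))) (convex_univ.prod
      (convex_closedBall _ _)) (by simp [*]) (by simp [*]) ?_
  rintro ⟨ξ, ζ⟩ ⟨-, h1⟩
  exact h.deriv_p _ _ (by simpa using h1) _ _

/-- The functional equation contracts the distance of two functions bounded by `R`, as soon as one
of them is `M`-Lipschitz. -/
lemma contraction (h : IsSystem Λ r Φ p R M e a b ℓ s) (hr : 1 ≤ r) {u v : E → V}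
    (hu : ∀ x, ‖u x‖ ≤ R) (hv : ∀ x, ‖v x‖ ≤ R) (hL : ∀ x x', ‖v x - v x'‖ ≤ M * ‖x - x'‖)
    {d : ℝ} (hd : ∀ x, ‖u x - v x‖ ≤ d) (x : E) :
    ‖Φ (x, u x, u (p (x, u x))) - Φ (x, v x, v (p (x, v x)))‖
      ≤ (a + b * M * s + b * (ℓ + s * M)) * d := by
  have hd0 : 0 ≤ d := (norm_nonneg _).trans (hd x)
  have h1 := h.lipschitz_p hr (x := x) (x₂ := x) (hu x) (hv x)
  rw [sub_self, norm_zero, mul_zero, zero_add] at h1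
  have h2 : ‖u (p (x, u x)) - v (p (x, v x))‖ ≤ d + M * (s * d) := by
    calc _ = ‖(u (p (x, u x)) - v (p (x, u x))) + (v (p (x, u x)) - v (p (x, v x)))‖ := by
          congr 1; abel
      _ ≤ d + M * (s * d) := by
          refine (norm_add_le _ _).trans (add_le_add (hd _) ((hL _ _).trans ?_))
          have := h.M_nonneg
          have := h.s_nonneg
          gcongr
          exact h1.trans (by gcongr; exact hd x)
  have h3 := h.lipschitz_Φ hr (x := x) (x₂ := x) (hu x) (hu (p (x, u x))) (hv x) (hv (p (x, v x)))
  rw [sub_self, norm_zero, mul_zero, zero_add] at h3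
  have := h.a_nonneg
  have hb := h.b_nonneg
  calc _ ≤ _ := h3
    _ ≤ a * d + b * (d + M * (s * d)) := by gcongr; exact hd x
    _ ≤ _ := by
      have : b * 1 * d ≤ b * (ℓ + s * M) * d := by gcongr; exact h.one_le_base
      nlinarith

lemma unique (h : IsSystem Λ r Φ p R M e a b ℓ s) (hr : 1 ≤ r) {u v : E → V}
    (hu : ∀ x, ‖u x‖ ≤ R) (hv : ∀ x, ‖v x‖ ≤ R) (hL : ∀ x x', ‖v x - v x'‖ ≤ M * ‖x - x'‖)
    (heu : ∀ x, u x = Φ (x, u x, u (p (x, u x)))) (hev : ∀ x, v x = Φ (x, v x, v (p (x, v x)))) :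
    u = v := by
  have hθ := h.gap_one hr
  have hθ0 : 0 ≤ a + b * M * s + b * (ℓ + s * M) := by
    have := h.a_nonneg
    have := h.b_nonneg
    have := h.M_nonneg
    have := h.s_nonneg
    have := h.one_le_base
    positivity
  funext x
  have := eq_zero_of_self_improving (f := fun x => u x - v x) hθ0 hθ (C := R + R)
    (fun x => (norm_sub_le _ _).trans (add_le_add (hu x) (hv x)))
    (fun d hd x => by
      have := h.contraction hr hu hv hL hd x
      rwa [← heu x, ← hev x] at this) x
  exact sub_eq_zero.mp this

end IsSystem
end System

/-! ### Existence of a solution of class `C¹` -/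

section Existence

variable {E V : Type} [NormedAddCommGroup E] [NormedSpace ℝ E]
  [NormedAddCommGroup V] [NormedSpace ℝ V]

lemma ContDiff.slopeMap {X : Type} [NormedAddCommGroup X] [NormedSpace ℝ X] {n : WithTop ℕ∞}
    {D : X → E × V × V →L[ℝ] V} {P : X → E × V →L[ℝ] E} {z z' : X → E →L[ℝ] V}
    (hD : ContDiff ℝ n D) (hP : ContDiff ℝ n P) (hz : ContDiff ℝ n z) (hz' : ContDiff ℝ n z') :
    ContDiff ℝ n (fun x => slopeMap (D x) (P x) (z x) (z' x)) := by
  have hpair : ContDiff ℝ n (fun x => (ContinuousLinearMap.id ℝ E).prod (z x)) := by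
    have : (fun x => (ContinuousLinearMap.id ℝ E).prod (z x)) = fun x =>
        ContinuousLinearMap.inl ℝ E V + (ContinuousLinearMap.inr ℝ E V) ∘L (z x) := by
      funext x; ext h <;> simp
    rw [this]
    exact contDiff_const.add (contDiff_const.clm_comp hz)
  have hzz : ContDiff ℝ n (fun x => z' x ∘L (P x ∘L (ContinuousLinearMap.id ℝ E).prod (z x))) :=
    hz'.clm_comp (hP.clm_comp hpair)
  have : (fun x => _root_.slopeMap (D x) (P x) (z x) (z' x)) = fun x => D x ∘L
      (ContinuousLinearMap.inl ℝ E (V × V)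
        + (ContinuousLinearMap.inr ℝ E (V × V) ∘L ContinuousLinearMap.inl ℝ V V) ∘L (z x)
        + (ContinuousLinearMap.inr ℝ E (V × V) ∘L ContinuousLinearMap.inr ℝ V V) ∘L
          (z' x ∘L (P x ∘L (ContinuousLinearMap.id ℝ E).prod (z x)))) := by
    funext x; ext h
    simp only [slopeMap_apply, ContinuousLinearMap.comp_apply, add_apply]
    congr 1
    simp
  rw [this]
  exact hD.clm_comp ((contDiff_const.add (contDiff_const.clm_comp hz)).add
    (contDiff_const.clm_comp hzz))

namespace IsSystem

variable {Λ K : Set E} {r : ℕ} {Φ : E × V × V → V} {p : E × V → E} {R M e a b ℓ s : ℝ}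

lemma fderiv_Φ_periodic (h : IsSystem Λ r Φ p R M e a b ℓ s) {v : E} (hv : v ∈ Λ) (x : E)
    (y y' : V) : fderiv ℝ Φ (x + v, y, y') = fderiv ℝ Φ (x, y, y') := by
  have h1 := fderiv_comp_add_right (𝕜 := ℝ) (f := Φ) (x := (x, y, y')) (v, (0 : V), (0 : V))
  have h2 : (fun q => Φ (q + (v, (0 : V), (0 : V)))) = Φ := by
    funext ⟨x, y, y'⟩
    simpa using h.per_Φ v hv x y y'
  rw [h2] at h1
  simpa using h1.symm

lemma fderiv_p_periodic (h : IsSystem Λ r Φ p R M e a b ℓ s) {v : E} (hv : v ∈ Λ) (x : E)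
    (y : V) : fderiv ℝ p (x + v, y) = fderiv ℝ p (x, y) := by
  have h1 := fderiv_comp_add_right (𝕜 := ℝ) (f := p) (x := (x, y)) (v, (0 : V))
  have h2 : (fun q => p (q + (v, (0 : V)))) = fun q => p q + v := by
    funext ⟨x, y⟩
    simpa using h.per_p v hv x y
  rw [h2, fderiv_add_const] at h1
  simpa using h1.symm

lemma hasFDerivAt_comp (h : IsSystem Λ r Φ p R M e a b ℓ s) (hr : 1 ≤ r) {u : E → V}
    (hu : Differentiable ℝ u) (x : E) :
    HasFDerivAt (fun x => Φ (x, u x, u (p (x, u x))))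
      (slopeMap (fderiv ℝ Φ (x, u x, u (p (x, u x)))) (fderiv ℝ p (x, u x))
        (fderiv ℝ u x) (fderiv ℝ u (p (x, u x)))) x := by
  have hΦ := h.contDiff_Φ.differentiable (by exact_mod_cast (by omega : r ≠ 0))
  have hp := h.contDiff_p.differentiable (by exact_mod_cast (by omega : r ≠ 0))
  have h1 : HasFDerivAt (fun x => (x, u x)) ((ContinuousLinearMap.id ℝ E).prod (fderiv ℝ u x)) x :=
    (hasFDerivAt_id x).prodMk (hu x).hasFDerivAt
  have h2 := (hp (x, u x)).hasFDerivAt.comp x h1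
  have h3 := (hu (p (x, u x))).hasFDerivAt.comp x h2
  exact (hΦ (x, u x, u (p (x, u x)))).hasFDerivAt.comp x
    ((hasFDerivAt_id x).prodMk ((hu x).hasFDerivAt.prodMk h3))

/-- Regularity `C¹`: the iterates of the zero function and their derivatives converge uniformly. The
limit of the derivatives is identified in advance, as the fixed point of the linearised equation
along the limit solution. -/
theorem exists_solution_one [FiniteDimensional ℝ E] [FiniteDimensional ℝ V]
    (hΛ : CompactQuotient Λ K) (h : IsSystem Λ 1 Φ p R M e a b ℓ s) :
    ∃ u : E → V, ContDiff ℝ 1 u ∧ (∀ v ∈ Λ, ∀ x, u (x + v) = u x) ∧ (∀ x, ‖u x‖ ≤ R) ∧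
      (∀ x, ‖fderiv ℝ u x‖ ≤ M) ∧ ∀ x, u x = Φ (x, u x, u (p (x, u x))) := by
  have hpE : ProperSpace E := FiniteDimensional.proper ℝ E
  have hpV : ProperSpace V := FiniteDimensional.proper ℝ V
  have hpL : ProperSpace (E →L[ℝ] V) := FiniteDimensional.proper ℝ _
  have ha := h.a_nonneg
  have hb := h.b_nonneg
  have hM := h.M_nonneg
  have hs := h.s_nonneg
  have he := h.e_nonneg
  have hℓ : 0 ≤ ℓ := zero_le_one.trans h.one_le
  have hℓM := h.one_le_base
  have hθ := h.gap_one le_rfl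
  have hθ0 : 0 ≤ a + b * M * s + b * (ℓ + s * M) := by positivity
  set θ := a + b * M * s + b * (ℓ + s * M) with hθdef
  -- the uniform limit of the iterates
  obtain ⟨u, ⟨huper, huR, huL⟩, hfix, hunif, hPj⟩ := exists_fixedPoint_tendstoUniformly
    (fun (f : E → V) x => Φ (x, f x, f (p (x, f x))))
    (fun f => (∀ v ∈ Λ, ∀ x, f (x + v) = f x) ∧ (∀ x, ‖f x‖ ≤ R) ∧
      ∀ x x', ‖f x - f x'‖ ≤ M * ‖x - x'‖) (R := R) hθ0 hθ
    (by
      refine ⟨by simp, by simpa using h.R_nonneg, fun x x' => ?_⟩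
      simp only [Pi.zero_apply, sub_self, norm_zero]
      positivity)
    (by
      rintro f ⟨h1, h2, h3⟩
      refine ⟨fun v hv x => ?_, fun x => h.norm_Φ _ _ _ (h2 _) (h2 _), fun x x' => ?_⟩
      · simp only [h1 v hv, h.per_p v hv, h.per_Φ v hv]
      · have e1 := h.lipschitz_p le_rfl (x := x) (x₂ := x') (h2 x) (h2 x')
        have e2 := h.lipschitz_Φ le_rfl (x := x) (x₂ := x') (h2 x) (h2 (p (x, f x))) (h2 x')
          (h2 (p (x', f x')))
        calc _ ≤ _ := e2
          _ ≤ e * ‖x - x'‖ + a * (M * ‖x - x'‖)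
              + b * (M * (ℓ * ‖x - x'‖ + s * (M * ‖x - x'‖))) := by
            gcongr
            · exact h3 _ _
            · refine (h3 _ _).trans ?_
              gcongr
              refine e1.trans ?_
              gcongr
              exact h3 _ _
          _ = (e + a * M + b * M * (ℓ + s * M)) * ‖x - x'‖ := by ring
          _ ≤ M * ‖x - x'‖ := by gcongr; exact h.lip)
    (fun f hf => hf.2.1)
    (fun f f' d hf hf' hd x => h.contraction le_rfl hf.2.1 hf'.2.1 hf'.2.2 hd x)
    (by
      intro F u hF hu
      have ht := fun x => hu.tendsto_at x
      refine ⟨fun v hv x => ?_, fun x => ?_, fun x x' => ?_⟩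
      · refine tendsto_nhds_unique (ht (x + v)) ?_
        simpa only [(hF _).1 v hv] using ht x
      · exact le_of_tendsto' (ht x).norm fun j => (hF j).2.1 x
      · exact le_of_tendsto' ((ht x).sub (ht x')).norm fun j => (hF j).2.2 x x')
  set 𝒯 : (E → V) → E → V := fun f x => Φ (x, f x, f (p (x, f x))) with h𝒯
  have heq : ∀ x, u x = Φ (x, u x, u (p (x, u x))) := fun x => (congrFun hfix x).symm
  set U : ℕ → E → V := fun j => 𝒯^[j] 0 with hU
  have hUsucc : ∀ j, U (j + 1) = fun x => Φ (x, U j x, U j (p (x, U j x))) := by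
    intro j
    simp only [hU, Function.iterate_succ_apply', h𝒯]
  have hUC : ∀ j, ContDiff ℝ 1 (U j) := by
    intro j
    induction j with
    | zero => exact contDiff_const
    | succ j ih =>
      rw [hUsucc]
      have hΦ : ContDiff ℝ 1 Φ := by simpa using h.contDiff_Φ
      have hp : ContDiff ℝ 1 p := by simpa using h.contDiff_p
      exact hΦ.comp (contDiff_id.prodMk (ih.prodMk (ih.comp (hp.comp (contDiff_id.prodMk ih)))))
  have hUd : ∀ j, Differentiable ℝ (U j) := fun j => (hUC j).differentiable one_ne_zero
  have hZM : ∀ j x, ‖fderiv ℝ (U j) x‖ ≤ M := fun j x =>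
    norm_fderiv_le_of_lip' ℝ hM (Eventually.of_forall fun x' => (hPj j).2.2 x' x)
  have hZsucc : ∀ j x, fderiv ℝ (U (j + 1)) x =
      slopeMap (fderiv ℝ Φ (x, U j x, U j (p (x, U j x)))) (fderiv ℝ p (x, U j x))
        (fderiv ℝ (U j) x) (fderiv ℝ (U j) (p (x, U j x))) := by
    intro j x
    rw [hUsucc]
    exact (h.hasFDerivAt_comp le_rfl (hUd j) x).fderiv
  -- continuity of the linearised equation in all its arguments
  have hcΦ : Continuous (fderiv ℝ Φ) := h.contDiff_Φ.continuous_fderiv (by simp)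
  have hcp : Continuous (fderiv ℝ p) := h.contDiff_p.continuous_fderiv (by simp)
  have hslope : ∀ {X : Type} [NormedAddCommGroup X] [NormedSpace ℝ X]
      {D : X → E × V × V →L[ℝ] V} {P : X → E × V →L[ℝ] E} {z z' : X → E →L[ℝ] V},
      Continuous D → Continuous P → Continuous z → Continuous z' →
      Continuous (fun x => slopeMap (D x) (P x) (z x) (z' x)) := by
    intro X _ _ D P z z' h1 h2 h3 h4
    rw [← contDiff_zero (𝕜 := ℝ)] at h1 h2 h3 h4 ⊢
    exact h1.slopeMap h2 h3 h4
  have huc : Continuous u :=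
    (LipschitzWith.of_dist_le_mul (K := ⟨M, hM⟩) fun x y => by
      rw [dist_eq_norm, dist_eq_norm]; exact huL x y).continuous
  have hpc : Continuous p := h.contDiff_p.continuous
  have hgc : Continuous (fun x => p (x, u x)) := by fun_prop
  -- the derivative of the limit
  obtain ⟨T, ⟨hTc, hTper, hTM⟩, hTfix, -, -⟩ := exists_fixedPoint_tendstoUniformly
    (fun (S : E → E →L[ℝ] V) x => slopeMap (fderiv ℝ Φ (x, u x, u (p (x, u x))))
      (fderiv ℝ p (x, u x)) (S x) (S (p (x, u x))))
    (fun S => Continuous S ∧ (∀ v ∈ Λ, ∀ x, S (x + v) = S x) ∧ (∀ x, ‖S x‖ ≤ M))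
    (R := M) hθ0 hθ
    ⟨continuous_const, by simp, by simpa using hM⟩
    (by
      rintro S ⟨h1, h2, h3⟩
      refine ⟨?_, fun v hv x => ?_, fun x => ?_⟩
      · exact hslope (hcΦ.comp (by fun_prop)) (hcp.comp (by fun_prop)) h1 (h1.comp hgc)
      · simp only [huper v hv, h.per_p v hv, h.fderiv_Φ_periodic hv, h.fderiv_p_periodic hv,
          h2 v hv]
      · exact (norm_slopeMap_le ha hb he hℓ hs (h.deriv_Φ _ _ _ (huR _) (huR _))
          (h.deriv_p _ _ (huR _)) (h3 _) (h3 _)).trans h.lip)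
    (fun S hS => hS.2.2)
    (fun S S' d hS hS' hd x => by
      refine (norm_slopeMap_sub_le ha hb hℓ hs (h.deriv_Φ _ _ _ (huR _) (huR _))
          (h.deriv_p _ _ (huR _)) (hS.2.2 _) (hS'.2.2 _) (hd _) (hd _)).trans (le_of_eq ?_)
      rw [hθdef]; ring)
    (by
      intro F T hF hT
      have ht := fun x => hT.tendsto_at x
      refine ⟨hT.continuous (Frequently.of_forall fun j => (hF j).1), fun v hv x => ?_, fun x => ?_⟩
      · refine tendsto_nhds_unique (ht (x + v)) ?_
        simpa only [(hF _).2.1 v hv] using ht x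
      · exact le_of_tendsto' (ht x).norm fun j => (hF j).2.2 x)
  have hgU : TendstoUniformly (fun j x => p (x, U j x)) (fun x => p (x, u x)) atTop := by
    rw [Metric.tendstoUniformly_iff] at hunif ⊢
    intro ε hε
    filter_upwards [hunif (ε / (1 + s)) (by positivity)] with j hj x
    have h1 := h.lipschitz_p le_rfl (x := x) (x₂ := x) (huR x) ((hPj j).2.1 x)
    rw [sub_self, norm_zero, mul_zero, zero_add] at h1
    have h2 := hj x
    rw [dist_eq_norm] at h2 ⊢
    rw [lt_div_iff₀ (by positivity)] at h2
    have h3 : 0 ≤ ‖u x - 𝒯^[j] 0 x‖ := norm_nonneg _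
    by_cases h4 : ‖u x - 𝒯^[j] 0 x‖ = 0
    · have h5 : ‖u x - U j x‖ = 0 := h4
      rw [h5, mul_zero] at h1
      linarith
    · have h5 : ‖p (x, u x) - p (x, U j x)‖ ≤ s * ‖u x - 𝒯^[j] 0 x‖ := h1
      have h6 : 0 < ‖u x - 𝒯^[j] 0 x‖ := lt_of_le_of_ne h3 (Ne.symm h4)
      nlinarith
  have hUg : TendstoUniformly (fun j x => U j (p (x, U j x))) (fun x => u (p (x, u x))) atTop := by
    have hA : UniformContinuous u := hΛ.uniformContinuous huc huper
    have h1 := hA.comp_tendstoUniformly hgU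
    rw [Metric.tendstoUniformly_iff] at h1 hunif ⊢
    intro ε hε
    filter_upwards [h1 (ε / 2) (half_pos hε), hunif (ε / 2) (half_pos hε)] with j h2 h3 x
    calc _ ≤ dist (u (p (x, u x))) (u (p (x, U j x)))
          + dist (u (p (x, U j x))) (U j (p (x, U j x))) := dist_triangle _ _ _
      _ < ε / 2 + ε / 2 := add_lt_add (h2 x) (h3 _)
      _ = ε := add_halves ε
  have hTg : TendstoUniformly (fun j x => T (p (x, U j x))) (fun x => T (p (x, u x))) atTop :=
    (hΛ.uniformContinuous hTc hTper).comp_tendstoUniformly hgU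
  have hTT : TendstoUniformly (fun (_ : ℕ) x => T x) T atTop := by
    rw [Metric.tendstoUniformly_iff]
    intro ε hε
    exact Eventually.of_forall fun j x => by rwa [dist_self]
  have hA : TendstoUniformly (fun j x =>
      slopeMap (fderiv ℝ Φ (x, U j x, U j (p (x, U j x)))) (fderiv ℝ p (x, U j x))
        (T x) (T (p (x, U j x)))) T atTop := by
    have hmain := hΛ.tendstoUniformly_comp (W := V × V × (E →L[ℝ] V) × (E →L[ℝ] V))
      (Θ := fun q => slopeMap (fderiv ℝ Φ (q.1, q.2.1, q.2.2.1)) (fderiv ℝ p (q.1, q.2.1))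
        q.2.2.2.1 q.2.2.2.2)
      (hslope (hcΦ.comp (by fun_prop)) (hcp.comp (by fun_prop)) (by fun_prop) (by fun_prop))
      (fun v hv x w => by simp only [h.fderiv_Φ_periodic hv, h.fderiv_p_periodic hv])
      (f := fun j x => (U j x, U j (p (x, U j x)), T x, T (p (x, U j x))))
      (f₀ := fun x => (u x, u (p (x, u x)), T x, T (p (x, u x)))) (B := max R M)
      (fun j x => by
        simp only [Prod.norm_def, sup_le_iff]
        exact ⟨((hPj j).2.1 _).trans (le_max_left _ _), ((hPj j).2.1 _).trans (le_max_left _ _),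
          (hTM _).trans (le_max_right _ _), (hTM _).trans (le_max_right _ _)⟩)
      (fun x => by
        simp only [Prod.norm_def, sup_le_iff]
        exact ⟨(huR _).trans (le_max_left _ _), (huR _).trans (le_max_left _ _),
          (hTM _).trans (le_max_right _ _), (hTM _).trans (le_max_right _ _)⟩)
      (by
        rw [Metric.tendstoUniformly_iff] at hunif hUg hTg ⊢
        intro ε hε
        filter_upwards [hunif ε hε, hUg ε hε, hTg ε hε] with j h1 h2 h3 x
        simp only [Prod.dist_eq, sup_lt_iff]
        exact ⟨h1 x, h2 x, by rwa [dist_self], h3 x⟩)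
    have : (fun x => slopeMap (fderiv ℝ Φ (x, u x, u (p (x, u x)))) (fderiv ℝ p (x, u x))
        (T x) (T (p (x, u x)))) = T := hTfix
    simpa only [this] using hmain
  -- sup distances between the derivatives of the iterates and their limit
  have hAM : ∀ j x, ‖slopeMap (fderiv ℝ Φ (x, U j x, U j (p (x, U j x)))) (fderiv ℝ p (x, U j x))
        (T x) (T (p (x, U j x))) - T x‖ ≤ M + M := fun j x =>
    (norm_sub_le _ _).trans (add_le_add ((norm_slopeMap_le ha hb he hℓ hs
      (h.deriv_Φ _ _ _ ((hPj j).2.1 _) ((hPj j).2.1 _)) (h.deriv_p _ _ ((hPj j).2.1 _))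
      (hTM _) (hTM _)).trans h.lip) (hTM x))
  have hZTM : ∀ j x, ‖fderiv ℝ (U j) x - T x‖ ≤ M + M := fun j x =>
    (norm_sub_le _ _).trans (add_le_add (hZM j x) (hTM x))
  have hbdd : ∀ j, BddAbove (range fun x => ‖fderiv ℝ (U j) x - T x‖) := fun j =>
    ⟨M + M, by rintro _ ⟨x, rfl⟩; exact hZTM j x⟩
  have hbddA : ∀ j, BddAbove (range fun x => ‖slopeMap
      (fderiv ℝ Φ (x, U j x, U j (p (x, U j x)))) (fderiv ℝ p (x, U j x))
        (T x) (T (p (x, U j x))) - T x‖) := fun j =>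
    ⟨M + M, by rintro _ ⟨x, rfl⟩; exact hAM j x⟩
  have hconv := tendsto_zero_of_recursion (e := fun j => ⨆ x, ‖fderiv ℝ (U j) x - T x‖)
    (ω := fun j => ⨆ x, ‖slopeMap (fderiv ℝ Φ (x, U j x, U j (p (x, U j x))))
      (fderiv ℝ p (x, U j x)) (T x) (T (p (x, U j x))) - T x‖) hθ0 hθ
    (fun j => Real.iSup_nonneg fun x => norm_nonneg _)
    (fun j => by
      refine ciSup_le fun x => ?_
      have h1 := le_ciSup (hbddA j) x
      have h2 := fun x => le_ciSup (hbdd j) x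
      have h3 := norm_slopeMap_sub_le ha hb hℓ hs
        (h.deriv_Φ x _ _ ((hPj j).2.1 x) ((hPj j).2.1 (p (x, U j x))))
        (h.deriv_p x _ ((hPj j).2.1 x)) (hZM j x) (hTM (p (x, U j x))) (h2 x) (h2 _)
      rw [hZsucc]
      refine (norm_sub_le_norm_sub_add_norm_sub _ _ _).trans (add_le_add (h3.trans (le_of_eq ?_)) h1)
      rw [hθdef]; ring)
    (by
      rw [Metric.tendstoUniformly_iff] at hA
      rw [Metric.tendsto_nhds]
      intro ε hε
      filter_upwards [hA (ε / 2) (half_pos hε)] with j hj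
      rw [Real.dist_eq, sub_zero, abs_of_nonneg (Real.iSup_nonneg fun x => norm_nonneg _)]
      refine (ciSup_le fun x => ?_).trans_lt (half_lt_self hε)
      have := (hj x).le
      rwa [dist_comm, dist_eq_norm] at this)
  have hZT : TendstoUniformly (fun j x => fderiv ℝ (U j) x) T atTop := by
    rw [Metric.tendstoUniformly_iff]
    intro ε hε
    filter_upwards [hconv.eventually_lt_const hε] with j hj x
    rw [dist_comm, dist_eq_norm]
    exact (le_ciSup (hbdd j) x).trans_lt hj
  have hder : ∀ x, HasFDerivAt u (T x) x := hasFDerivAt_of_tendstoUniformly hZT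
    (fun j x => (hUd j x).hasFDerivAt) (fun x => hunif.tendsto_at x)
  have hfd : fderiv ℝ u = T := funext fun x => (hder x).fderiv
  refine ⟨u, ?_, huper, huR, fun x => by rw [hfd]; exact hTM x, heq⟩
  rw [contDiff_one_iff_fderiv, hfd]
  exact ⟨fun x => (hder x).differentiableAt, hTc⟩

end IsSystem
end Existence

/-! ### Higher regularity -/

section Regularity

variable {E : Type} [NormedAddCommGroup E] [NormedSpace ℝ E]

/-- Partial derivative bounds for `slopeMap` with respect to `(z, z')`: `a + b M s` in `z` and
`b (ℓ + s M)` in `z'`. -/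
lemma norm_fderiv_slopeMap_le {V : Type} [NormedAddCommGroup V] [NormedSpace ℝ V]
    {Ψ : E × (E →L[ℝ] V) × (E →L[ℝ] V) → E →L[ℝ] V} {x : E}
    {D : E × V × V →L[ℝ] V} {P : E × V →L[ℝ] E} (hΨ : ∀ z z', Ψ (x, z, z') = slopeMap D P z z')
    {e a b ℓ s M : ℝ} (ha : 0 ≤ a) (hb : 0 ≤ b) (hℓ : 0 ≤ ℓ) (hs : 0 ≤ s)
    (hD : ∀ dx dy dy', ‖D (dx, dy, dy')‖ ≤ e * ‖dx‖ + a * ‖dy‖ + b * ‖dy'‖)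
    (hP : ∀ dx dy, ‖P (dx, dy)‖ ≤ ℓ * ‖dx‖ + s * ‖dy‖) {z z' : E →L[ℝ] V}
    (hd : DifferentiableAt ℝ Ψ (x, z, z')) (hz : ‖z‖ ≤ M) (hz' : ‖z'‖ ≤ M)
    (dz dz' : E →L[ℝ] V) :
    ‖fderiv ℝ Ψ (x, z, z') (0, dz, dz')‖ ≤ (a + b * M * s) * ‖dz‖ + b * (ℓ + s * M) * ‖dz'‖ := by
  have hM : 0 ≤ M := (norm_nonneg _).trans hz
  -- Moving `z'` forward and `z` backward keeps the factors that have to be bounded by `M` at the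
  -- base point, so no room outside the ball of radius `M` is needed.
  have line : ∀ v : E × (E →L[ℝ] V) × (E →L[ℝ] V),
      HasDerivAt (fun t : ℝ => Ψ ((x, z, z') + t • v)) (fderiv ℝ Ψ (x, z, z') v) 0 := by
    intro v
    have h1 : HasDerivAt (fun t : ℝ => (x, z, z') + t • v) v 0 := by
      simpa using ((hasDerivAt_id (0 : ℝ)).smul_const v).const_add (x, z, z')
    refine HasFDerivAt.comp_hasDerivAt (0 : ℝ) ?_ h1
    simpa using hd.hasFDerivAt
  have h1 := (line (0, 0, dz')).sub (line (0, -dz, 0))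
  have h2 : fderiv ℝ Ψ (x, z, z') (0, 0, dz') - fderiv ℝ Ψ (x, z, z') (0, -dz, 0)
      = fderiv ℝ Ψ (x, z, z') (0, dz, dz') := by
    rw [← map_sub]; simp
  rw [h2] at h1
  refine h1.le_of_lip' (by positivity) (Eventually.of_forall fun t => ?_)
  have h3 := norm_slopeMap_sub_le ha hb hℓ hs hD hP hz hz' (z' := z' + t • dz')
    (z₂ := z + t • (-dz)) (d := |t| * ‖dz‖) (d' := |t| * ‖dz'‖)
    (by simp [norm_smul]) (by simp [norm_smul])
  simp only [Pi.sub_apply, Prod.smul_mk, smul_zero, Prod.mk_add_mk, add_zero, zero_smul,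
    sub_self, sub_zero, hΨ, Real.norm_eq_abs]
  refine h3.trans (le_of_eq ?_)
  ring

/-- `Cʳ` regularity, by induction on `r`: the derivative of the solution solves the linearised
equation, which is again a system of the same kind, over a base map no longer depending on the
unknown and with one derivative less. -/
theorem IsSystem.exists_solution [FiniteDimensional ℝ E] {Λ K : Set E}
    (hΛ : CompactQuotient Λ K) (r : ℕ) (hr : 1 ≤ r) :
    ∀ {V : Type} [NormedAddCommGroup V] [NormedSpace ℝ V] [FiniteDimensional ℝ V]
    {Φ : E × V × V → V} {p : E × V → E} {R M e a b ℓ s : ℝ},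
    IsSystem Λ r Φ p R M e a b ℓ s →
    ∃ u : E → V, ContDiff ℝ r u ∧ (∀ v ∈ Λ, ∀ x, u (x + v) = u x) ∧ (∀ x, ‖u x‖ ≤ R) ∧
      (∀ x, ‖fderiv ℝ u x‖ ≤ M) ∧ ∀ x, u x = Φ (x, u x, u (p (x, u x))) := by
  induction r, hr using Nat.le_induction with
  | base =>
    intro V _ _ _ Φ p R M e a b ℓ s h
    simpa using h.exists_solution_one hΛ
  | succ k hk ih =>
    intro V _ _ _ Φ p R M e a b ℓ s h
    have hpL : ProperSpace (E →L[ℝ] V) := FiniteDimensional.proper ℝ _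
    obtain ⟨u, huC, huper, huR, huM, heq⟩ := ih (h.mono (Nat.le_succ k))
    have ha := h.a_nonneg
    have hb := h.b_nonneg
    have hM := h.M_nonneg
    have hs := h.s_nonneg
    have he := h.e_nonneg
    have hℓ : 0 ≤ ℓ := zero_le_one.trans h.one_le
    have hℓM := h.one_le_base
    have hud : Differentiable ℝ u := huC.differentiable (by exact_mod_cast (by omega : k ≠ 0))
    set g : E → E := fun x => p (x, u x) with hg
    have hΦk : ContDiff ℝ k (fderiv ℝ Φ) := h.contDiff_Φ.fderiv_right (by norm_cast)
    have hpk : ContDiff ℝ k (fderiv ℝ p) := h.contDiff_p.fderiv_right (by norm_cast)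
    have hgC : ContDiff ℝ k g :=
      (h.mono (Nat.le_succ k)).contDiff_p.comp (contDiff_id.prodMk huC)
    set Ψ : E × (E →L[ℝ] V) × (E →L[ℝ] V) → E →L[ℝ] V := fun q =>
      slopeMap (fderiv ℝ Φ (q.1, u q.1, u (g q.1))) (fderiv ℝ p (q.1, u q.1)) q.2.1 q.2.2 with hΨ
    have hΨC : ContDiff ℝ k Ψ := by
      have h1 : ContDiff ℝ k (fun x : E => fderiv ℝ Φ (x, u x, u (g x))) :=
        hΦk.comp (contDiff_id.prodMk (huC.prodMk (huC.comp hgC)))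
      have h2 : ContDiff ℝ k (fun x : E => fderiv ℝ p (x, u x)) :=
        hpk.comp (contDiff_id.prodMk huC)
      exact ContDiff.slopeMap (h1.comp contDiff_fst) (h2.comp contDiff_fst)
        (contDiff_fst.comp contDiff_snd) (contDiff_snd.comp contDiff_snd)
    have hΨper : ∀ v ∈ Λ, ∀ x z z', Ψ (x + v, z, z') = Ψ (x, z, z') := by
      intro v hv x z z'
      simp only [hΨ, hg, huper v hv, h.per_p v hv, h.fderiv_Φ_periodic hv, h.fderiv_p_periodic hv]
    have hΨper' : ∀ v ∈ Λ, ∀ x w, fderiv ℝ Ψ (x + v, w) = fderiv ℝ Ψ (x, w) := by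
      intro v hv x w
      have h1 := fderiv_comp_add_right (𝕜 := ℝ) (f := Ψ) (x := (x, w)) (v, 0)
      have h2 : (fun q => Ψ (q + (v, 0))) = Ψ := by
        funext ⟨x, z, z'⟩
        simpa using hΨper v hv x z z'
      rw [h2] at h1
      simpa using h1.symm
    obtain ⟨e₁, he₁, hbound⟩ := hΛ.exists_bound (W := (E →L[ℝ] V) × (E →L[ℝ] V))
      (hΨC.continuous_fderiv (by exact_mod_cast (by omega : k ≠ 0))) hΨper' M
    have hΨd : Differentiable ℝ Ψ := hΨC.differentiable (by exact_mod_cast (by omega : k ≠ 0))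
    have hgper : ∀ v ∈ Λ, ∀ x, g (x + v) = g x + v := fun v hv x => by
      simp only [hg, huper v hv, h.per_p v hv]
    have hgD : ∀ x dx, ‖fderiv ℝ g x dx‖ ≤ (ℓ + s * M) * ‖dx‖ := by
      intro x dx
      have hp := h.contDiff_p.differentiable (by exact_mod_cast (by omega : k + 1 ≠ 0))
      have h1 : HasFDerivAt (fun x => (x, u x))
          ((ContinuousLinearMap.id ℝ E).prod (fderiv ℝ u x)) x :=
        (hasFDerivAt_id x).prodMk (hud x).hasFDerivAt
      have h2 := ((hp (x, u x)).hasFDerivAt.comp x h1).fderiv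
      have h3 : fderiv ℝ g x = _ := h2
      rw [h3]
      calc _ ≤ ℓ * ‖dx‖ + s * ‖fderiv ℝ u x dx‖ := h.deriv_p _ _ (huR x) _ _
        _ ≤ ℓ * ‖dx‖ + s * (M * ‖dx‖) := by
          gcongr
          exact (fderiv ℝ u x).le_of_opNorm_le (huM x) dx
        _ = _ := by ring
    have hgap : a + b * M * s + b * (ℓ + s * M) * (ℓ + s * M) ^ k < 1 := by
      have := h.gap
      rw [pow_succ] at this
      linarith
    have hgap1 : a + b * M * s + b * (ℓ + s * M) * (ℓ + s * M) < 1 := by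
      have h1 := pow_le_pow_right₀ hℓM hk
      rw [pow_one] at h1
      have := mul_le_mul_of_nonneg_left h1 (show 0 ≤ b * (ℓ + s * M) by positivity)
      linarith
    -- as the base map does not depend on the unknown, any large Lipschitz bound is admissible
    set M₁ := e₁ / (1 - (a + b * M * s + b * (ℓ + s * M) * (ℓ + s * M))) with hM₁
    have hpos : 0 < 1 - (a + b * M * s + b * (ℓ + s * M) * (ℓ + s * M)) := by linarith
    have hM₁0 : 0 ≤ M₁ := div_nonneg he₁ hpos.le
    have hsys : IsSystem Λ k Ψ (fun q => g q.1) M M₁ e₁ (a + b * M * s) (b * (ℓ + s * M))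
        (ℓ + s * M) 0 :=
      { contDiff_Φ := hΨC
        contDiff_p := hgC.comp contDiff_fst
        per_Φ := hΨper
        per_p := fun v hv x y => hgper v hv x
        norm_Φ := fun x z z' hz hz' =>
          (norm_slopeMap_le ha hb he hℓ hs (h.deriv_Φ _ _ _ (huR _) (huR _))
            (h.deriv_p _ _ (huR _)) hz hz').trans h.lip
        deriv_Φ := by
          intro x z z' hz hz' dx dz dz'
          have h1 : fderiv ℝ Ψ (x, z, z') (dx, dz, dz') =
              fderiv ℝ Ψ (x, z, z') (dx, 0) + fderiv ℝ Ψ (x, z, z') (0, dz, dz') := by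
            rw [← map_add]; simp
          have h2 : ‖fderiv ℝ Ψ (x, z, z') (dx, 0)‖ ≤ e₁ * ‖dx‖ := by
            have := (fderiv ℝ Ψ (x, z, z')).le_of_opNorm_le
              (hbound x (z, z') (by simp [Prod.norm_def, hz, hz'])) (dx, 0)
            simpa [Prod.norm_def] using this
          have h3 := norm_fderiv_slopeMap_le (Ψ := Ψ) (x := x)
            (D := fderiv ℝ Φ (x, u x, u (g x))) (P := fderiv ℝ p (x, u x)) (fun z z' => rfl)
            ha hb hℓ hs (h.deriv_Φ _ _ _ (huR _) (huR _)) (h.deriv_p _ _ (huR _)) (hΨd (x, z, z')) hz hz' dz dz'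
          rw [h1]
          refine (norm_add_le _ _).trans ?_
          linarith
        deriv_p := by
          intro x z hz dx dz
          have h1 : HasFDerivAt (fun q : E × (E →L[ℝ] V) => g q.1)
              ((fderiv ℝ g x) ∘L (ContinuousLinearMap.fst ℝ E (E →L[ℝ] V))) (x, z) :=
            HasFDerivAt.comp (x, z) (g := g)
              ((hgC.differentiable (by exact_mod_cast (by omega : k ≠ 0))) x).hasFDerivAt
              hasFDerivAt_fst
          rw [h1.fderiv]
          simpa using hgD x dx
        R_nonneg := hM
        M_nonneg := hM₁0
        e_nonneg := he₁
        a_nonneg := by positivity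
        b_nonneg := by positivity
        s_nonneg := le_rfl
        one_le := hℓM
        lip := by
          have : M₁ * (1 - (a + b * M * s + b * (ℓ + s * M) * (ℓ + s * M))) = e₁ :=
            div_mul_cancel₀ _ hpos.ne'
          linarith
        gap := by simpa using hgap }
    obtain ⟨Z, hZC, -, hZR, hZM, hZeq⟩ := ih hsys
    have hZd : Differentiable ℝ Z := hZC.differentiable (by exact_mod_cast (by omega : k ≠ 0))
    have hfix : ∀ x, fderiv ℝ u x = Ψ (x, fderiv ℝ u x, fderiv ℝ u (g x)) := by
      intro x
      have h1 := (h.hasFDerivAt_comp (by omega) hud x).fderiv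
      rw [show (fun x => Φ (x, u x, u (p (x, u x)))) = u from (funext heq).symm] at h1
      exact h1
    have hZu : fderiv ℝ u = Z := by
      refine hsys.unique hk huM hZR (fun x x' => ?_) hfix hZeq
      exact convex_univ.norm_image_sub_le_of_norm_fderiv_le (fun x _ => hZd x) (fun x _ => hZM x)
        (mem_univ x') (mem_univ x)
    refine ⟨u, ?_, huper, huR, huM, heq⟩
    push_cast
    rw [contDiff_succ_iff_fderiv, hZu]
    exact ⟨hud, fun h => by simp at h, hZC⟩

end Regularity

/-! ### Repelling invariant graphs -/

section Repelling

variable {E : Type} [NormedAddCommGroup E] [NormedSpace ℝ E]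

lemma one_add_pow_le {t : ℝ} {r : ℕ} (ht : 0 ≤ t) (h : r * t ≤ 1) :
    (1 + t) ^ r ≤ 1 + 2 * (r * t) := by
  have h0 : 0 ≤ r * t := by positivity
  have h1 : (1 + t) ^ r ≤ Real.exp (r * t) := by
    rw [Real.exp_nat_mul]
    exact pow_le_pow_left₀ (by positivity) (by linarith [Real.add_one_le_exp t]) r
  have h2 := Real.abs_exp_sub_one_le (x := r * t) (by rwa [abs_of_nonneg h0])
  rw [abs_of_nonneg h0] at h2
  linarith [(abs_le.mp h2).2]

/-- A perturbation of the identity by a contraction is onto. -/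
lemma exists_preimage_of_lipschitz {E : Type} [NormedAddCommGroup E] [CompleteSpace E]
    {g : E → E} {θ : ℝ} (hθ : θ < 1)
    (h : ∀ x x', ‖(g x - x) - (g x' - x')‖ ≤ θ * ‖x - x'‖) (ξ : E) : ∃ x, g x = ξ := by
  have hc : ContractingWith θ.toNNReal (fun x => ξ - (g x - x)) := by
    refine ⟨by simpa using hθ, LipschitzWith.of_dist_le_mul fun x x' => ?_⟩
    rw [dist_eq_norm, dist_eq_norm, sub_sub_sub_cancel_left, ← norm_neg, neg_sub]
    refine (h x x').trans ?_
    gcongr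
    exact Real.le_coe_toNNReal θ
  refine ⟨hc.fixedPoint, ?_⟩
  have h1 : ξ - (g (hc.fixedPoint) - hc.fixedPoint) = hc.fixedPoint := hc.fixedPoint_isFixedPt
  have h2 : ξ - g (hc.fixedPoint) = 0 := by
    have : ξ - g (hc.fixedPoint) = ξ - (g (hc.fixedPoint) - hc.fixedPoint) - hc.fixedPoint := by abel
    rw [this, h1, sub_self]
  exact (sub_eq_zero.mp h2).symm

/-- Invariant graph of a map `(x, y) ↦ (G (x, y), H (x, y))` that is close to
`(x, y) ↦ (x, (1 + c δ) y)`. All perturbations are of the order of the weak hyperbolicity `δ`, but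
with a factor `κ` which only has to be small with respect to `c`, `C` and the regularity `r`; the
shear `∂G/∂y` may be as large as `C δ`. -/
theorem exists_repelling_graph [FiniteDimensional ℝ E] {Λ K : Set E} (hΛ : CompactQuotient Λ K)
    {r : ℕ} (hr : 1 ≤ r) {c C : ℝ} (hc : 0 < c) (hC : 0 < C) :
    ∃ κ : ℝ, 0 < κ ∧ ∀ {δ R : ℝ} {G : E × ℝ → E} {H : E × ℝ → ℝ}, 0 < δ → c * δ ≤ 1 → 0 ≤ R →
      ContDiff ℝ r G → ContDiff ℝ r H →
      (∀ v ∈ Λ, ∀ x y, G (x + v, y) = G (x, y) + v) →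
      (∀ v ∈ Λ, ∀ x y, H (x + v, y) = H (x, y)) →
      (∀ x y, |y| ≤ R → ∀ dx dy,
        ‖fderiv ℝ G (x, y) (dx, dy) - dx‖ ≤ δ * (κ * ‖dx‖ + C * |dy|)) →
      (∀ x y, |y| ≤ R → ∀ dx dy,
        |fderiv ℝ H (x, y) (dx, dy) - (1 + c * δ) * dy| ≤ δ * (κ * (‖dx‖ + |dy|))) →
      (∀ x y, |y| ≤ R → |H (x, y) - (1 + c * δ) * y| ≤ δ * (c * R)) →
      ∃ w : E → ℝ, ContDiff ℝ r w ∧ (∀ v ∈ Λ, ∀ x, w (x + v) = w x) ∧ (∀ x, |w x| ≤ R) ∧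
        (∀ x, w (G (x, w x)) = H (x, w x)) ∧ ∀ ξ, ∃ x, G (x, w x) = ξ := by
  have hr' : (1 : ℝ) ≤ r := by exact_mod_cast hr
  obtain ⟨M, hM0, hM1, hMC⟩ : ∃ M : ℝ, 0 < M ∧ M ≤ 1 ∧ r * (C * M) ≤ c / 16 := by
    refine ⟨min 1 (c / (16 * r * C)), by positivity, min_le_left _ _, ?_⟩
    calc r * (C * min 1 (c / (16 * r * C))) ≤ r * (C * (c / (16 * r * C))) := by
          gcongr; exact min_le_right _ _
      _ = c / 16 := by field_simp
  obtain ⟨κ, hκ0, hκM, hκr⟩ : ∃ κ : ℝ, 0 < κ ∧ κ ≤ c * M / 16 ∧ r * κ ≤ c / 16 := by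
    refine ⟨min (c * M / 16) (c / (16 * r)), by positivity, min_le_left _ _, ?_⟩
    calc r * min (c * M / 16) (c / (16 * r)) ≤ r * (c / (16 * r)) := by
          gcongr; exact min_le_right _ _
      _ = c / 16 := by field_simp
  have hCM : C * M ≤ c / 16 := by
    have : 1 * (C * M) ≤ r * (C * M) := by gcongr
    linarith
  have hκc : κ ≤ c / 16 := by
    have : 1 * κ ≤ r * κ := by gcongr
    linarith
  refine ⟨κ, hκ0, ?_⟩
  intro δ R G H hδ hcδ hR hGC hHC hGper hHper hGd hHd hHR
  have hr0 : (r : WithTop ℕ∞) ≠ 0 := by exact_mod_cast (by omega : r ≠ 0)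
  have hGdiff : Differentiable ℝ G := hGC.differentiable hr0
  have hHdiff : Differentiable ℝ H := hHC.differentiable hr0
  set Λ₀ := 1 + c * δ with hΛ₀
  have hcδ0 : 0 < c * δ := by positivity
  have hΛ₀1 : 1 < Λ₀ := by linarith
  have hΛ₀0 : 0 < Λ₀ := by linarith
  set μ := 1 / Λ₀ with hμ
  have hμ0 : 0 < μ := by positivity
  have hμ1 : μ ≤ 1 := by rw [hμ, div_le_one hΛ₀0]; exact hΛ₀1.le
  have hμΛ : μ * Λ₀ = 1 := by rw [hμ]; field_simp
  -- the invariance equation, solved for the inner argument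
  set Φ : E × ℝ × ℝ → ℝ := fun q => q.2.1 + μ * (q.2.2 - H (q.1, q.2.1)) with hΦ
  have hΦeq : ∀ q, Φ q = μ * (q.2.2 - (H (q.1, q.2.1) - Λ₀ * q.2.1)) := by
    intro q
    simp only [hΦ]
    linear_combination -q.2.1 * hμΛ
  have hΦC : ContDiff ℝ r Φ := by
    have := hHC.comp (contDiff_fst.prodMk (contDiff_fst.comp contDiff_snd) :
      ContDiff ℝ r (fun q : E × ℝ × ℝ => (q.1, q.2.1)))
    exact (contDiff_fst.comp contDiff_snd).add
      (contDiff_const.mul ((contDiff_snd.comp contDiff_snd).sub this))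
  have hΦd : ∀ x y y' dx dy dy', fderiv ℝ Φ (x, y, y') (dx, dy, dy')
      = μ * (dy' - (fderiv ℝ H (x, y) (dx, dy) - Λ₀ * dy)) := by
    intro x y y' dx dy dy'
    have h1 : HasFDerivAt (fun q : E × ℝ × ℝ => (q.1, q.2.1))
        ((ContinuousLinearMap.fst ℝ E (ℝ × ℝ)).prod
          (ContinuousLinearMap.fst ℝ ℝ ℝ ∘L ContinuousLinearMap.snd ℝ E (ℝ × ℝ))) (x, y, y') :=
      hasFDerivAt_fst.prodMk (hasFDerivAt_fst.comp _ hasFDerivAt_snd)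
    have h2 := (hHdiff (x, y)).hasFDerivAt.comp (x, y, y') h1
    have h3 : HasFDerivAt (fun q : E × ℝ × ℝ => q.2.1)
        (ContinuousLinearMap.fst ℝ ℝ ℝ ∘L ContinuousLinearMap.snd ℝ E (ℝ × ℝ)) (x, y, y') :=
      hasFDerivAt_fst.comp _ hasFDerivAt_snd
    have h4 : HasFDerivAt (fun q : E × ℝ × ℝ => q.2.2)
        (ContinuousLinearMap.snd ℝ ℝ ℝ ∘L ContinuousLinearMap.snd ℝ E (ℝ × ℝ)) (x, y, y') :=
      hasFDerivAt_snd.comp _ hasFDerivAt_snd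
    have h5 := (h3.add ((h4.sub h2).const_mul μ)).fderiv
    have h6 : fderiv ℝ Φ (x, y, y') = _ := h5
    rw [h6]
    simp
    linear_combination -dy * hμΛ
  have hsys : IsSystem Λ r Φ G R M (δ * κ) (δ * κ) μ (1 + δ * κ) (δ * C) :=
    { contDiff_Φ := hΦC
      contDiff_p := hGC
      per_Φ := fun v hv x y y' => by simp only [hΦ, hHper v hv]
      per_p := hGper
      norm_Φ := by
        intro x y y' hy hy'
        rw [Real.norm_eq_abs] at hy hy'
        rw [hΦeq, Real.norm_eq_abs, abs_mul, abs_of_pos hμ0]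
        calc _ ≤ μ * (|y'| + |H (x, y) - Λ₀ * y|) := by gcongr; exact abs_sub _ _
          _ ≤ μ * (R + δ * (c * R)) := by gcongr; exact hHR x y hy
          _ = (μ * Λ₀) * R := by rw [hΛ₀]; ring
          _ = R := by rw [hμΛ, one_mul]
      deriv_Φ := by
        intro x y y' hy hy' dx dy dy'
        rw [Real.norm_eq_abs] at hy hy'
        rw [hΦd, Real.norm_eq_abs, Real.norm_eq_abs, Real.norm_eq_abs, abs_mul, abs_of_pos hμ0]
        calc _ ≤ μ * (|dy'| + |fderiv ℝ H (x, y) (dx, dy) - Λ₀ * dy|) := by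
              gcongr; exact abs_sub _ _
          _ ≤ μ * |dy'| + 1 * (δ * (κ * (‖dx‖ + |dy|))) := by
              rw [mul_add]; gcongr; exact hHd x y hy dx dy
          _ = _ := by ring
      deriv_p := by
        intro x y hy dx dy
        rw [Real.norm_eq_abs] at hy
        have := hGd x y hy dx dy
        calc _ = ‖(fderiv ℝ G (x, y) (dx, dy) - dx) + dx‖ := by simp
          _ ≤ δ * (κ * ‖dx‖ + C * |dy|) + ‖dx‖ := (norm_add_le _ _).trans (by gcongr)
          _ = _ := by rw [Real.norm_eq_abs]; ring
      R_nonneg := hR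
      M_nonneg := hM0.le
      e_nonneg := by positivity
      a_nonneg := by positivity
      b_nonneg := hμ0.le
      s_nonneg := by positivity
      one_le := by have : 0 ≤ δ * κ := by positivity
                   linarith
      lip := by
        have h1 : Λ₀ * (δ * κ) ≤ 2 * (δ * κ) := by gcongr; linarith
        have h2 : Λ₀ * (δ * κ * M) ≤ 2 * (δ * κ * M) := by gcongr; linarith
        have h3 : δ * κ * M ≤ δ * κ := mul_le_of_le_one_right (by positivity) hM1
        have h4 : δ * κ ≤ δ * (c * M / 16) := by gcongr
        have h5 : δ * M * (C * M) ≤ δ * M * (c / 16) := by gcongr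
        have h6 : 0 < δ * M * c := by positivity
        refine le_of_mul_le_mul_left ?_ hΛ₀0
        have h7 : Λ₀ * (δ * κ + δ * κ * M + μ * M * (1 + δ * κ + δ * C * M))
            = Λ₀ * (δ * κ) + Λ₀ * (δ * κ * M) + (μ * Λ₀) * M * (1 + δ * κ + δ * C * M) := by ring
        rw [h7, hμΛ]
        have h8 : Λ₀ * M = M + δ * M * c := by rw [hΛ₀]; ring
        nlinarith
      gap := by
        have hτ : 1 + δ * κ + δ * C * M = 1 + δ * (κ + C * M) := by ring
        have hrτ : r * (δ * (κ + C * M)) ≤ c * δ / 8 := by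
          have : r * (δ * (κ + C * M)) = δ * (r * κ + r * (C * M)) := by ring
          rw [this]
          calc _ ≤ δ * (c / 16 + c / 16) := by gcongr
            _ = _ := by ring
        have h1 := one_add_pow_le (r := r) (t := δ * (κ + C * M)) (by positivity) (by linarith)
        rw [hτ]
        refine lt_of_mul_lt_mul_left ?_ hΛ₀0.le
        have h7 : Λ₀ * (δ * κ + μ * M * (δ * C) + μ * (1 + δ * (κ + C * M)) ^ r)
            = Λ₀ * (δ * κ) + (μ * Λ₀) * (δ * (C * M)) + (μ * Λ₀) * (1 + δ * (κ + C * M)) ^ r := by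
          ring
        rw [h7, hμΛ]
        have h2 : Λ₀ * (δ * κ) ≤ 2 * (δ * (c / 16)) := by gcongr; linarith
        have h3 : δ * (C * M) ≤ δ * (c / 16) := by gcongr
        linarith }
  obtain ⟨w, hwC, hwper, hwR, hwM, hweq⟩ := hsys.exists_solution hΛ r hr
  refine ⟨w, hwC, hwper, hwR, fun x => ?_, ?_⟩
  · have h1 := hweq x
    simp only [hΦ] at h1
    have h2 : μ * (w (G (x, w x)) - H (x, w x)) = 0 := by linarith
    rcases mul_eq_zero.mp h2 with h | h
    · exact absurd h hμ0.ne'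
    · linarith
  · refine exists_preimage_of_lipschitz (g := fun x => G (x, w x)) (θ := 1 / 8) (by norm_num)
      fun x x' => ?_
    have hLip : |w x - w x'| ≤ M * ‖x - x'‖ :=
      convex_univ.norm_image_sub_le_of_norm_fderiv_le (fun x _ => hwC.differentiable hr0 x)
        (fun x _ => hwM x) (mem_univ x') (mem_univ x)
    have := norm_sub_le_of_directional_bound (f := fun q : E × ℝ => G q - q.1)
      (S := univ ×ˢ Metric.closedBall 0 R) (hGdiff.sub differentiable_fst)
      (convex_univ.prod (convex_closedBall _ _)) (x := (x', w x')) (y := (x, w x))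
      (C := 1 / 8 * ‖x - x'‖) ⟨mem_univ _, by simpa using hwR x'⟩ ⟨mem_univ _, by simpa using hwR x⟩
      (by
        rintro ⟨ξ, ζ⟩ ⟨-, hζ⟩
        have h1 := ((hGdiff (ξ, ζ)).hasFDerivAt.sub hasFDerivAt_fst).fderiv
        have h2 : fderiv ℝ (fun q : E × ℝ => G q - q.1) (ξ, ζ) = _ := h1
        rw [h2]
        refine (hGd ξ ζ (by simpa using hζ) (x - x') (w x - w x')).trans ?_
        calc _ ≤ δ * (κ * ‖x - x'‖ + C * (M * ‖x - x'‖)) := by gcongr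
          _ = δ * (κ + C * M) * ‖x - x'‖ := by ring
          _ ≤ 1 / 8 * ‖x - x'‖ := by
            gcongr
            calc δ * (κ + C * M) ≤ δ * (c / 16 + c / 16) := by gcongr
              _ = c * δ / 8 := by ring
              _ ≤ 1 / 8 := by gcongr)
    exact this

end Repelling

/-! ### Invariant graphs of either stability type -/

section Inverse

/-- A `Cʳ` self-map whose derivative is within `1 / 2` of the identity is a `Cʳ`
diffeomorphism. -/
lemma exists_contDiff_inverse {X : Type} [NormedAddCommGroup X] [NormedSpace ℝ X]
    [FiniteDimensional ℝ X] {r : ℕ} (hr : 1 ≤ r) {F : X → X} (hF : ContDiff ℝ r F)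
    (h : ∀ q dq, ‖fderiv ℝ F q dq - dq‖ ≤ 1 / 2 * ‖dq‖) :
    ∃ I : X → X, ContDiff ℝ r I ∧ (∀ q, F (I q) = q) ∧ ∀ q, I (F q) = q := by
  have hcs : CompleteSpace X := FiniteDimensional.complete ℝ X
  have hd : Differentiable ℝ F := hF.differentiable (by exact_mod_cast (by omega : r ≠ 0))
  have hLip : ∀ x x', ‖(F x - x) - (F x' - x')‖ ≤ 1 / 2 * ‖x - x'‖ := by
    intro x x'
    refine norm_sub_le_of_directional_bound (f := fun q => F q - q) (S := univ)
      (hd.sub differentiable_id) convex_univ (mem_univ _) (mem_univ _) fun z _ => ?_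
    have h1 : fderiv ℝ (fun q => F q - q) z = _ := ((hd z).hasFDerivAt.sub (hasFDerivAt_id z)).fderiv
    rw [h1]
    exact h z _
  have hexp : ∀ x x', ‖x - x'‖ ≤ 2 * ‖F x - F x'‖ := by
    intro x x'
    have h1 := hLip x x'
    have h2 : ‖x - x'‖ ≤ ‖F x - F x'‖ + ‖(F x - x) - (F x' - x')‖ := by
      calc ‖x - x'‖ = ‖(F x - F x') - ((F x - x) - (F x' - x'))‖ := by congr 1; abel
        _ ≤ _ := norm_sub_le _ _
    linarith
  have hinj : Function.Injective F := fun x x' hx => by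
    have := hexp x x'
    rw [hx, sub_self, norm_zero, mul_zero] at this
    exact sub_eq_zero.mp (norm_le_zero_iff.mp this)
  have hsurj : Function.Surjective F := exists_preimage_of_lipschitz (by norm_num) hLip
  let e : X ≃ X := Equiv.ofBijective F ⟨hinj, hsurj⟩
  have heF : ∀ x, e x = F x := fun x => rfl
  have hcont : Continuous e.symm := by
    refine (LipschitzWith.of_dist_le_mul (K := 2) fun x x' => ?_).continuous
    have := hexp (e.symm x) (e.symm x')
    rw [← heF, ← heF, e.apply_symm_apply, e.apply_symm_apply] at this
    simpa [dist_eq_norm] using this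
  let eh : X ≃ₜ X := { e with continuous_toFun := hF.continuous, continuous_invFun := hcont }
  have hDinj : ∀ q, Function.Injective (fderiv ℝ F q : X →ₗ[ℝ] X) := by
    intro q
    rw [← LinearMap.ker_eq_bot, LinearMap.ker_eq_bot']
    intro v hv
    have h1 := h q v
    have h2 : fderiv ℝ F q v = 0 := hv
    rw [h2, zero_sub, norm_neg] at h1
    exact norm_le_zero_iff.mp (by linarith [norm_nonneg v])
  have hsymm : ContDiff ℝ r eh.symm := by
    refine eh.contDiff_symm (f₀' := fun q =>
      (LinearEquiv.ofInjectiveEndo _ (hDinj q)).toContinuousLinearEquiv) (fun q => ?_) hF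
    have h1 : (((LinearEquiv.ofInjectiveEndo _ (hDinj q)).toContinuousLinearEquiv : X ≃L[ℝ] X) :
        X →L[ℝ] X) = fderiv ℝ F q := by
      ext v; rfl
    rw [h1]
    exact (hd q).hasFDerivAt
  exact ⟨eh.symm, hsymm, e.apply_symm_apply, e.symm_apply_apply⟩

end Inverse

section InvariantGraph

variable {E : Type} [NormedAddCommGroup E] [NormedSpace ℝ E]

/-- Invariant graph of a map close to `(x, y) ↦ (x, (1 + lam δ) y)`, with either sign of `lam`. For
`lam < 0` the result for repelling graphs is applied to the inverse map, and the invariant graph of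
the inverse is turned into one of the map itself because the inverse acts on it surjectively. -/
theorem exists_invariant_graph [FiniteDimensional ℝ E] {Λ K : Set E} (hΛ : CompactQuotient Λ K)
    {r : ℕ} (hr : 1 ≤ r) {lam C B : ℝ} (hlam : lam ≠ 0) (hC : 0 < C) (hB : 0 < B) :
    ∃ κ : ℝ, 0 < κ ∧ ∃ δ₀ : ℝ, 0 < δ₀ ∧ ∀ {δ R : ℝ} {G : E × ℝ → E} {H : E × ℝ → ℝ},
      0 < δ → δ ≤ δ₀ → 0 ≤ R →
      ContDiff ℝ r G → ContDiff ℝ r H →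
      (∀ v ∈ Λ, ∀ x y, G (x + v, y) = G (x, y) + v) →
      (∀ v ∈ Λ, ∀ x y, H (x + v, y) = H (x, y)) →
      (∀ q dq, ‖fderiv ℝ G q dq - dq.1‖ ≤ δ * B * ‖dq‖) →
      (∀ q dq, |fderiv ℝ H q dq - dq.2| ≤ δ * B * ‖dq‖) →
      (∀ x y, |H (x, y) - y| ≤ R) →
      (∀ x y, |y| ≤ 2 * R → ∀ dx dy,
        ‖fderiv ℝ G (x, y) (dx, dy) - dx‖ ≤ δ * (κ * ‖dx‖ + C * |dy|)) →
      (∀ x y, |y| ≤ 2 * R → ∀ dx dy,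
        |fderiv ℝ H (x, y) (dx, dy) - (1 + lam * δ) * dy| ≤ δ * (κ * (‖dx‖ + |dy|))) →
      (∀ x y, |y| ≤ 2 * R → |H (x, y) - (1 + lam * δ) * y| ≤ δ * (κ * R)) →
      ∃ w : E → ℝ, ContDiff ℝ r w ∧ (∀ v ∈ Λ, ∀ x, w (x + v) = w x) ∧ (∀ x, |w x| ≤ R) ∧
        ∀ x, w (G (x, w x)) = H (x, w x) := by
  rcases lt_or_gt_of_ne hlam with hneg | hpos
  · obtain ⟨c, rfl⟩ : ∃ c, lam = -c := ⟨-lam, by ring⟩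
    have hc : 0 < c := by linarith
    obtain ⟨κ₁, hκ₁, hrep⟩ := exists_repelling_graph hΛ hr hc (show 0 < 2 * C by positivity)
    obtain ⟨κ, hκ, hκκ₁, hκC, hκc⟩ : ∃ κ : ℝ, 0 < κ ∧ 16 * κ ≤ κ₁ ∧ κ ≤ C ∧ 4 * κ ≤ c := by
      refine ⟨min (κ₁ / 16) (min C (c / 4)), by positivity, ?_, ?_, ?_⟩
      · linarith [min_le_left (κ₁ / 16) (min C (c / 4))]
      · exact (min_le_right _ _).trans (min_le_left _ _)
      · linarith [(min_le_right (κ₁ / 16) (min C (c / 4))).trans (min_le_right _ _)]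
    obtain ⟨δ₀, hδ₀, hδB, hδc, hδC, hδκ⟩ : ∃ δ₀ : ℝ, 0 < δ₀ ∧ δ₀ * B ≤ 1 / 2 ∧ c * δ₀ ≤ 1 ∧
        4 * C * B * δ₀ ≤ κ ∧ c ^ 2 * δ₀ ≤ κ := by
      refine ⟨min (min (1 / (2 * B)) (1 / c)) (min (κ / (4 * C * B)) (κ / c ^ 2)),
        by positivity, ?_, ?_, ?_, ?_⟩
      · rw [← le_div_iff₀ hB]
        refine ((min_le_left _ _).trans (min_le_left _ _)).trans (le_of_eq ?_)
        field_simp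
      · rw [← le_div_iff₀' hc]
        exact (min_le_left _ _).trans (min_le_right _ _)
      · rw [← le_div_iff₀' (by positivity)]
        exact (min_le_right _ _).trans (min_le_left _ _)
      · rw [← le_div_iff₀' (by positivity)]
        exact (min_le_right _ _).trans (min_le_right _ _)
    refine ⟨κ, hκ, δ₀, hδ₀, ?_⟩
    intro δ R G H hδ hδδ₀ hR hGC hHC hGper hHper hGB hHB hHy hGd hHd hHR
    replace hδB : δ * B ≤ 1 / 2 := le_trans (by gcongr) hδB
    replace hδc : c * δ ≤ 1 := le_trans (by gcongr) hδc
    replace hδC : 4 * C * B * δ ≤ κ := le_trans (by gcongr) hδC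
    replace hδκ : c ^ 2 * δ ≤ κ := le_trans (by gcongr) hδκ
    have hr0 : (r : WithTop ℕ∞) ≠ 0 := by exact_mod_cast (by omega : r ≠ 0)
    have hGdiff : Differentiable ℝ G := hGC.differentiable hr0
    have hHdiff : Differentiable ℝ H := hHC.differentiable hr0
    set F : E × ℝ → E × ℝ := fun q => (G q, H q) with hFdef
    have hFC : ContDiff ℝ r F := hGC.prodMk hHC
    have hFd : ∀ q dq, fderiv ℝ F q dq = (fderiv ℝ G q dq, fderiv ℝ H q dq) := by
      intro q dq
      have h1 : fderiv ℝ F q = _ := ((hGdiff q).hasFDerivAt.prodMk (hHdiff q).hasFDerivAt).fderiv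
      rw [h1]; rfl
    have hFid : ∀ q dq, ‖fderiv ℝ F q dq - dq‖ ≤ δ * B * ‖dq‖ := by
      intro q dq
      rw [hFd, Prod.norm_def]
      exact max_le (hGB q dq) (hHB q dq)
    obtain ⟨I, hIC, hFI, hIF⟩ := exists_contDiff_inverse hr hFC
      (fun q dq => (hFid q dq).trans (by gcongr))
    have hIdiff : Differentiable ℝ I := hIC.differentiable hr0
    have hFdiff : Differentiable ℝ F := hFC.differentiable hr0
    have hId : ∀ q dq, fderiv ℝ F (I q) (fderiv ℝ I q dq) = dq := by
      intro q dq
      have h1 := (hFdiff (I q)).hasFDerivAt.comp q (hIdiff q).hasFDerivAt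
      have h2 : F ∘ I = id := funext hFI
      rw [h2] at h1
      have h3 := h1.unique (hasFDerivAt_id q)
      exact congrArg (fun A : E × ℝ →L[ℝ] E × ℝ => A dq) h3
    have hI2 : ∀ q dq, ‖fderiv ℝ I q dq‖ ≤ 2 * ‖dq‖ := by
      intro q dq
      have h1 := hFid (I q) (fderiv ℝ I q dq)
      rw [hId] at h1
      have h2 := norm_sub_norm_le (fderiv ℝ I q dq) dq
      rw [norm_sub_rev] at h2
      have h3 : δ * B * ‖fderiv ℝ I q dq‖ ≤ 1 / 2 * ‖fderiv ℝ I q dq‖ := by gcongr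
      linarith
    have hIid : ∀ q dq, ‖fderiv ℝ I q dq - dq‖ ≤ 2 * (δ * B) * ‖dq‖ := by
      intro q dq
      have h1 := hFid (I q) (fderiv ℝ I q dq)
      rw [hId, norm_sub_rev] at h1
      have h2 : δ * B * ‖fderiv ℝ I q dq‖ ≤ δ * B * (2 * ‖dq‖) := by gcongr; exact hI2 q dq
      linarith
    have hHI : ∀ q, H (I q) = q.2 := fun q => congrArg Prod.snd (hFI q)
    have hI2R : ∀ x y, |y| ≤ R → |(I (x, y)).2| ≤ 2 * R := by
      intro x y hy
      have h1 := hHy (I (x, y)).1 (I (x, y)).2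
      rw [Prod.mk.eta, hHI] at h1
      simp only at h1
      have h2 := abs_sub_abs_le_abs_sub (I (x, y)).2 y
      rw [abs_sub_comm] at h2
      linarith
    have hIper : ∀ v ∈ Λ, ∀ x y, I (x + v, y) = I (x, y) + (v, 0) := by
      intro v hv x y
      rw [← hIF (I (x, y) + (v, 0))]
      congr 1
      have h1 := hGper v hv (I (x, y)).1 (I (x, y)).2
      have h2 := hHper v hv (I (x, y)).1 (I (x, y)).2
      have h3 := hFI (x, y)
      have h4 : I (x, y) + (v, 0) = ((I (x, y)).1 + v, (I (x, y)).2) := by ext <;> simp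
      rw [h4]
      simp only [hFdef, Prod.mk.eta, Prod.mk.injEq] at h1 h2 h3 ⊢
      rw [h1, h2, h3.1, h3.2]
      exact ⟨rfl, rfl⟩
    have hnorm : ∀ (dx : E) (dy : ℝ), ‖(dx, dy)‖ ≤ ‖dx‖ + |dy| := fun dx dy => by
      rw [Prod.norm_def]
      exact max_le_add_of_nonneg (norm_nonneg _) (abs_nonneg _)
    obtain ⟨w, hwC, hwper, hwR, hweq, hwsurj⟩ := hrep (δ := δ) (R := R) (G := fun q => (I q).1)
      (H := fun q => (I q).2) hδ hδc hR (contDiff_fst.comp hIC) (contDiff_snd.comp hIC)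
      (fun v hv x y => by simp only [hIper v hv, Prod.fst_add])
      (fun v hv x y => by simp only [hIper v hv, Prod.snd_add, add_zero])
      (by
        intro x y hy dx dy
        have h0 : fderiv ℝ (fun q => (I q).1) (x, y) = _ := (hIdiff (x, y)).hasFDerivAt.fst.fderiv
        rw [h0]
        set v := fderiv ℝ I (x, y) (dx, dy) with hv
        have h1 := hGd (I (x, y)).1 _ (hI2R x y hy) v.1 v.2
        rw [Prod.mk.eta, Prod.mk.eta, hv] at h1
        have h2 := congrArg Prod.fst (hId (x, y) (dx, dy))
        rw [hFd] at h2
        simp only at h2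
        rw [h2, ← hv] at h1
        have h3 := hIid (x, y) (dx, dy)
        rw [← hv] at h3
        have h4 := hnorm dx dy
        have h5 : ‖v.1‖ ≤ ‖dx‖ + 2 * (δ * B) * (‖dx‖ + |dy|) := by
          have m1 : ‖v.1 - dx‖ ≤ 2 * (δ * B) * (‖dx‖ + |dy|) :=
            (norm_fst_le (v - (dx, dy))).trans (h3.trans (by gcongr))
          have m2 := norm_sub_norm_le v.1 dx
          linarith
        have h6 : |v.2| ≤ |dy| + 2 * (δ * B) * (‖dx‖ + |dy|) := by
          have m1 : |v.2 - dy| ≤ 2 * (δ * B) * (‖dx‖ + |dy|) :=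
            (norm_snd_le (v - (dx, dy))).trans (h3.trans (by gcongr))
          have m2 := abs_sub_abs_le_abs_sub v.2 dy
          linarith
        have h7 : ‖v.1 - dx‖ ≤ δ * (κ₁ * ‖dx‖ + 2 * C * |dy|) := by
          rw [norm_sub_rev]
          refine h1.trans ?_
          gcongr δ * ?_
          have n1 := norm_nonneg dx
          have n2 := abs_nonneg dy
          calc κ * ‖v.1‖ + C * |v.2| ≤ κ * (‖dx‖ + 2 * (δ * B) * (‖dx‖ + |dy|))
                + C * (|dy| + 2 * (δ * B) * (‖dx‖ + |dy|)) := by gcongr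
            _ = κ * ‖dx‖ + C * |dy| + (κ + C) * (2 * (δ * B)) * (‖dx‖ + |dy|) := by ring
            _ ≤ κ * ‖dx‖ + C * |dy| + (C + C) * (2 * (δ * B)) * (‖dx‖ + |dy|) := by gcongr
            _ = κ * ‖dx‖ + C * |dy| + (4 * C * B * δ) * (‖dx‖ + |dy|) := by ring
            _ ≤ κ * ‖dx‖ + C * |dy| + κ * (‖dx‖ + |dy|) := by gcongr
            _ ≤ κ₁ * ‖dx‖ + 2 * C * |dy| := by nlinarith
        exact h7)
      (by
        intro x y hy dx dy
        have h0 : fderiv ℝ (fun q => (I q).2) (x, y) = _ := (hIdiff (x, y)).hasFDerivAt.snd.fderiv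
        rw [h0]
        set v := fderiv ℝ I (x, y) (dx, dy) with hv
        have h1 := hHd (I (x, y)).1 _ (hI2R x y hy) v.1 v.2
        rw [Prod.mk.eta, Prod.mk.eta, hv] at h1
        have h2 := congrArg Prod.snd (hId (x, y) (dx, dy))
        rw [hFd] at h2
        simp only at h2
        rw [h2, ← hv] at h1
        have h3 : ‖v‖ ≤ 2 * (‖dx‖ + |dy|) := (hI2 (x, y) (dx, dy)).trans (by
          gcongr; exact hnorm dx dy)
        have h4 := (norm_fst_le v).trans h3
        have h5 := (norm_snd_le v).trans h3
        rw [Real.norm_eq_abs] at h5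
        have n1 := norm_nonneg dx
        have n2 := abs_nonneg dy
        have h6 : |v.2 - (1 + c * δ) * dy| ≤ δ * (κ₁ * (‖dx‖ + |dy|)) := by
          have e1 : v.2 - (1 + c * δ) * dy
              = c ^ 2 * δ * δ * v.2 - (1 + c * δ) * (dy - (1 + -c * δ) * v.2) := by ring
          rw [e1]
          calc _ ≤ |c ^ 2 * δ * δ * v.2| + |(1 + c * δ) * (dy - (1 + -c * δ) * v.2)| := abs_sub _ _
            _ = c ^ 2 * δ * δ * |v.2| + (1 + c * δ) * |dy - (1 + -c * δ) * v.2| := by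
              rw [abs_mul (c ^ 2 * δ * δ), abs_mul (1 + c * δ),
                abs_of_pos (show 0 < c ^ 2 * δ * δ by positivity),
                abs_of_pos (show 0 < 1 + c * δ by positivity)]
            _ ≤ κ * δ * (2 * (‖dx‖ + |dy|)) + (1 + 1) * (δ * (κ * (2 * (‖dx‖ + |dy|)
                  + 2 * (‖dx‖ + |dy|)))) := by
              gcongr
              exact h1.trans (by gcongr)
            _ = δ * (10 * κ * (‖dx‖ + |dy|)) := by ring
            _ ≤ _ := by gcongr; linarith
        exact h6)
      (by
        intro x y hy
        have h0 := hI2R x y hy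
        have h1 := hHR (I (x, y)).1 _ h0
        rw [Prod.mk.eta, hHI] at h1
        simp only at h1 ⊢
        have e1 : (I (x, y)).2 - (1 + c * δ) * y
            = c ^ 2 * δ * δ * (I (x, y)).2 - (1 + c * δ) * (y - (1 + -c * δ) * (I (x, y)).2) := by
          ring
        rw [e1]
        calc _ ≤ |c ^ 2 * δ * δ * (I (x, y)).2|
              + |(1 + c * δ) * (y - (1 + -c * δ) * (I (x, y)).2)| := abs_sub _ _
          _ = c ^ 2 * δ * δ * |(I (x, y)).2|
              + (1 + c * δ) * |y - (1 + -c * δ) * (I (x, y)).2| := by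
            rw [abs_mul (c ^ 2 * δ * δ), abs_mul (1 + c * δ),
                abs_of_pos (show 0 < c ^ 2 * δ * δ by positivity),
              abs_of_pos (show 0 < 1 + c * δ by positivity)]
          _ ≤ κ * δ * (2 * R) + (1 + 1) * (δ * (κ * R)) := by gcongr
          _ = δ * (4 * κ * R) := by ring
          _ ≤ _ := by gcongr)
    refine ⟨w, hwC, hwper, hwR, fun ξ => ?_⟩
    obtain ⟨x, hx⟩ := hwsurj ξ
    have h1 := hweq x
    rw [hx] at h1
    have h2 : I (x, w x) = (ξ, w ξ) := Prod.ext hx h1.symm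
    have h3 := hFI (x, w x)
    rw [h2] at h3
    simp only [hFdef, Prod.mk.injEq] at h3
    rw [h3.1, h3.2]
  · obtain ⟨κ₁, hκ₁, hrep⟩ := exists_repelling_graph hΛ hr hpos hC
    refine ⟨min κ₁ lam, lt_min hκ₁ hpos, 1 / lam, by positivity, ?_⟩
    intro δ R G H hδ hδδ₀ hR hGC hHC hGper hHper _ _ _ hGd hHd hHR
    have hRR : ∀ {y : ℝ}, |y| ≤ R → |y| ≤ 2 * R := fun h => by linarith
    obtain ⟨w, h1, h2, h3, h4, -⟩ := hrep (δ := δ) (R := R) (G := G) (H := H) hδ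
      (by rwa [le_div_iff₀' hpos] at hδδ₀) hR hGC hHC hGper hHper
      (fun x y hy dx dy => (hGd x y (hRR hy) dx dy).trans (by gcongr; exact min_le_left _ _))
      (fun x y hy dx dy => (hHd x y (hRR hy) dx dy).trans (by gcongr; exact min_le_left _ _))
      (fun x y hy => (hHR x y (hRR hy)).trans (by gcongr; exact min_le_right _ _))
    exact ⟨w, h1, h2, h3, h4⟩

end InvariantGraph

/-! ### The normal form at a fixed value of the parameter -/

section NormalForm

variable {E : Type} [NormedAddCommGroup E] [NormedSpace ℝ E]

/-- Invariant graph of the resonant normal form at a fixed value of the parameter. Here `δ` stands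
for `ε ^ n`, `t` for `ε ^ m`, and `b, h, ρ₁, ρ₂` for the averaged terms and the remainders at this
value of `ε`. -/
theorem exists_normalForm_graph [FiniteDimensional ℝ E] {Λ K : Set E} (hΛ : CompactQuotient Λ K)
    {r : ℕ} (hr : 1 ≤ r) {lam C : ℝ} (hlam : lam ≠ 0) (hC : 1 ≤ C) :
    ∃ κ : ℝ, 0 < κ ∧ ∃ δ₀ : ℝ, 0 < δ₀ ∧ ∀ {δ ε t R : ℝ} {b : ℝ → E} {h : ℝ → ℝ}
      {ρ₁ : E × ℝ → E} {ρ₂ : E × ℝ → ℝ} {a : E} {Δ : ℝ},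
      0 < δ → δ ≤ δ₀ → 0 ≤ t → t ≤ ε → ε ≤ 1 → 0 ≤ R → R ≤ 1 →
      4 * C * ε ≤ κ * R → 3 * C * δ ≤ R →
      ContDiff ℝ r b → ContDiff ℝ r h → ContDiff ℝ r ρ₁ → ContDiff ℝ r ρ₂ →
      (∀ v ∈ Λ, ∀ x y, ρ₁ (x + v, y) = ρ₁ (x, y)) →
      (∀ v ∈ Λ, ∀ x y, ρ₂ (x + v, y) = ρ₂ (x, y)) →
      (∀ y, ‖fderiv ℝ b y‖ ≤ C) → (∀ y, ‖h y‖ ≤ C) → (∀ y, ‖fderiv ℝ h y‖ ≤ C) →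
      (∀ q, ‖fderiv ℝ ρ₁ q‖ ≤ C) → (∀ q, ‖ρ₂ q‖ ≤ C) → (∀ q, ‖fderiv ℝ ρ₂ q‖ ≤ C) →
      (∀ y, |y| ≤ 2 * R → ∀ dy, |fderiv ℝ h y dy - lam * dy| ≤ κ * |dy|) →
      (∀ y, |y| ≤ 2 * R → |h y - lam * y| ≤ κ * |y|) →
      |Δ| ≤ δ * ε →
      ∃ w : E → ℝ, ContDiff ℝ r w ∧ (∀ v ∈ Λ, ∀ x, w (x + v) = w x) ∧ (∀ x, |w x| ≤ R) ∧
        ∀ x, w (x + δ • b (w x) + (δ * t) • ρ₁ (x, w x) + a)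
          = w x + δ * h (w x) + δ * t * ρ₂ (x, w x) + Δ := by
  have hC0 : 0 < C := by linarith
  obtain ⟨κ, hκ, δ₀, hδ₀, hgraph⟩ := exists_invariant_graph hΛ hr hlam
    (show 0 < 2 * C by positivity) (show 0 < 3 * C by positivity)
  refine ⟨κ / 4, by positivity, δ₀, hδ₀, ?_⟩
  intro δ ε t R b h ρ₁ ρ₂ a Δ hδ hδδ₀ ht htε hε1 hR hR1 hεR hδR hbC hhC hρ₁C hρ₂C hper₁ hper₂
    hb hh hhd hρ₁ hρ₂ hρ₂d hhlam hhlam0 hΔ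
  have hr0 : (r : WithTop ℕ∞) ≠ 0 := by exact_mod_cast (by omega : r ≠ 0)
  have hbd : Differentiable ℝ b := hbC.differentiable hr0
  have hhdiff : Differentiable ℝ h := hhC.differentiable hr0
  have hρ₁diff : Differentiable ℝ ρ₁ := hρ₁C.differentiable hr0
  have hρ₂diff : Differentiable ℝ ρ₂ := hρ₂C.differentiable hr0
  have hε0 : 0 ≤ ε := ht.trans htε
  have hCt : C * t ≤ κ / 4 := by
    have h1 : C * t ≤ C * ε := by gcongr
    have h2 : κ / 4 * R ≤ κ / 4 * 1 := by gcongr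
    nlinarith
  have ht1 : t ≤ 1 := htε.trans hε1
  set G : E × ℝ → E := fun q => q.1 + δ • b q.2 + (δ * t) • ρ₁ q + a with hG
  set H : E × ℝ → ℝ := fun q => q.2 + δ * h q.2 + δ * t * ρ₂ q + Δ with hH
  have hGd : ∀ q dq, fderiv ℝ G q dq - dq.1
      = δ • (fderiv ℝ b q.2 dq.2 + t • fderiv ℝ ρ₁ q dq) := by
    intro q dq
    have h1 : HasFDerivAt (fun q : E × ℝ => b q.2) _ q :=
      (hbd q.2).hasFDerivAt.comp q hasFDerivAt_snd
    have h2 : fderiv ℝ G q = _ := (((hasFDerivAt_fst.add (h1.const_smul δ)).add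
      ((hρ₁diff q).hasFDerivAt.const_smul (δ * t))).add_const a).fderiv
    rw [h2]
    simp [mul_smul, add_assoc]
  have hHd : ∀ q dq, fderiv ℝ H q dq - dq.2
      = δ * (fderiv ℝ h q.2 dq.2 + t * fderiv ℝ ρ₂ q dq) := by
    intro q dq
    have h1 : HasFDerivAt (fun q : E × ℝ => h q.2) _ q :=
      (hhdiff q.2).hasFDerivAt.comp q hasFDerivAt_snd
    have h2 : fderiv ℝ H q = _ := (((hasFDerivAt_snd.add (h1.const_mul δ)).add
      ((hρ₂diff q).hasFDerivAt.const_mul (δ * t))).add_const Δ).fderiv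
    rw [h2]
    simp
    ring
  have hnorm : ∀ (dx : E) (dy : ℝ), ‖(dx, dy)‖ ≤ ‖dx‖ + |dy| := fun dx dy => by
    rw [Prod.norm_def]
    exact max_le_add_of_nonneg (norm_nonneg _) (abs_nonneg _)
  have hGn : ∀ q dq, ‖fderiv ℝ G q dq - dq.1‖ ≤ δ * (C * |dq.2| + t * (C * ‖dq‖)) := by
    intro q dq
    rw [hGd, norm_smul, Real.norm_eq_abs, abs_of_pos hδ]
    gcongr
    refine (norm_add_le _ _).trans (add_le_add ((fderiv ℝ b q.2).le_of_opNorm_le (hb _) _) ?_)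
    rw [norm_smul, Real.norm_eq_abs, abs_of_nonneg ht]
    gcongr
    exact (fderiv ℝ ρ₁ q).le_of_opNorm_le (hρ₁ _) _
  have hρn : ∀ q dq, |t * fderiv ℝ ρ₂ q dq| ≤ t * (C * ‖dq‖) := by
    intro q dq
    rw [abs_mul, abs_of_nonneg ht]
    gcongr
    exact (fderiv ℝ ρ₂ q).le_of_opNorm_le (hρ₂d _) _
  have hρb : ∀ q, |t * ρ₂ q| ≤ ε * C := by
    intro q
    rw [abs_mul, abs_of_nonneg ht]
    gcongr
    exact hρ₂ q
  have hH0 : ∀ q, H q = q.2 + δ * (h q.2 + t * ρ₂ q) + Δ := fun q => by simp only [hH]; ring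
  obtain ⟨w, h1, h2, h3, h4⟩ := hgraph (δ := δ) (R := R) (G := G) (H := H) hδ hδδ₀ hR
    (((contDiff_fst.add ((hbC.comp contDiff_snd).const_smul δ)).add
      (hρ₁C.const_smul (δ * t))).add contDiff_const)
    (((contDiff_snd.add (contDiff_const.mul (hhC.comp contDiff_snd))).add
      (contDiff_const.mul hρ₂C)).add contDiff_const)
    (fun v hv x y => by simp only [hG, hper₁ v hv]; abel)
    (fun v hv x y => by simp only [hH, hper₂ v hv])
    (fun q dq => by
      refine (hGn q dq).trans ?_
      have h1 : |dq.2| ≤ ‖dq‖ := norm_snd_le dq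
      have h2 : t * (C * ‖dq‖) ≤ 1 * (C * ‖dq‖) := by gcongr
      have h3 : C * |dq.2| ≤ C * ‖dq‖ := by gcongr
      have h4 : 0 ≤ C * ‖dq‖ := by positivity
      rw [mul_assoc]
      gcongr
      linarith)
    (fun q dq => by
      rw [hHd, abs_mul, abs_of_pos hδ, mul_assoc]
      gcongr
      have h0 : |fderiv ℝ h q.2 dq.2| ≤ C * |dq.2| := (fderiv ℝ h q.2).le_of_opNorm_le (hhd _) _
      have h1 : |dq.2| ≤ ‖dq‖ := norm_snd_le dq
      have h2 : t * (C * ‖dq‖) ≤ 1 * (C * ‖dq‖) := by gcongr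
      have h3 : C * |dq.2| ≤ C * ‖dq‖ := by gcongr
      have h4 : 0 ≤ C * ‖dq‖ := by positivity
      linarith [abs_add_le (fderiv ℝ h q.2 dq.2) (t * fderiv ℝ ρ₂ q dq), hρn q dq])
    (fun x y => by
      have e1 : H (x, y) - y = δ * (h y + t * ρ₂ (x, y)) + Δ := by rw [hH0]; ring
      rw [e1]
      refine (abs_add_le _ _).trans ?_
      rw [abs_mul, abs_of_pos hδ]
      have h0 : |h y| ≤ C := hh y
      have h1 : |h y + t * ρ₂ (x, y)| ≤ C + 1 * C :=
        (abs_add_le _ _).trans (add_le_add h0 ((hρb _).trans (by gcongr)))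
      have h2 : |Δ| ≤ δ * C := hΔ.trans (by gcongr; linarith)
      have h3 : δ * |h y + t * ρ₂ (x, y)| ≤ δ * (C + 1 * C) := by gcongr
      linarith)
    (fun x y hy dx dy => by
      refine (hGn (x, y) (dx, dy)).trans ?_
      refine mul_le_mul_of_nonneg_left ?_ hδ.le
      have h1 : t * (C * ‖(dx, dy)‖) ≤ t * (C * (‖dx‖ + |dy|)) := by gcongr; exact hnorm _ _
      have h2 : C * t * ‖dx‖ ≤ κ / 4 * ‖dx‖ := by gcongr
      have h3 : C * t * |dy| ≤ C * 1 * |dy| := by gcongr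
      have h4 : 0 ≤ κ * ‖dx‖ := by positivity
      linarith)
    (fun x y hy dx dy => by
      have e1 : fderiv ℝ H (x, y) (dx, dy) - (1 + lam * δ) * dy
          = δ * ((fderiv ℝ h y dy - lam * dy) + t * fderiv ℝ ρ₂ (x, y) (dx, dy)) := by
        have := hHd (x, y) (dx, dy)
        simp only at this
        linear_combination this
      rw [e1, abs_mul, abs_of_pos hδ]
      gcongr
      refine (abs_add_le _ _).trans ?_
      have h0 := hhlam y hy dy
      have h1 := hρn (x, y) (dx, dy)
      have h2 : t * (C * ‖(dx, dy)‖) ≤ t * (C * (‖dx‖ + |dy|)) := by gcongr; exact hnorm _ _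
      have h3 : C * t * (‖dx‖ + |dy|) ≤ κ / 4 * (‖dx‖ + |dy|) := by gcongr
      have h4 : 0 ≤ κ * ‖dx‖ := by positivity
      have h5 : 0 ≤ κ * |dy| := by positivity
      linarith)
    (fun x y hy => by
      have e1 : H (x, y) - (1 + lam * δ) * y = δ * ((h y - lam * y) + t * ρ₂ (x, y)) + Δ := by
        rw [hH0]; ring
      rw [e1]
      refine (abs_add_le _ _).trans ?_
      rw [abs_mul, abs_of_pos hδ]
      have h0 := hhlam0 y hy
      have h1 : κ / 4 * |y| ≤ κ / 4 * (2 * R) := by gcongr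
      have h2 : |(h y - lam * y) + t * ρ₂ (x, y)| ≤ κ / 4 * (2 * R) + ε * C :=
        (abs_add_le _ _).trans (add_le_add (h0.trans h1) (hρb _))
      have h3 : δ * ε ≤ δ * (C * ε) := by
        gcongr; exact le_mul_of_one_le_left hε0 hC
      have h4 : δ * |(h y - lam * y) + t * ρ₂ (x, y)| ≤ δ * (κ / 4 * (2 * R) + ε * C) := by gcongr
      have h5 : δ * (4 * C * ε) ≤ δ * (κ / 4 * R) := by gcongr
      have h6 : 0 ≤ δ * (κ * R) := by positivity
      linarith)
  exact ⟨w, h1, h2, h3, h4⟩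

end NormalForm

/-! ### Uniform bounds and linearisation of the averaged drift -/

section Slices

variable {X V : Type} [NormedAddCommGroup X] [NormedSpace ℝ X]
  [NormedAddCommGroup V] [NormedSpace ℝ V]

lemma contDiff_slice {n : WithTop ℕ∞} {f : X × ℝ → V} {εbar : ℝ}
    (hf : ContDiffOn ℝ n f (univ ×ˢ Ico 0 εbar)) {ε : ℝ} (hε : ε ∈ Ico 0 εbar) :
    ContDiff ℝ n (fun x => f (x, ε)) := by
  rw [← contDiffOn_univ]
  exact hf.comp (contDiff_id.prodMk contDiff_const).contDiffOn fun x _ => ⟨mem_univ _, hε⟩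

/-- The derivative with respect to the first variable is jointly continuous, up to the boundary of
the parameter interval. -/
lemma continuousOn_fderiv_slice {n : WithTop ℕ∞} (hn : 1 ≤ n) {f : X × ℝ → V} {εbar : ℝ}
    (hf : ContDiffOn ℝ n f (univ ×ˢ Ico 0 εbar)) :
    ContinuousOn (fun q : X × ℝ => fderiv ℝ (fun x => f (x, q.2)) q.1) (univ ×ˢ Ico 0 εbar) := by
  have hu : UniqueDiffOn ℝ ((univ : Set X) ×ˢ Ico (0 : ℝ) εbar) :=
    uniqueDiffOn_univ.prod (uniqueDiffOn_Ico 0 εbar)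
  have hc := hf.continuousOn_fderivWithin hu hn
  have hc2 : ContinuousOn (fun q => (fderivWithin ℝ f (univ ×ˢ Ico 0 εbar) q) ∘L
      ContinuousLinearMap.inl ℝ X ℝ) (univ ×ˢ Ico 0 εbar) :=
    hc.clm_comp continuousOn_const
  refine hc2.congr ?_
  rintro ⟨x, ε⟩ ⟨-, hε⟩
  have h1 := ((hf.differentiableOn (by
    rintro rfl
    simp at hn)) (x, ε) ⟨mem_univ _, hε⟩).hasFDerivWithinAt
  have h2 : HasFDerivAt (fun x : X => (x, ε)) (ContinuousLinearMap.inl ℝ X ℝ) x :=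
    hasFDerivAt_prodMk_left x ε
  have h3 : HasFDerivAt (fun x : X => f (x, ε)) _ x :=
    h1.comp_hasFDerivAt x h2 (Eventually.of_forall fun x => mk_mem_prod (mem_univ _) hε)
  exact h3.fderiv

lemma exists_bound_slice {n : WithTop ℕ∞} (hn : 1 ≤ n) {Λ K : Set X} (hΛ : CompactQuotient Λ K)
    {f : X × ℝ → V} {εbar : ℝ} (hεbar : 0 < εbar) (hf : ContDiffOn ℝ n f (univ ×ˢ Ico 0 εbar))
    (hper : ∀ v ∈ Λ, ∀ x ε, f (x + v, ε) = f (x, ε)) :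
    ∃ C, ∀ x, ∀ ε ∈ Icc 0 (εbar / 2),
      ‖f (x, ε)‖ ≤ C ∧ ‖fderiv ℝ (fun x => f (x, ε)) x‖ ≤ C := by
  have hcomp : IsCompact (K ×ˢ Icc 0 (εbar / 2)) := hΛ.compact.prod isCompact_Icc
  have hsub : K ×ˢ Icc 0 (εbar / 2) ⊆ univ ×ˢ Ico 0 εbar :=
    prod_mono (subset_univ _) fun ε hε => ⟨hε.1, hε.2.trans_lt (half_lt_self hεbar)⟩
  obtain ⟨C₁, hC₁⟩ := hcomp.exists_bound_of_continuousOn (hf.continuousOn.mono hsub)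
  obtain ⟨C₂, hC₂⟩ := hcomp.exists_bound_of_continuousOn
    ((continuousOn_fderiv_slice hn hf).mono hsub)
  refine ⟨max C₁ C₂, fun x ε hε => ?_⟩
  obtain ⟨v, hv, hxv⟩ := hΛ.cover x
  have h2 : fderiv ℝ (fun x => f (x, ε)) x = fderiv ℝ (fun x => f (x, ε)) (x + v) := by
    rw [← fderiv_comp_add_right (𝕜 := ℝ) (f := fun x => f (x, ε)) (x := x) v]
    exact congrArg (fun g => fderiv ℝ g x) (funext fun x => (hper v hv x ε).symm)
  have h3 := hC₁ (x + v, ε) ⟨hxv, hε⟩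
  have h4 := hC₂ (x + v, ε) ⟨hxv, hε⟩
  rw [hper v hv] at h3
  refine ⟨h3.trans (le_max_left _ _), ?_⟩
  rw [h2]
  exact h4.trans (le_max_right _ _)

end Slices

section Lattice

lemma compactQuotient_int :
    CompactQuotient (range (fun j : ℤ => (j : ℝ))) (Icc (0 : ℝ) 1) where
  compact := isCompact_Icc
  cover x := by
    refine ⟨_, ⟨-⌊x⌋, rfl⟩, ?_⟩
    have h1 := Int.floor_le x
    have h2 := Int.lt_floor_add_one x
    push_cast
    constructor <;> linarith

lemma compactQuotient_pi (ι : Type) [Fintype ι] :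
    CompactQuotient (range (fun (k : ι → ℤ) (i : ι) => (k i : ℝ))) (Icc (0 : ι → ℝ) 1) where
  compact := isCompact_Icc
  cover x := by
    refine ⟨_, ⟨fun i => -⌊x i⌋, rfl⟩, fun i => ?_, fun i => ?_⟩
    · have h1 := Int.floor_le (x i)
      simp only [Pi.add_apply, Pi.zero_apply]
      push_cast
      linarith
    · have h2 := Int.lt_floor_add_one (x i)
      simp only [Pi.add_apply, Pi.one_apply]
      push_cast
      linarith

lemma CompactQuotient.prod {X Y : Type} [NormedAddCommGroup X] [NormedAddCommGroup Y]
    {Λ K : Set X} {Λ' K' : Set Y} (h : CompactQuotient Λ K) (h' : CompactQuotient Λ' K') :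
    CompactQuotient (Λ ×ˢ Λ') (K ×ˢ K') where
  compact := h.compact.prod h'.compact
  cover := by
    rintro ⟨x, y⟩
    obtain ⟨v, hv, hx⟩ := h.cover x
    obtain ⟨v', hv', hy⟩ := h'.cover y
    exact ⟨(v, v'), ⟨hv, hv'⟩, hx, hy⟩

end Lattice

section Averaged

/-- Near `(0, 0)` the averaged normal drift is, with its first derivative, close to its
linearisation `y ↦ lam y`. -/
lemma exists_linearization {n : WithTop ℕ∞} (hn : 1 ≤ n) {η : ℝ × ℝ → ℝ} {εbar : ℝ}
    (hεbar : 0 < εbar) (hη : ContDiffOn ℝ n η (univ ×ˢ Ico 0 εbar))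
    (hη0 : ∀ ε ∈ Ico (0 : ℝ) εbar, η (0, ε) = 0) {κ : ℝ} (hκ : 0 < κ) :
    ∃ ρ > 0, ∀ ε ∈ Ico (0 : ℝ) εbar, ε < ρ → ∀ y : ℝ, |y| < ρ →
      (∀ dy, |fderiv ℝ (fun x => η (x, ε)) y dy - deriv (fun x => η (x, 0)) 0 * dy| ≤ κ * |dy|) ∧
      |η (y, ε) - deriv (fun x => η (x, 0)) 0 * y| ≤ κ * |y| := by
  set lam := deriv (fun x => η (x, 0)) 0 with hlam
  have hc := continuousOn_fderiv_slice hn hη ((0 : ℝ), (0 : ℝ)) ⟨mem_univ _, le_rfl, hεbar⟩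
  obtain ⟨ρ, hρ, h⟩ := Metric.continuousWithinAt_iff.mp hc κ hκ
  have hA : ∀ ε ∈ Ico (0 : ℝ) εbar, ε < ρ → ∀ y : ℝ, |y| < ρ → ∀ dy,
      |fderiv ℝ (fun x => η (x, ε)) y dy - lam * dy| ≤ κ * |dy| := by
    intro ε hε hερ y hy dy
    have h1 := (h (x := (y, ε)) ⟨mem_univ _, hε⟩ (by
      rw [Prod.dist_eq, Real.dist_eq, Real.dist_eq]
      simpa [abs_of_nonneg hε.1] using ⟨hy, hερ⟩)).le
    rw [dist_eq_norm] at h1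
    have h2 := (_ : ℝ →L[ℝ] ℝ).le_of_opNorm_le h1 dy
    have h3 : fderiv ℝ (fun x => η (x, 0)) 0 dy = lam * dy := by
      rw [fderiv_eq_smul_deriv, smul_eq_mul, mul_comm]
    rw [sub_apply, h3] at h2
    exact h2
  refine ⟨ρ, hρ, fun ε hε hερ y hy => ⟨hA ε hε hερ y hy, ?_⟩⟩
  have hd : Differentiable ℝ (fun x => η (x, ε)) :=
    (contDiff_slice hη hε).differentiable (by rintro rfl; simp at hn)
  have hmv := norm_sub_le_of_directional_bound (f := fun x => η (x, ε) - lam * x)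
    (S := Metric.ball 0 ρ) (hd.sub (differentiable_id.const_mul lam)) (convex_ball _ _)
    (x := 0) (y := y) (C := κ * |y|) (by simpa using hρ) (by simpa using hy) (fun z hz => by
      have h1 : fderiv ℝ (fun x => η (x, ε) - lam * x) z = _ :=
        ((hd z).hasFDerivAt.sub ((hasFDerivAt_id z).const_mul lam)).fderiv
      rw [h1, sub_zero]
      simpa using hA ε hε hερ z (by simpa using hz) y)
  simpa [hη0 ε hε] using hmv

end Averaged

/-! ### Smallness of the parameter and conclusion -/

section Assembly

lemma periodic_int {V : Type} {f : ℝ × ℝ → V} (h : ∀ x ε : ℝ, f (x + 1, ε) = f (x, ε)) :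
    ∀ v ∈ range (fun j : ℤ => (j : ℝ)), ∀ x ε, f (x + v, ε) = f (x, ε) := by
  rintro _ ⟨j, rfl⟩ x ε
  have hp : Function.Periodic (fun x => f (x, ε)) 1 := fun x => h x ε
  simpa using hp.int_mul j x

/-- All the smallness conditions on `ε` hold on some interval `(0, ε₀)`. The last two, in which
`ε` competes with `ε ^ α₀`, are where `α₀ < 1` enters. -/
lemma exists_small {εbar α₀ ρ δ₀ κ C : ℝ} (hεbar : 0 < εbar) (hα₀ : 0 < α₀) (hα₀1 : α₀ < 1)
    (hρ : 0 < ρ) (hδ₀ : 0 < δ₀) (hκ : 0 < κ) :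
    ∃ ε₀ : ℝ, 0 < ε₀ ∧ ε₀ ≤ εbar ∧ ∀ ε : ℝ, 0 < ε → ε < ε₀ →
      ε ≤ εbar / 2 ∧ ε < ρ ∧ 2 * ε ^ α₀ < ρ ∧ ε ≤ δ₀ ∧ ε ^ α₀ ≤ 1 ∧
      4 * C * ε ≤ κ * ε ^ α₀ ∧ 3 * C * ε ≤ ε ^ α₀ := by
  have hid : Tendsto (fun ε : ℝ => ε) (𝓝 0) (𝓝 0) := tendsto_id
  have hpow : ∀ a : ℝ, 0 < a → Tendsto (fun ε : ℝ => ε ^ a) (𝓝 0) (𝓝 0) := fun a ha => by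
    have := (Real.continuousAt_rpow_const 0 a (Or.inr ha.le)).tendsto
    rwa [Real.zero_rpow ha.ne'] at this
  have hA := hpow α₀ hα₀
  have hB := hpow (1 - α₀) (by linarith)
  have hA2 : Tendsto (fun ε : ℝ => 2 * ε ^ α₀) (𝓝 0) (𝓝 0) := by simpa using hA.const_mul 2
  have hB4 : Tendsto (fun ε : ℝ => 4 * C * ε ^ (1 - α₀)) (𝓝 0) (𝓝 0) := by
    simpa using hB.const_mul (4 * C)
  have hB3 : Tendsto (fun ε : ℝ => 3 * C * ε ^ (1 - α₀)) (𝓝 0) (𝓝 0) := by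
    simpa using hB.const_mul (3 * C)
  have hev := (hid.eventually_lt_const hρ).and <| (hA2.eventually_lt_const hρ).and <|
    (hid.eventually_lt_const hδ₀).and <| (hA.eventually_lt_const one_pos).and <|
    (hB4.eventually_lt_const hκ).and (hB3.eventually_lt_const one_pos)
  obtain ⟨s, hs, h⟩ := Metric.eventually_nhds_iff.mp hev
  refine ⟨min s (εbar / 2), lt_min hs (half_pos hεbar),
    (min_le_right _ _).trans (half_le_self hεbar.le), fun ε hε hεs => ?_⟩
  obtain ⟨h1, h2, h3, h4, h5, h6⟩ := h (y := ε) (by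
    rw [Real.dist_eq, sub_zero, abs_of_pos hε]
    exact hεs.trans_le (min_le_left _ _))
  have hmul : ε = ε ^ (1 - α₀) * ε ^ α₀ := by
    rw [← Real.rpow_add hε]; simp
  have hpos : 0 < ε ^ α₀ := Real.rpow_pos_of_pos hε _
  refine ⟨(hεs.trans_le (min_le_right _ _)).le, h1, h2, h3.le, h4.le, ?_, ?_⟩
  · calc 4 * C * ε = 4 * C * ε ^ (1 - α₀) * ε ^ α₀ := by linear_combination 4 * C * hmul
      _ ≤ κ * ε ^ α₀ := by gcongr
  · calc 3 * C * ε = 3 * C * ε ^ (1 - α₀) * ε ^ α₀ := by linear_combination 3 * C * hmul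
      _ ≤ 1 * ε ^ α₀ := by gcongr
      _ = ε ^ α₀ := one_mul _

/-- The remainders, regarded as functions on `(ℝᵏ × ℝ) × ℝ`, are of class `C^p`. -/
lemma contDiffOn_reassoc {X V : Type} [NormedAddCommGroup X] [NormedSpace ℝ X]
    [NormedAddCommGroup V] [NormedSpace ℝ V] {n : WithTop ℕ∞} {f : X × ℝ × ℝ → V} {I : Set ℝ}
    (hf : ContDiffOn ℝ n f (univ ×ˢ univ ×ˢ I)) :
    ContDiffOn ℝ n (fun q : (X × ℝ) × ℝ => f (q.1.1, q.1.2, q.2)) (univ ×ˢ I) := by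
  have hg : ContDiff ℝ n (fun q : (X × ℝ) × ℝ => (q.1.1, q.1.2, q.2)) := by fun_prop
  exact hf.comp hg.contDiffOn fun q hq => ⟨mem_univ _, mem_univ _, hq.2⟩

end Assembly

end Helpers

open scoped BigOperators

/-- persistence of the invariant circle generated by a resonance:
for the resonant normal form
`F(x₁,x₂) = (x₁ + ω + εⁿβ(x₂,ε) + ε^{n+m}r₁(x₁,x₂,ε) + Δ₁,
             x₂ + εⁿη(x₂,ε) + ε^{n+m}r₂(x₁,x₂,ε) + Δ₂)`
with `η(0,ε) = 0` and `∂ₓη(0,0) ≠ 0`, for all sufficiently small `ε` and all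
detunings `|Δ| ≤ ε^{n+1}` there is a `C^{L−1}` periodic function `w`, of size at most
`ε^{α₀}`, whose graph is invariant under `F` modulo `ℤ^{d−1} × ℤ`. -/
theorem persistence_of_resonant_invariant_torus
    (d n m L p : ℕ) (hd : 2 ≤ d) (hn : 1 ≤ n) (hm : 1 ≤ m) (hL : 2 ≤ L)
    (hp : L + 2 < p)
    (ω : Fin (d - 1) → ℝ) (εbar α₀ : ℝ)
    (hεbar : 0 < εbar) (hεbar1 : εbar ≤ 1) (hα₀ : 0 < α₀) (hα₀1 : α₀ < 1)
    (β : ℝ × ℝ → (Fin (d - 1) → ℝ))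
    (hβ : ContDiffOn ℝ (p : ℕ∞) β (Set.univ ×ˢ Set.Ico 0 εbar))
    (hβper : ∀ x ε : ℝ, β (x + 1, ε) = β (x, ε))
    (η : ℝ × ℝ → ℝ)
    (hη : ContDiffOn ℝ (p : ℕ∞) η (Set.univ ×ˢ Set.Ico 0 εbar))
    (hηper : ∀ x ε : ℝ, η (x + 1, ε) = η (x, ε))
    (hη0 : ∀ ε ∈ Set.Ico (0 : ℝ) εbar, η (0, ε) = 0)
    (hηnd : deriv (fun x => η (x, 0)) 0 ≠ 0)
    (r₁ : (Fin (d - 1) → ℝ) × ℝ × ℝ → (Fin (d - 1) → ℝ))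
    (hr₁ : ContDiffOn ℝ (p : ℕ∞) r₁ (Set.univ ×ˢ Set.univ ×ˢ Set.Ico 0 εbar))
    (hr₁per : ∀ (x₁ : Fin (d - 1) → ℝ) (x₂ ε : ℝ)
        (k : Fin (d - 1) → ℤ) (j : ℤ),
      r₁ (x₁ + fun i => (k i : ℝ), x₂ + (j : ℝ), ε) = r₁ (x₁, x₂, ε))
    (r₂ : (Fin (d - 1) → ℝ) × ℝ × ℝ → ℝ)
    (hr₂ : ContDiffOn ℝ (p : ℕ∞) r₂ (Set.univ ×ˢ Set.univ ×ˢ Set.Ico 0 εbar))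
    (hr₂per : ∀ (x₁ : Fin (d - 1) → ℝ) (x₂ ε : ℝ)
        (k : Fin (d - 1) → ℤ) (j : ℤ),
      r₂ (x₁ + fun i => (k i : ℝ), x₂ + (j : ℝ), ε) = r₂ (x₁, x₂, ε)) :
    ∃ ε₀ : ℝ, 0 < ε₀ ∧ ε₀ ≤ εbar ∧
      ∀ ε : ℝ, 0 < ε → ε < ε₀ →
      ∀ (Δ₁ : Fin (d - 1) → ℝ) (Δ₂ : ℝ), ‖(Δ₁, Δ₂)‖ ≤ ε ^ (n + 1) →
      ∃ w : (Fin (d - 1) → ℝ) → ℝ,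
        ContDiff ℝ ((L - 1 : ℕ) : ℕ∞) w ∧
        (∀ (x₁ : Fin (d - 1) → ℝ) (k : Fin (d - 1) → ℤ),
          w (x₁ + fun i => (k i : ℝ)) = w x₁) ∧
        (∀ x₁, |w x₁| ≤ ε ^ α₀) ∧
        (∀ x₁ : Fin (d - 1) → ℝ, ∃ kz : ℤ,
          (w x₁ + ε ^ n * η (w x₁, ε) + ε ^ (n + m) * r₂ (x₁, w x₁, ε) + Δ₂) -
              w (x₁ + ω + ε ^ n • β (w x₁, ε) + ε ^ (n + m) • r₁ (x₁, w x₁, ε) + Δ₁) =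
            (kz : ℝ)) := by
  have hp1 : (1 : WithTop ℕ∞) ≤ ((p : ℕ∞) : WithTop ℕ∞) := by
    exact_mod_cast (by omega : 1 ≤ p)
  have hLp : ((L - 1 : ℕ) : WithTop ℕ∞) ≤ ((p : ℕ∞) : WithTop ℕ∞) := by
    exact WithTop.coe_le_coe.mpr (Nat.cast_le.mpr (by omega : L - 1 ≤ p))
  have hΛ := compactQuotient_pi (Fin (d - 1))
  have hΛ2 := hΛ.prod compactQuotient_int
  have hr₁' := contDiffOn_reassoc hr₁
  have hr₂' := contDiffOn_reassoc hr₂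
  obtain ⟨Cβ, hCβ⟩ := exists_bound_slice hp1 compactQuotient_int hεbar hβ (periodic_int hβper)
  obtain ⟨Cη, hCη⟩ := exists_bound_slice hp1 compactQuotient_int hεbar hη (periodic_int hηper)
  obtain ⟨C₁, hC₁⟩ := exists_bound_slice hp1 hΛ2 hεbar hr₁' (by
    rintro ⟨_, _⟩ ⟨⟨k, rfl⟩, ⟨j, rfl⟩⟩ ⟨x, y⟩ ε
    exact hr₁per x y ε k j)
  obtain ⟨C₂, hC₂⟩ := exists_bound_slice hp1 hΛ2 hεbar hr₂' (by
    rintro ⟨_, _⟩ ⟨⟨k, rfl⟩, ⟨j, rfl⟩⟩ ⟨x, y⟩ ε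
    exact hr₂per x y ε k j)
  obtain ⟨C, hC, hβC, hηC, h₁C, h₂C⟩ :
      ∃ C : ℝ, 1 ≤ C ∧ Cβ ≤ C ∧ Cη ≤ C ∧ C₁ ≤ C ∧ C₂ ≤ C :=
    ⟨max 1 (max (max Cβ Cη) (max C₁ C₂)), by simp, by simp, by simp, by simp, by simp⟩
  obtain ⟨κ, hκ, δ₀, hδ₀, hgraph⟩ :=
    exists_normalForm_graph hΛ (r := L - 1) (by omega) hηnd hC
  obtain ⟨ρ, hρ, hlin⟩ := exists_linearization hp1 hεbar hη hη0 hκ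
  obtain ⟨ε₀, hε₀, hε₀bar, hsmall⟩ :=
    exists_small (C := C) hεbar hα₀ hα₀1 hρ hδ₀ hκ
  refine ⟨ε₀, hε₀, hε₀bar, fun ε hε hεε₀ Δ₁ Δ₂ hΔ => ?_⟩
  obtain ⟨s1, s2, s3, s4, s5, s6, s7⟩ := hsmall ε hε hεε₀
  have hεmem : ε ∈ Set.Ico 0 εbar := ⟨hε.le, hεε₀.trans_le hε₀bar⟩
  have hεmem' : ε ∈ Set.Icc 0 (εbar / 2) := ⟨hε.le, s1⟩
  have hε1 : ε ≤ 1 := (hεmem.2.trans_le hεbar1).le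
  have hpn : ε ^ n ≤ ε := pow_le_of_le_one hε.le hε1 (by omega)
  have hpm : ε ^ m ≤ ε := pow_le_of_le_one hε.le hε1 (by omega)
  have hper : ∀ k : Fin (d - 1) → ℤ, ∀ x y,
      r₁ (x + fun i => (k i : ℝ), y, ε) = r₁ (x, y, ε) ∧
      r₂ (x + fun i => (k i : ℝ), y, ε) = r₂ (x, y, ε) := fun k x y =>
    ⟨by simpa using hr₁per x y ε k 0, by simpa using hr₂per x y ε k 0⟩
  obtain ⟨w, hwC, hwper, hwR, hw⟩ := hgraph (δ := ε ^ n) (ε := ε) (t := ε ^ m) (R := ε ^ α₀)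
    (b := fun y => β (y, ε)) (h := fun y => η (y, ε))
    (ρ₁ := fun q => r₁ (q.1, q.2, ε)) (ρ₂ := fun q => r₂ (q.1, q.2, ε)) (a := ω + Δ₁) (Δ := Δ₂)
    (by positivity) (hpn.trans s4) (by positivity) hpm hε1 (by positivity) s5 s6
    ((mul_le_mul_of_nonneg_left hpn (by positivity)).trans s7)
    ((contDiff_slice hβ hεmem).of_le hLp) ((contDiff_slice hη hεmem).of_le hLp)
    ((contDiff_slice hr₁' hεmem).of_le hLp) ((contDiff_slice hr₂' hεmem).of_le hLp)
    (by rintro _ ⟨k, rfl⟩ x y; exact (hper k x y).1)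
    (by rintro _ ⟨k, rfl⟩ x y; exact (hper k x y).2)
    (fun y => (hCβ y ε hεmem').2.trans hβC) (fun y => (hCη y ε hεmem').1.trans hηC)
    (fun y => (hCη y ε hεmem').2.trans hηC) (fun q => (hC₁ q ε hεmem').2.trans h₁C)
    (fun q => (hC₂ q ε hεmem').1.trans h₂C) (fun q => (hC₂ q ε hεmem').2.trans h₂C)
    (fun y hy => (hlin ε hεmem s2 y (hy.trans_lt s3)).1)
    (fun y hy => (hlin ε hεmem s2 y (hy.trans_lt s3)).2)
    (by rw [← pow_succ]; exact (norm_snd_le (Δ₁, Δ₂)).trans hΔ)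
  refine ⟨w, hwC, fun x k => hwper _ ⟨k, rfl⟩ x, hwR, fun x => ⟨0, ?_⟩⟩
  have hx := hw x
  have harg : x + ω + ε ^ n • β (w x, ε) + ε ^ (n + m) • r₁ (x, w x, ε) + Δ₁
      = x + ε ^ n • β (w x, ε) + (ε ^ n * ε ^ m) • r₁ (x, w x, ε) + (ω + Δ₁) := by
    rw [pow_add]; abel
  rw [harg, hx, pow_add]
  simp
end
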